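/- Let (X,d,m) be a compact normalized metric measure space which is a CD(K,∞) space for some K ∈ ℝ, and let μ ∈ D(Ent_m). Then there exists a unique gradient flow (in the Energy Dissipation Equality sense) of Ent_m in the metric space (P(X),W₂) starting from μ. -/

import Mathlib

open Filter Topology Set MeasureTheory
open scoped ENNReal NNReal

/-- `γ` is a coupling (admissible transport plan) between `μ` and `ν`. -/
def IsCoupling {X : Type*} [MeasurableSpace X]
    (μ ν : MeasureTheory.Measure X) (γ : MeasureTheory.Measure (X × X)) : Prop :=
  MeasureTheory.IsProbabilityMeasure γ ∧
    γ.map Prod.fst = μ ∧ γ.map Prod.snd = ν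

/-- The quadratic Wasserstein distance
`W₂(μ,ν) = ( inf { ∫ d²(x,y) dγ : γ coupling of (μ,ν) } )^{1/2}`. -/
noncomputable def W2 {X : Type*} [MetricSpace X] [MeasurableSpace X]
    (μ ν : MeasureTheory.Measure X) : ℝ :=
  Real.sqrt (sInf {c : ℝ | ∃ γ : MeasureTheory.Measure (X × X),
    IsCoupling μ ν γ ∧ c = ∫ p, dist p.1 p.2 ^ 2 ∂γ})

/-- The metric speed `|μ̇_t|` of a curve of measures w.r.t. `W₂`, written as a `limsup`
(for an `AC²` curve the limit exists for a.e. `t` and coincides with it). -/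
noncomputable def W2speed {X : Type*} [MetricSpace X] [MeasurableSpace X]
    (μ : ℝ → MeasureTheory.Measure X) (t : ℝ) : ℝ :=
  limsup (fun h => W2 (μ (t + h)) (μ t) / |h|) (𝓝[≠] (0 : ℝ))

/-- The nonnegative integrand `z log z - z + 1 ≥ 0` used to define the relative entropy:
for probability measures `ρ = f·σ` one has `∫ (f log f - f + 1) dσ = ∫ f log f dσ`. -/
noncomputable def entFun (z : ℝ) : ℝ := z * Real.log z - z + 1

open scoped Classical in
/-- The relative entropy `Ent_σ(ρ) = ∫ f log f dσ` if `ρ = f·σ ≪ σ`, and `+∞` otherwise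
(for probability measures `ρ, σ` this agrees with `∫⁻ (f log f - f + 1) dσ ∈ [0,∞]`). -/
noncomputable def Ent {X : Type*} [MeasurableSpace X]
    (σ ρ : MeasureTheory.Measure X) : ℝ≥0∞ :=
  if ρ ≪ σ then ∫⁻ x, ENNReal.ofReal (entFun ((ρ.rnDeriv σ x).toReal)) ∂σ else ⊤

/-- Push-forward of `μ` via the plan `γ` (Definition 5.3):
`γ_♯μ := π²_♯ γ_μ`, where `dγ_μ(x,y) = (dμ/d(π¹_♯γ))(x) dγ(x,y)`. -/
noncomputable def planPush {X : Type*} [MeasurableSpace X]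
    (γ : MeasureTheory.Measure (X × X)) (μ : MeasureTheory.Measure X) :
    MeasureTheory.Measure X :=
  (γ.withDensity (fun p => μ.rnDeriv (γ.map Prod.fst) p.1)).map Prod.snd

/-- The punctured `W₂`-neighborhood filter of `μ` within the probability measures:
the basis sets are `{ν : 0 < W₂(μ,ν) < ε}`, `ε > 0`. -/
noncomputable def W2nbhd {X : Type*} [MetricSpace X] [MeasurableSpace X]
    (μ : MeasureTheory.Measure X) : Filter (MeasureTheory.Measure X) :=
  ⨅ ε ∈ Set.Ioi (0 : ℝ),
    𝓟 {ν | MeasureTheory.IsProbabilityMeasure ν ∧ 0 < W2 μ ν ∧ W2 μ ν < ε}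

/-- The descending slope of the entropy,
`|D⁻Ent_m|(μ) = limsup_{ν → μ} (Ent_m(μ) - Ent_m(ν))⁺ / W₂(μ,ν)`
(the truncated subtraction in `ℝ≥0∞` is exactly the positive part). -/
noncomputable def entSlope {X : Type*} [MetricSpace X] [MeasurableSpace X]
    (m μ : MeasureTheory.Measure X) : ℝ≥0∞ :=
  limsup (fun ν => (Ent m μ - Ent m ν) / ENNReal.ofReal (W2 μ ν)) (W2nbhd μ)

/-- `ν` is a gradient flow of `Ent_m` in the Energy Dissipation Equality (EDE) sense in
`(P(X),W₂)` starting from `μ`: a `W₂`-continuous curve of probability measures in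
`D(Ent_m)` starting at `μ`, locally absolutely continuous in `(0,∞)`, such that
`Ent_m(ν_t) = Ent_m(ν_s) + ½∫_t^s |ν̇_r|² dr + ½∫_t^s |D⁻Ent_m|²(ν_r) dr` for all
`0 ≤ t ≤ s`. -/
def IsEntGradientFlow {X : Type*} [MetricSpace X] [MeasurableSpace X]
    (m : MeasureTheory.Measure X) (ν : ℝ → MeasureTheory.Measure X)
    (μ : MeasureTheory.Measure X) : Prop :=
  (∀ t : ℝ, 0 ≤ t → MeasureTheory.IsProbabilityMeasure (ν t)) ∧
  ν 0 = μ ∧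
  (∀ t : ℝ, 0 ≤ t → Ent m (ν t) < ⊤) ∧
  (∀ t : ℝ, 0 ≤ t → ∀ ε : ℝ, 0 < ε → ∃ δ : ℝ, 0 < δ ∧
    ∀ s : ℝ, 0 ≤ s → |s - t| < δ → W2 (ν s) (ν t) < ε) ∧
  (∀ a b : ℝ, 0 < a → a ≤ b → ∃ g : ℝ → ℝ, (∀ r, 0 ≤ g r) ∧
    MeasureTheory.IntegrableOn g (Set.Icc a b) ∧
    ∀ t s : ℝ, a ≤ t → t ≤ s → s ≤ b → W2 (ν t) (ν s) ≤ ∫ r in t..s, g r) ∧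
  (∀ t s : ℝ, 0 ≤ t → t ≤ s →
    Ent m (ν t) = Ent m (ν s)
      + (∫⁻ r in Set.Ioc t s, ENNReal.ofReal ((W2speed ν r) ^ 2)) / 2
      + (∫⁻ r in Set.Ioc t s, (entSlope m (ν r)) ^ 2) / 2)

/-- `(X,d,m)` is a `CD(K,∞)` space: the entropy `Ent_m` is `K`-geodesically convex in
`(P(X),W₂)`, i.e. any two measures in `D(Ent_m)` are joined by a constant speed `W₂`-geodesic
along which `Ent_m(μ_t) ≤ (1-t)Ent_m(μ₀) + tEnt_m(μ₁) - (K/2)t(1-t)W₂²(μ₀,μ₁)`. -/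
def IsCDKinf {X : Type*} [MetricSpace X] [MeasurableSpace X]
    (m : MeasureTheory.Measure X) (K : ℝ) : Prop :=
  ∀ μ₀ μ₁ : MeasureTheory.Measure X,
    MeasureTheory.IsProbabilityMeasure μ₀ → MeasureTheory.IsProbabilityMeasure μ₁ →
    Ent m μ₀ < ⊤ → Ent m μ₁ < ⊤ →
    ∃ μ : ℝ → MeasureTheory.Measure X,
      (∀ t ∈ Set.Icc (0 : ℝ) 1, MeasureTheory.IsProbabilityMeasure (μ t)) ∧
      μ 0 = μ₀ ∧ μ 1 = μ₁ ∧
      (∀ s ∈ Set.Icc (0 : ℝ) 1, ∀ t ∈ Set.Icc (0 : ℝ) 1,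
        W2 (μ s) (μ t) = |s - t| * W2 μ₀ μ₁) ∧
      (∀ t ∈ Set.Icc (0 : ℝ) 1, Ent m (μ t) ≠ ⊤ ∧
        (Ent m (μ t)).toReal ≤ (1 - t) * (Ent m μ₀).toReal + t * (Ent m μ₁).toReal
          - K / 2 * t * (1 - t) * (W2 μ₀ μ₁) ^ 2)

/-!
Existence holds for every lower semicontinuous `K`-convex functional `E` on a compact metric space.
Implicit Euler steps dissipate the energy almost at the optimal rate; as the step size tends to `0`
along an ultrafilter they converge to a curve satisfying an energy dissipation inequality, and the
reverse inequality holds along any curve because the descending slope is an upper gradient of a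
`K`-convex functional.

Uniqueness follows Gigli. If two flows with the same initial value differ at time `t`, then
evaluate the energy along the linear midpoint of the two curves. There the squared metric speed and
the squared slope of the entropy are both convex, so between times `0` and `t` the midpoint curve
can lose at most the mean of the two energy losses, while strict convexity of the entropy forces it
to lose more.

Convexity of the squared slope comes from the identity
`Ent μ + Ent ν = 2 Ent ((μ + ν) / 2) + 2 JS(μ, ν)`: transporting the midpoint by a Markov kernel
transports `μ` and `ν` as well and decreases the Jensen–Shannon divergence `JS`, so the midpoint
cannot lose more entropy in a transport than its two halves do on average.
-/

section Slope

variable {Y : Type*} [MetricSpace Y]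

/-- The descending slope `|D⁻E|(y) = limsup_{z → y} (E y - E z)⁺ / d(y, z)` of a functional on a
metric space; it is `0` at isolated points. -/
noncomputable def descSlope (E : Y → ℝ≥0∞) (y : Y) : ℝ≥0∞ :=
  limsup (fun z => (E y - E z) / ENNReal.ofReal (dist y z)) (𝓝[≠] y)

/-- A constant speed geodesic from `x` to `z`, parametrized by `[0, 1]`; the values of `γ` outside
`[0, 1]` are arbitrary. -/
structure IsConstantSpeedGeodesic (γ : ℝ → Y) (x z : Y) : Prop where
  map_zero : γ 0 = x
  map_one : γ 1 = z
  dist_eq : ∀ s ∈ Icc (0 : ℝ) 1, ∀ t ∈ Icc (0 : ℝ) 1, dist (γ s) (γ t) = |s - t| * dist x z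

/-- `K`-convexity of a functional along at least one geodesic between any two points of its
domain. -/
def IsGeodesicallyConvex (E : Y → ℝ≥0∞) (K : ℝ) : Prop :=
  ∀ x z : Y, E x < ⊤ → E z < ⊤ → ∃ γ : ℝ → Y, IsConstantSpeedGeodesic γ x z ∧
    ∀ t ∈ Icc (0 : ℝ) 1, E (γ t) ≠ ⊤ ∧
      (E (γ t)).toReal ≤ (1 - t) * (E x).toReal + t * (E z).toReal
        - K / 2 * t * (1 - t) * dist x z ^ 2

variable {E : Y → ℝ≥0∞} {K : ℝ} {x y z : Y}

lemma ennreal_sub_div_ofReal {a b : ℝ≥0∞} (ha : a ≠ ⊤) (hb : b ≠ ⊤) {d : ℝ} (hd : 0 < d) :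
    (a - b) / ENNReal.ofReal d = ENNReal.ofReal ((a.toReal - b.toReal) / d) := by
  rw [ENNReal.ofReal_div_of_pos hd, ENNReal.ofReal_sub _ ENNReal.toReal_nonneg,
    ENNReal.ofReal_toReal ha, ENNReal.ofReal_toReal hb]

lemma le_descSlope_of_tendsto {ι : Type*} {l : Filter ι} [l.NeBot] {γ : ι → Y} {q : ι → ℝ≥0∞}
    {c : ℝ≥0∞} (hγ : Tendsto γ l (𝓝[≠] x)) (hq : Tendsto q l (𝓝 c))
    (h : ∀ᶠ t in l, q t ≤ (E x - E (γ t)) / ENNReal.ofReal (dist x (γ t))) :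
    c ≤ descSlope E x :=
  calc c = limsup q l := hq.limsup_eq.symm
    _ ≤ limsup (fun t => (E x - E (γ t)) / ENNReal.ofReal (dist x (γ t))) l :=
        limsup_le_limsup h
    _ = limsup (fun z => (E x - E z) / ENNReal.ofReal (dist x z)) (map γ l) := rfl
    _ ≤ descSlope E x := limsup_le_limsup_of_le hγ

lemma descSlope_le_of_tendsto {q : Y → ℝ≥0∞} {c : ℝ≥0∞} (hq : Tendsto q (𝓝[≠] x) (𝓝 c))
    (h : ∀ᶠ z in 𝓝[≠] x, (E x - E z) / ENNReal.ofReal (dist x z) ≤ q z) :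
    descSlope E x ≤ c := by
  rcases (𝓝[≠] x).eq_or_neBot with hbot | hne
  · simp [descSlope, hbot]
  · exact (limsup_le_limsup h).trans_eq hq.limsup_eq

namespace IsConstantSpeedGeodesic

variable {γ : ℝ → Y} {t : ℝ}

lemma dist_left (hγ : IsConstantSpeedGeodesic γ x z) (ht : t ∈ Icc (0 : ℝ) 1) :
    dist x (γ t) = t * dist x z := by
  nth_rw 1 [← hγ.map_zero]
  rw [hγ.dist_eq 0 (by simp) t ht, zero_sub, abs_neg, abs_of_nonneg ht.1]

lemma dist_right (hγ : IsConstantSpeedGeodesic γ x z) (ht : t ∈ Icc (0 : ℝ) 1) :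
    dist (γ t) z = (1 - t) * dist x z := by
  nth_rw 1 [← hγ.map_one]
  rw [hγ.dist_eq t ht 1 (by simp), abs_sub_comm, abs_of_nonneg (by linarith [ht.2])]

lemma tendsto_nhdsNE (hγ : IsConstantSpeedGeodesic γ x z) (hxz : x ≠ z) :
    Tendsto γ (𝓝[>] 0) (𝓝[≠] x) := by
  have h_dist : ∀ᶠ t in 𝓝[>] (0 : ℝ), 0 < t ∧ dist (γ t) x = t * dist x z := by
    filter_upwards [Ioc_mem_nhdsGT one_pos] with t ht
    exact ⟨ht.1, by rw [dist_comm, hγ.dist_left ⟨ht.1.le, ht.2⟩]⟩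
  have h_zero : Tendsto (fun t : ℝ => t * dist x z) (𝓝[>] 0) (𝓝 0) :=
    ((continuous_mul_const (dist x z)).tendsto' 0 0 (zero_mul _)).mono_left nhdsWithin_le_nhds
  refine tendsto_nhdsWithin_iff.2 ⟨tendsto_iff_dist_tendsto_zero.2 ?_, ?_⟩
  · exact h_zero.congr' (h_dist.mono fun t ht => ht.2.symm)
  · filter_upwards [h_dist] with t ⟨ht, h_eq⟩
    exact dist_pos.1 (h_eq ▸ mul_pos ht (dist_pos.2 hxz))

end IsConstantSpeedGeodesic

namespace IsGeodesicallyConvex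

lemma ofReal_le_descSlope (hE : IsGeodesicallyConvex E K) (hx : E x < ⊤) (hz : E z < ⊤)
    (hxz : x ≠ z) :
    ENNReal.ofReal (((E x).toReal - (E z).toReal) / dist x z + K / 2 * dist x z)
      ≤ descSlope E x := by
  obtain ⟨γ, hγ, hconv⟩ := hE x z hx hz
  have hd : 0 < dist x z := dist_pos.2 hxz
  let q : ℝ → ℝ := fun t =>
    ((E x).toReal - (E z).toReal) / dist x z + K / 2 * (1 - t) * dist x z
  have hq : Tendsto (fun t => ENNReal.ofReal (q t)) (𝓝[>] 0)
      (𝓝 (ENNReal.ofReal (((E x).toReal - (E z).toReal) / dist x z + K / 2 * dist x z))) :=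
    (Continuous.tendsto' (ENNReal.continuous_ofReal.comp (by fun_prop)) 0 _
      (by simp [q])).mono_left nhdsWithin_le_nhds
  refine le_descSlope_of_tendsto (hγ.tendsto_nhdsNE hxz) hq ?_
  filter_upwards [Ioc_mem_nhdsGT one_pos] with t ht
  have ht' : t ∈ Icc (0 : ℝ) 1 := ⟨ht.1.le, ht.2⟩
  have htd : 0 < t * dist x z := mul_pos ht.1 hd
  obtain ⟨h_top, h_le⟩ := hconv t ht'
  rw [hγ.dist_left ht', ennreal_sub_div_ofReal hx.ne h_top htd]
  refine ENNReal.ofReal_le_ofReal ((le_div_iff₀ htd).2 ?_)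
  calc q t * (t * dist x z)
      = t * ((E x).toReal - (E z).toReal) + K / 2 * t * (1 - t) * dist x z ^ 2 := by
        simp only [q]; field_simp
    _ ≤ (E x).toReal - (E (γ t)).toReal := by linarith

lemma toReal_sub_le_descSlope_mul (hE : IsGeodesicallyConvex E K) (hx : E x < ⊤) (hz : E z < ⊤)
    (h_slope : descSlope E x ≠ ⊤) :
    (E x).toReal - (E z).toReal
      ≤ (descSlope E x).toReal * dist x z + |K| / 2 * dist x z ^ 2 := by
  rcases eq_or_ne x z with rfl | hxz
  · simp
  have hd : 0 < dist x z := dist_pos.2 hxz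
  have h := (ENNReal.ofReal_le_iff_le_toReal h_slope).1 (hE.ofReal_le_descSlope hx hz hxz)
  calc (E x).toReal - (E z).toReal
      ≤ ((descSlope E x).toReal - K / 2 * dist x z) * dist x z := by
        rw [← div_le_iff₀ hd]; linarith
    _ = (descSlope E x).toReal * dist x z + -K / 2 * dist x z ^ 2 := by ring
    _ ≤ (descSlope E x).toReal * dist x z + |K| / 2 * dist x z ^ 2 := by
        gcongr; exact neg_le_abs K

end IsGeodesicallyConvex

lemma exists_lt_toReal_sub_div (hx : E x < ⊤) {c : ℝ≥0} (hc : c < descSlope E x) (C : ℝ) :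
    ∃ z ≠ x, E z < E x ∧ c < ((E x).toReal - (E z).toReal) / dist x z + C * dist x z := by
  obtain ⟨b, hcb, hb⟩ := ENNReal.lt_iff_exists_nnreal_btwn.1 hc
  have hcb' : (c : ℝ) < b := by exact_mod_cast hcb
  have h_near : ∀ᶠ z in 𝓝[≠] x, z ≠ x ∧ |C| * dist x z < b - c :=
    eventually_mem_nhdsWithin.and (eventually_nhdsWithin_of_eventually_nhds
      ((Continuous.tendsto' (by fun_prop) x 0 (by simp)).eventually_lt_const (sub_pos.2 hcb')))
  have h_freq := frequently_lt_of_lt_limsup (by isBoundedDefault) hb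
  obtain ⟨z, hbz, hzx, hCz⟩ := (h_freq.and_eventually h_near).exists
  have hd : 0 < dist x z := dist_pos.2 hzx.symm
  have hz : E z < E x := by
    by_contra! h
    simp [tsub_eq_zero_of_le h] at hbz
  rw [ennreal_sub_div_ofReal hx.ne (hz.trans hx).ne hd, ← ENNReal.ofReal_coe_nnreal] at hbz
  have hbz' := (ENNReal.ofReal_lt_ofReal_iff_of_nonneg b.2).1 hbz
  refine ⟨z, hzx, hz, ?_⟩
  calc (c : ℝ) < b + -|C| * dist x z := by linarith
    _ ≤ ((E x).toReal - (E z).toReal) / dist x z + C * dist x z := by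
      gcongr; exacts [hbz'.le, neg_abs_le C]

lemma eventually_lt_of_lowerSemicontinuousAt {Z α : Type*} [TopologicalSpace Z] [LinearOrder α]
    [DenselyOrdered α] [TopologicalSpace α] [OrderTopology α] {f g : Z → α} {x : Z}
    (hf : LowerSemicontinuousAt f x) (hg : ContinuousAt g x) (h : g x < f x) :
    ∀ᶠ w in 𝓝 x, g w < f w := by
  obtain ⟨c, hgc, hcf⟩ := exists_between h
  filter_upwards [hg.eventually_lt_const hgc, hf c hcf] with w using lt_trans

/-- Lower semicontinuity of the slope on the domain of `E`: the quotient
`(E w - E z) / d(w, z) + K / 2 * d(w, z)` bounding the slope at `w` from below exceeds `c` exactly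
when `E w` exceeds a continuous function of `w`. -/
lemma IsGeodesicallyConvex.eventually_lt_descSlope (hE : IsGeodesicallyConvex E K)
    (hlsc : LowerSemicontinuous E) (hx : E x < ⊤) {c : ℝ≥0∞} (hc : c < descSlope E x) :
    ∀ᶠ w in 𝓝 x, E w < ⊤ → c < descSlope E w := by
  obtain ⟨a, hca, ha⟩ := ENNReal.lt_iff_exists_nnreal_btwn.1 hc
  obtain ⟨z, hzx, hz, hxz⟩ := exists_lt_toReal_sub_div hx ha (K / 2)
  let g : Y → ℝ := fun w => (E z).toReal + (a - K / 2 * dist w z) * dist w z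
  have lt_quotient_iff : ∀ {w e}, w ≠ z →
      (g w < e ↔ (a : ℝ) < (e - (E z).toReal) / dist w z + K / 2 * dist w z) := by
    intro w e hw
    rw [← sub_lt_iff_lt_add, lt_div_iff₀ (dist_pos.2 hw), lt_sub_iff_add_lt']
  have hg : ENNReal.ofReal (g x) < E x := by
    have hEx : 0 < (E x).toReal := ENNReal.toReal_pos hz.ne_bot hx.ne
    rw [← ENNReal.ofReal_toReal hx.ne, ENNReal.ofReal_lt_ofReal_iff hEx]
    exact (lt_quotient_iff hzx.symm).2 hxz
  have hg_cont : Continuous fun w => ENNReal.ofReal (g w) :=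
    ENNReal.continuous_ofReal.comp (by fun_prop)
  filter_upwards [eventually_lt_of_lowerSemicontinuousAt (hlsc x) hg_cont.continuousAt hg,
    isOpen_ne.mem_nhds hzx.symm] with w hgw hwz hw
  have hgw' : g w < (E w).toReal :=
    (le_max_left _ _).trans_lt ((ENNReal.toReal_lt_toReal ENNReal.ofReal_ne_top hw.ne).2 hgw)
  calc c < a := hca
    _ = ENNReal.ofReal a := (ENNReal.ofReal_coe_nnreal).symm
    _ ≤ _ := ENNReal.ofReal_le_ofReal ((lt_quotient_iff hwz).1 hgw').le
    _ ≤ descSlope E w := hE.ofReal_le_descSlope hw (hz.trans hx) hwz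

end Slope

section Averaging

variable {f : ℝ → ℝ} {a b h : ℝ}

lemma intervalIntegrable_comp_min {c : ℝ} (hab : a ≤ b) (hbc : b ≤ c)
    (hf : IntervalIntegrable f volume a b) :
    IntervalIntegrable (fun r => f (min r b)) volume a c := by
  have h_left : IntervalIntegrable (fun r => f (min r b)) volume a b :=
    hf.congr fun r hr => by rw [min_eq_left ((uIoc_of_le hab ▸ hr).2)]
  have h_right : IntervalIntegrable (fun r => f (min r b)) volume b c :=
    (intervalIntegrable_const (c := f b)).congr fun r hr => by
      rw [min_eq_right ((uIoc_of_le hbc ▸ hr).1.le)]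
  exact h_left.trans h_right

lemma intervalIntegrable_comp_add_min (hf : IntervalIntegrable f volume a b) (hh : 0 ≤ h)
    (hb : a + h ≤ b) : IntervalIntegrable (fun r => f (min (r + h) b)) volume a b := by
  have h_ext := intervalIntegrable_comp_min (by linarith) (le_add_of_nonneg_right hh) hf
  have h_sub : uIcc (a + h) (b + h) ⊆ uIcc a (b + h) :=
    uIcc_subset_uIcc (Icc_subset_uIcc ⟨by linarith, by linarith⟩) right_mem_uIcc
  simpa using (h_ext.mono_set h_sub).comp_add_right h

lemma integral_sub_comp_add_min (hf : IntervalIntegrable f volume a b) (hh : 0 ≤ h)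
    (hb : a + h ≤ b) :
    ∫ r in a..b, (f r - f (min (r + h) b)) = (∫ r in a..(a + h), f r) - h * f b := by
  have ha_mem : a ∈ Icc a (b + h) := ⟨le_rfl, by linarith⟩
  have hah_mem : a + h ∈ Icc a (b + h) := ⟨by linarith, by linarith⟩
  have hb_mem : b ∈ Icc a (b + h) := ⟨by linarith, by linarith⟩
  have hbh_mem : b + h ∈ Icc a (b + h) := ⟨by linarith, le_rfl⟩
  have h_int : ∀ {c d}, c ∈ Icc a (b + h) → d ∈ Icc a (b + h) →
      IntervalIntegrable (fun r => f (min r b)) volume c d := fun hc hd =>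
    (intervalIntegrable_comp_min hb_mem.1 hb_mem.2 hf).mono_set
      (uIcc_subset_uIcc (Icc_subset_uIcc hc) (Icc_subset_uIcc hd))
  have h_left : ∀ c ∈ Icc a b, ∫ r in a..c, f (min r b) = ∫ r in a..c, f r := fun c hc =>
    intervalIntegral.integral_congr fun r hr => by
      rw [uIcc_of_le hc.1] at hr
      simp only [min_eq_left (hr.2.trans hc.2)]
  have h_right : ∫ r in b..(b + h), f (min r b) = ∫ _ in b..(b + h), f b :=
    intervalIntegral.integral_congr fun r hr => by
      rw [uIcc_of_le hb_mem.2] at hr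
      simp only [min_eq_right hr.1]
  calc ∫ r in a..b, (f r - f (min (r + h) b))
      = (∫ r in a..b, f (min r b)) - ∫ r in (a + h)..(b + h), f (min r b) := by
        rw [intervalIntegral.integral_sub hf (intervalIntegrable_comp_add_min hf hh hb),
          h_left b ⟨hb_mem.1, le_rfl⟩,
          intervalIntegral.integral_comp_add_right (fun r => f (min r b))]
    _ = (∫ r in a..(a + h), f (min r b)) - ∫ r in b..(b + h), f (min r b) :=
        intervalIntegral.integral_interval_sub_interval_comm (h_int ha_mem hb_mem)
          (h_int hah_mem hbh_mem) (h_int ha_mem hah_mem)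
    _ = (∫ r in a..(a + h), f r) - h * f b := by
        rw [h_left _ ⟨hah_mem.1, hb⟩, h_right]
        simp

lemma mul_le_integral_of_forall_le {c : ℝ} (hf : IntervalIntegrable f volume a (a + h))
    (hh : 0 ≤ h) (hc : ∀ r ∈ Icc a (a + h), c ≤ f r) : h * c ≤ ∫ r in a..(a + h), f r := by
  simpa using intervalIntegral.integral_mono_on (le_add_of_nonneg_right hh)
    intervalIntegrable_const hf hc

variable {φ A G : ℝ → ℝ} {C : ℝ}

lemma integral_sub_le_of_ae_increment_le (hφ : IntervalIntegrable φ volume a b)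
    (hA : MonotoneOn A (Icc a b)) (hG : IntervalIntegrable G volume a b)
    (h_inc : ∀ᵐ r ∂(volume.restrict (Ioc a b)), ∀ t ∈ Icc r b, ∀ h : ℝ, 0 < h → t - r ≤ h →
      φ r - φ t ≤ h / 2 * G r + (1 / 2 + C * h) * (A t - A r))
    (hC : 0 ≤ C) (hh : 0 < h) (hb : a + h ≤ b) :
    (∫ r in a..(a + h), φ r) - h * φ b
      ≤ h * ((∫ r in a..b, G r) / 2 + (1 / 2 + C * h) * (A b - A a)) := by
  have hab : a ≤ b := by linarith
  have hA_int : IntervalIntegrable A volume a b :=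
    MonotoneOn.intervalIntegrable (by rwa [uIcc_of_le hab])
  have hA_le : h * A a ≤ ∫ r in a..(a + h), A r := by
    have h_sub : uIcc a (a + h) ⊆ uIcc a b := by
      rw [uIcc_of_le (by linarith), uIcc_of_le hab]
      exact Icc_subset_Icc_right hb
    exact mul_le_integral_of_forall_le (hA_int.mono_set h_sub) hh.le fun r hr =>
      hA ⟨le_rfl, hab⟩ ⟨hr.1, hr.2.trans hb⟩ hr.1
  have hA_sub := hA_int.sub (intervalIntegrable_comp_add_min hA_int hh.le hb)
  calc (∫ r in a..(a + h), φ r) - h * φ b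
      = ∫ r in a..b, (φ r - φ (min (r + h) b)) := (integral_sub_comp_add_min hφ hh.le hb).symm
    _ ≤ ∫ r in a..b, (h / 2 * G r - (1 / 2 + C * h) * (A r - A (min (r + h) b))) := by
        refine intervalIntegral.integral_mono_ae_restrict hab
          (hφ.sub (intervalIntegrable_comp_add_min hφ hh.le hb))
          ((hG.const_mul _).sub (hA_sub.const_mul _)) ?_
        rw [← restrict_Ioc_eq_restrict_Icc]
        filter_upwards [h_inc, ae_restrict_mem measurableSet_Ioc] with r hr hrab
        have := hr (min (r + h) b) ⟨le_min (by linarith) hrab.2, min_le_right _ _⟩ h hh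
          (by linarith [min_le_left (r + h) b])
        linarith
    _ = h * ((∫ r in a..b, G r) / 2)
          + (1 / 2 + C * h) * (h * A b - ∫ r in a..(a + h), A r) := by
        rw [intervalIntegral.integral_sub (hG.const_mul _) (hA_sub.const_mul _),
          intervalIntegral.integral_const_mul, intervalIntegral.integral_const_mul,
          integral_sub_comp_add_min hA_int hh.le hb]
        ring
    _ ≤ h * ((∫ r in a..b, G r) / 2) + (1 / 2 + C * h) * (h * A b - h * A a) := by
        gcongr
    _ = h * ((∫ r in a..b, G r) / 2 + (1 / 2 + C * h) * (A b - A a)) := by ring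

/-- Averaging the increments `φ r - φ (r + h)` over `r` and letting `h → 0` only uses the values of
`φ` at almost every point, at `b`, and lower semicontinuity at `a`. -/
lemma sub_le_of_ae_increment_le (hab : a < b) (hφ : IntervalIntegrable φ volume a b)
    (hA : MonotoneOn A (Icc a b)) (hG : IntervalIntegrable G volume a b)
    (h_inc : ∀ᵐ r ∂(volume.restrict (Ioc a b)), ∀ t ∈ Icc r b, ∀ h : ℝ, 0 < h → t - r ≤ h →
      φ r - φ t ≤ h / 2 * G r + (1 / 2 + C * h) * (A t - A r))
    (hC : 0 ≤ C) (h_lsc : LowerSemicontinuousWithinAt φ (Ici a) a) :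
    φ a - φ b ≤ (∫ r in a..b, G r) / 2 + (A b - A a) / 2 := by
  suffices h_lt : ∀ c < φ a, c - φ b ≤ (∫ r in a..b, G r) / 2 + (A b - A a) / 2 by
    have := le_of_forall_lt_imp_le_of_dense fun c hc => sub_le_iff_le_add.1 (h_lt c hc)
    linarith
  intro c hc
  obtain ⟨u, hau, hu⟩ := mem_nhdsGE_iff_exists_Ico_subset.1 (h_lsc c hc)
  have h_ev : ∀ᶠ h in 𝓝[>] (0 : ℝ),
      c - φ b ≤ (∫ r in a..b, G r) / 2 + (1 / 2 + C * h) * (A b - A a) := by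
    filter_upwards [Ioo_mem_nhdsGT (lt_min (sub_pos.2 hau) (sub_pos.2 hab))] with h hh
    have hhu : a + h < u := by linarith [hh.2.trans_le (min_le_left _ _)]
    have hhb : a + h ≤ b := by linarith [hh.2.trans_le (min_le_right _ _)]
    have h_sub : uIcc a (a + h) ⊆ uIcc a b := by
      rw [uIcc_of_le (by linarith [hh.1]), uIcc_of_le hab.le]
      exact Icc_subset_Icc_right hhb
    have h_avg : h * c ≤ ∫ r in a..(a + h), φ r :=
      mul_le_integral_of_forall_le (hφ.mono_set h_sub) hh.1.le fun r hr =>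
        (hu ⟨hr.1, hr.2.trans_lt hhu⟩ : c < φ r).le
    have h_le := integral_sub_le_of_ae_increment_le hφ hA hG h_inc hC hh.1 hhb
    exact le_of_mul_le_mul_left (by linarith) hh.1
  have h_lim : Tendsto (fun h : ℝ => (∫ r in a..b, G r) / 2 + (1 / 2 + C * h) * (A b - A a))
      (𝓝[>] 0) (𝓝 ((∫ r in a..b, G r) / 2 + (A b - A a) / 2)) :=
    (Continuous.tendsto' (by fun_prop) 0 _ (by ring)).mono_left nhdsWithin_le_nhds
  exact ge_of_tendsto h_lim h_ev

lemma le_half_mul_sq_add_of_sq_le {x g d C h τ a : ℝ} (hx : x ≤ g * d + C * d ^ 2)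
    (hd : d ^ 2 ≤ τ * a) (ha : 0 ≤ a) (hC : 0 ≤ C) (hh : 0 < h) (hτ : τ ≤ h) :
    x ≤ h / 2 * g ^ 2 + (1 / 2 + C * h) * a := by
  have hd' : d ^ 2 ≤ h * a := hd.trans (mul_le_mul_of_nonneg_right hτ ha)
  have h_young : g * d ≤ h / 2 * g ^ 2 + d ^ 2 / h / 2 := by
    have : h / 2 * g ^ 2 + d ^ 2 / h / 2 - g * d = (h * g - d) ^ 2 / (2 * h) := by
      field_simp; ring
    linarith [show 0 ≤ (h * g - d) ^ 2 / (2 * h) by positivity]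
  have h_div : d ^ 2 / h ≤ a := (div_le_iff₀' hh).2 hd'
  linarith [mul_le_mul_of_nonneg_left hd' hC]

end Averaging

section Speed

variable {Y : Type*} [PseudoMetricSpace Y] {y : ℝ → Y} {a b r : ℝ}

/-- The metric speed of a curve, as a `limsup` of difference quotients; it has a junk value where
these are unbounded. -/
noncomputable def metricSpeed (y : ℝ → Y) (t : ℝ) : ℝ :=
  limsup (fun h => dist (y (t + h)) (y t) / |h|) (𝓝[≠] (0 : ℝ))

/-- The difference quotients of `y` at `r` are bounded, so that `metricSpeed y r` is meaningful. -/
def HasBoundedSpeedAt (y : ℝ → Y) (r : ℝ) : Prop :=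
  IsBoundedUnder (· ≤ ·) (𝓝[≠] (0 : ℝ)) fun h => dist (y (r + h)) (y r) / |h|

lemma HasBoundedSpeedAt.metricSpeed_nonneg (h : HasBoundedSpeedAt y r) : 0 ≤ metricSpeed y r :=
  le_limsup_of_frequently_le (Frequently.of_forall fun h => by positivity) h

lemma metricSpeed_le_of_tendsto {c : ℝ} {q : ℝ → ℝ} (hq : Tendsto q (𝓝[≠] 0) (𝓝 c))
    (hle : ∀ᶠ h in 𝓝[≠] (0 : ℝ), dist (y (r + h)) (y r) / |h| ≤ q h) : metricSpeed y r ≤ c := by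
  have h_nonneg : ∀ h : ℝ, 0 ≤ dist (y (r + h)) (y r) / |h| := fun h => by positivity
  rw [← hq.limsup_eq]
  exact limsup_le_limsup hle (isBoundedUnder_of ⟨0, h_nonneg⟩).isCoboundedUnder_le
    hq.isBoundedUnder_le

lemma HasBoundedSpeedAt.abs_deriv_dist_le_metricSpeed (h : HasBoundedSpeedAt y r) (x : Y)
    (hd : DifferentiableAt ℝ (fun r => dist x (y r)) r) :
    |deriv (fun r => dist x (y r)) r| ≤ metricSpeed y r := by
  have h_lim := hd.hasDerivAt.tendsto_slope_zero.abs
  rw [← h_lim.limsup_eq]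
  refine limsup_le_limsup (Eventually.of_forall fun t => ?_) h_lim.isCoboundedUnder_le h
  simp only [smul_eq_mul, abs_mul, abs_inv]
  rw [div_eq_inv_mul, dist_comm x, dist_comm x]
  gcongr
  exact abs_dist_sub_le _ _ _

lemma absolutelyContinuousOnInterval_of_dist_le {Z : Type*} [PseudoMetricSpace Z] {G : ℝ → Z}
    (hG : AbsolutelyContinuousOnInterval G a b)
    (h : ∀ t ∈ uIcc a b, ∀ s ∈ uIcc a b, dist (y t) (y s) ≤ dist (G t) (G s)) :
    AbsolutelyContinuousOnInterval y a b := by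
  refine tendsto_of_tendsto_of_tendsto_of_le_of_le' tendsto_const_nhds hG
    (Eventually.of_forall fun _ => Finset.sum_nonneg fun i _ => dist_nonneg)
    (eventually_inf_principal.2 (Eventually.of_forall fun I hI => ?_))
  exact Finset.sum_le_sum fun i hi => h _ (hI.1 i hi).1 _ (hI.1 i hi).2

lemma ofReal_dist_le_lintegral_metricSpeed (hab : a ≤ b)
    (hac : AbsolutelyContinuousOnInterval y a b)
    (h_speed : ∀ᵐ r ∂(volume.restrict (Ioc a b)), HasBoundedSpeedAt y r) :
    ENNReal.ofReal (dist (y a) (y b)) ≤ ∫⁻ r in Ioc a b, ENNReal.ofReal (metricSpeed y r) := by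
  let f : ℝ → ℝ := fun r => dist (y a) (y r)
  have hf : AbsolutelyContinuousOnInterval f a b :=
    absolutelyContinuousOnInterval_of_dist_le hac fun t _ s _ => by
      simp only [f, Real.dist_eq, dist_comm (y a)]
      exact abs_dist_sub_le _ _ _
  have h_diff := hf.ae_differentiableAt
  rw [uIcc_of_le hab] at h_diff
  calc ENNReal.ofReal (dist (y a) (y b))
      = ENNReal.ofReal (∫ r in Ioc a b, deriv f r) := by
        rw [← intervalIntegral.integral_of_le hab, hf.integral_deriv_eq_sub]; simp [f]
    _ ≤ ∫⁻ r in Ioc a b, ‖deriv f r‖ₑ :=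
        (Real.ofReal_le_enorm _).trans (enorm_integral_le_lintegral_enorm _)
    _ ≤ ∫⁻ r in Ioc a b, ENNReal.ofReal (metricSpeed y r) := by
        refine lintegral_mono_ae ?_
        filter_upwards [h_speed, ae_restrict_of_ae h_diff, ae_restrict_mem measurableSet_Ioc]
          with r hr hd hrm
        rw [Real.enorm_eq_ofReal_abs]
        exact ENNReal.ofReal_le_ofReal
          (hr.abs_deriv_dist_le_metricSpeed _ (hd (Ioc_subset_Icc_self hrm)))

lemma sq_lintegral_le {α : Type*} [MeasurableSpace α] (μ : Measure α) (f : α → ℝ≥0∞) :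
    (∫⁻ x, f x ∂μ) ^ 2 ≤ μ univ * ∫⁻ x, f x ^ 2 ∂μ := by
  obtain ⟨g, hg, hgf, h_eq⟩ := exists_measurable_le_lintegral_eq μ f
  have h_holder := ENNReal.lintegral_mul_le_Lp_mul_Lq μ Real.HolderConjugate.two_two
    aemeasurable_const (hg.aemeasurable (μ := μ)) (f := fun _ => 1)
  calc (∫⁻ x, f x ∂μ) ^ 2 = (∫⁻ x, g x ∂μ) ^ 2 := by rw [h_eq]
    _ ≤ (μ univ ^ (1 / 2 : ℝ) * (∫⁻ x, g x ^ (2 : ℝ) ∂μ) ^ (1 / 2 : ℝ)) ^ 2 := by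
        gcongr
        simpa using h_holder
    _ = μ univ * ∫⁻ x, g x ^ 2 ∂μ := by
        simp only [mul_pow, ← ENNReal.rpow_natCast, ← ENNReal.rpow_mul]
        norm_num
    _ ≤ μ univ * ∫⁻ x, f x ^ 2 ∂μ := by
        gcongr with x
        exact hgf x

lemma dist_le_dist_integral {g : ℝ → ℝ} (hg : IntegrableOn g (Icc a b))
    (h : ∀ t s, a ≤ t → t ≤ s → s ≤ b → dist (y t) (y s) ≤ ∫ r in t..s, g r) :
    ∀ t ∈ Icc a b, ∀ s ∈ Icc a b,
      dist (y t) (y s) ≤ dist (∫ r in a..t, g r) (∫ r in a..s, g r) := by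
  have h_int : ∀ u ∈ Icc a b, IntervalIntegrable g volume a u := fun u hu =>
    (intervalIntegrable_iff_integrableOn_Icc_of_le hu.1).2
      (hg.mono_set (Icc_subset_Icc_right hu.2))
  have h_le : ∀ t ∈ Icc a b, ∀ s ∈ Icc a b, t ≤ s →
      dist (y t) (y s) ≤ dist (∫ r in a..t, g r) (∫ r in a..s, g r) := fun t ht s hs hts => by
    rw [dist_comm (∫ r in a..t, g r), Real.dist_eq,
      intervalIntegral.integral_interval_sub_left (h_int s hs) (h_int t ht)]
    exact (h t s ht.1 hts hs.2).trans (le_abs_self _)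
  intro t ht s hs
  rcases le_total t s with hts | hst
  · exact h_le t ht s hs hts
  · rw [dist_comm, dist_comm (∫ r in a..t, g r)]
    exact h_le s hs t ht hst

lemma absolutelyContinuousOnInterval_of_dist_le_integral {g : ℝ → ℝ} (hab : a ≤ b)
    (hg : IntegrableOn g (Icc a b))
    (h : ∀ t s, a ≤ t → t ≤ s → s ≤ b → dist (y t) (y s) ≤ ∫ r in t..s, g r) :
    AbsolutelyContinuousOnInterval y a b := by
  have hgi : IntervalIntegrable g volume a b :=
    (intervalIntegrable_iff_integrableOn_Icc_of_le hab).2 hg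
  refine absolutelyContinuousOnInterval_of_dist_le
    (hgi.absolutelyContinuousOnInterval_intervalIntegral left_mem_uIcc) ?_
  rw [uIcc_of_le hab]
  exact dist_le_dist_integral hg h

lemma ae_hasBoundedSpeedAt_of_dist_le_integral {g : ℝ → ℝ} (hab : a ≤ b)
    (hg : IntegrableOn g (Icc a b))
    (h : ∀ t s, a ≤ t → t ≤ s → s ≤ b → dist (y t) (y s) ≤ ∫ r in t..s, g r) :
    ∀ᵐ r ∂(volume.restrict (Ioc a b)), HasBoundedSpeedAt y r := by
  have hgi : IntervalIntegrable g volume a b :=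
    (intervalIntegrable_iff_integrableOn_Icc_of_le hab).2 hg
  filter_upwards [ae_restrict_of_ae hgi.ae_hasDerivAt_integral,
    ae_restrict_of_ae (Measure.ae_ne volume b), ae_restrict_mem measurableSet_Ioc]
    with r hr hrb hrm
  have hr' : r ∈ Icc a b := Ioc_subset_Icc_self hrm
  rw [uIcc_of_le hab] at hr
  refine (hr hr' a (left_mem_Icc.2 hab)).tendsto_slope_zero.abs.isBoundedUnder_le.mono_le ?_
  have h_near : ∀ᶠ h in 𝓝[≠] (0 : ℝ), r + h ∈ Icc a b := by
    refine eventually_nhdsWithin_of_eventually_nhds (ContinuousAt.eventually_mem (by fun_prop) ?_)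
    simpa using Icc_mem_nhds hrm.1 (lt_of_le_of_ne hrm.2 hrb)
  filter_upwards [h_near] with h' hh'
  simp only [smul_eq_mul, abs_mul, abs_inv]
  rw [div_eq_inv_mul]
  gcongr
  exact dist_le_dist_integral hg h _ hh' _ hr'

end Speed

section Curve

variable {Y : Type*} [PseudoMetricSpace Y] {y : ℝ → Y} {a b c : ℝ}

/-- A continuous curve which is locally absolutely continuous on `(0, ∞)`. It is defined on all of
`ℝ` for convenience, gradient flows being extended constantly to negative times. -/
structure IsACCurve (y : ℝ → Y) : Prop where
  continuous : Continuous y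
  exists_integrable : ∀ a b : ℝ, 0 < a → a ≤ b → ∃ g : ℝ → ℝ, (∀ r, 0 ≤ g r) ∧
    IntegrableOn g (Icc a b) ∧
    ∀ t s : ℝ, a ≤ t → t ≤ s → s ≤ b → dist (y t) (y s) ≤ ∫ r in t..s, g r

/-- The action of a curve on `(a, b]`: the integral of its squared metric speed. -/
noncomputable def curveAction (y : ℝ → Y) (a b : ℝ) : ℝ≥0∞ :=
  ∫⁻ r in Ioc a b, ENNReal.ofReal (metricSpeed y r ^ 2)

lemma lintegral_Ioc_add {f : ℝ → ℝ≥0∞} (hab : a ≤ b) (hbc : b ≤ c) :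
    ∫⁻ r in Ioc a c, f r = (∫⁻ r in Ioc a b, f r) + ∫⁻ r in Ioc b c, f r := by
  rw [← Ioc_union_Ioc_eq_Ioc hab hbc, lintegral_union measurableSet_Ioc
    (Ioc_disjoint_Ioc_of_le le_rfl)]

lemma curveAction_mono_right (y : ℝ → Y) (a : ℝ) : Monotone (curveAction y a) := fun _ _ hbc =>
  lintegral_mono_set (Ioc_subset_Ioc_right hbc)

lemma curveAction_anti_left (y : ℝ → Y) (b : ℝ) : Antitone fun a => curveAction y a b :=
  fun _ _ haa' => lintegral_mono_set (Ioc_subset_Ioc_left haa')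

lemma monotoneOn_toReal_curveAction (h_fin : curveAction y a b ≠ ⊤) :
    MonotoneOn (fun t => (curveAction y a t).toReal) (Icc a b) := fun _ _ _ ht hst =>
  ENNReal.toReal_mono (ne_top_of_le_ne_top h_fin (curveAction_mono_right y a ht.2))
    (curveAction_mono_right y a hst)

lemma IsACCurve.ofReal_dist_sq_le (hy : IsACCurve y) (ha : 0 ≤ a) (hab : a < b) :
    ENNReal.ofReal (dist (y a) (y b) ^ 2) ≤ ENNReal.ofReal (b - a) * curveAction y a b := by
  have h_pos : ∀ t ∈ Ioo a b, ENNReal.ofReal (dist (y t) (y b) ^ 2)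
      ≤ ENNReal.ofReal (b - a) * curveAction y a b := fun t ht => by
    obtain ⟨g, -, hg, h_dist⟩ := hy.exists_integrable t b (ha.trans_lt ht.1) ht.2.le
    have h_le := ofReal_dist_le_lintegral_metricSpeed ht.2.le
      (absolutelyContinuousOnInterval_of_dist_le_integral ht.2.le hg h_dist)
      (ae_hasBoundedSpeedAt_of_dist_le_integral ht.2.le hg h_dist)
    calc ENNReal.ofReal (dist (y t) (y b) ^ 2)
        = ENNReal.ofReal (dist (y t) (y b)) ^ 2 := ENNReal.ofReal_pow dist_nonneg 2
      _ ≤ (∫⁻ r in Ioc t b, ENNReal.ofReal (metricSpeed y r)) ^ 2 := by gcongr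
      _ ≤ ENNReal.ofReal (b - t) * ∫⁻ r in Ioc t b, ENNReal.ofReal (metricSpeed y r) ^ 2 := by
          simpa using sq_lintegral_le (volume.restrict (Ioc t b)) _
      _ ≤ ENNReal.ofReal (b - t) * curveAction y t b := by
          gcongr
          refine lintegral_mono fun r => ?_
          rw [← sq_abs (metricSpeed y r), ENNReal.ofReal_pow (abs_nonneg _)]
          gcongr
          exact le_abs_self _
      _ ≤ ENNReal.ofReal (b - a) * curveAction y a b := by
          gcongr
          exacts [ht.1.le, curveAction_anti_left y b ht.1.le]
  have h_cont : Continuous fun t => ENNReal.ofReal (dist (y t) (y b) ^ 2) :=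
    ENNReal.continuous_ofReal.comp ((hy.continuous.dist continuous_const).pow 2)
  refine le_of_tendsto ((h_cont.tendsto a).mono_left (nhdsWithin_le_nhds (s := Ioi a))) ?_
  filter_upwards [Ioo_mem_nhdsGT hab] with t ht using h_pos t ht

lemma IsACCurve.dist_sq_le (hy : IsACCurve y) (h_fin : curveAction y a c ≠ ⊤) (ha : 0 ≤ a)
    (hab : a ≤ b) (hbc : b ≤ c) : dist (y b) (y c) ^ 2 ≤
      (c - b) * ((curveAction y a c).toReal - (curveAction y a b).toReal) := by
  rcases hbc.eq_or_lt with rfl | hlt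
  · simp
  have h_add : curveAction y a c = curveAction y a b + curveAction y b c :=
    lintegral_Ioc_add hab hbc
  rw [h_add] at h_fin ⊢
  obtain ⟨h_left, h_right⟩ := ENNReal.add_ne_top.1 h_fin
  rw [ENNReal.toReal_add h_left h_right, add_sub_cancel_left]
  have h := hy.ofReal_dist_sq_le (ha.trans hab) hlt
  rw [← ENNReal.ofReal_toReal h_right, ← ENNReal.ofReal_mul (sub_nonneg.2 hbc)] at h
  exact (ENNReal.ofReal_le_ofReal_iff
    (mul_nonneg (sub_nonneg.2 hbc) ENNReal.toReal_nonneg)).1 h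

end Curve

section EnergyDissipation

variable {Y : Type*} [MetricSpace Y] {E : Y → ℝ≥0∞} {K : ℝ} {y : ℝ → Y} {a b c : ℝ}

/-- The squared descending slope of `E` integrated along a curve on `(a, b]`. -/
noncomputable def slopeAction (E : Y → ℝ≥0∞) (y : ℝ → Y) (a b : ℝ) : ℝ≥0∞ :=
  ∫⁻ r in Ioc a b, descSlope E (y r) ^ 2

lemma IsGeodesicallyConvex.measurable_descSlope_comp (hE : IsGeodesicallyConvex E K)
    (hlsc : LowerSemicontinuous E) (hy : Continuous y) (h_dom : ∀ t, E (y t) < ⊤) :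
    Measurable fun r => descSlope E (y r) := by
  refine LowerSemicontinuous.measurable fun r c hc => ?_
  filter_upwards [hy.continuousAt.eventually (hE.eventually_lt_descSlope hlsc (h_dom r) hc)]
    with s hs using hs (h_dom s)

lemma ae_descSlope_ne_top (h_meas : Measurable fun r => descSlope E (y r))
    (h_slope : slopeAction E y a b ≠ ⊤) :
    ∀ᵐ r ∂(volume.restrict (Ioc a b)), descSlope E (y r) ≠ ⊤ :=
  (ae_lt_top (h_meas.pow_const 2) h_slope).mono fun r hr h_top => by simp [h_top] at hr

lemma intervalIntegrable_sq_toReal_descSlope (h_meas : Measurable fun r => descSlope E (y r))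
    (hab : a ≤ b) (h_slope : slopeAction E y a b ≠ ⊤) :
    IntervalIntegrable (fun r => (descSlope E (y r)).toReal ^ 2) volume a b := by
  simp only [← ENNReal.toReal_pow]
  exact (intervalIntegrable_iff_integrableOn_Ioc_of_le hab).2
    (integrable_toReal_of_lintegral_ne_top (h_meas.pow_const 2).aemeasurable h_slope)

lemma integral_sq_toReal_descSlope (h_meas : Measurable fun r => descSlope E (y r))
    (hab : a ≤ b) (h_slope : slopeAction E y a b ≠ ⊤) :
    ∫ r in a..b, (descSlope E (y r)).toReal ^ 2 = (slopeAction E y a b).toReal := by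
  simp only [← ENNReal.toReal_pow, intervalIntegral.integral_of_le hab]
  exact integral_toReal (h_meas.pow_const 2).aemeasurable
    (ae_lt_top (h_meas.pow_const 2) h_slope)

lemma intervalIntegrable_toReal_comp_of_lowerSemicontinuous (hlsc : LowerSemicontinuous E)
    (hy : Continuous y) {M : ℝ≥0∞} (hM : M ≠ ⊤) (h_le : ∀ t, E (y t) ≤ M) (a b : ℝ) :
    IntervalIntegrable (fun t => (E (y t)).toReal) volume a b := by
  refine (intervalIntegrable_const (c := M.toReal)).mono_fun
    (hlsc.comp hy).measurable.ennreal_toReal.aestronglyMeasurable (Eventually.of_forall fun t => ?_)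
  simp only [Real.norm_of_nonneg ENNReal.toReal_nonneg]
  exact ENNReal.toReal_mono hM (h_le t)

lemma lowerSemicontinuous_toReal {Z : Type*} [TopologicalSpace Z] {f : Z → ℝ≥0∞}
    (hf : LowerSemicontinuous f) (h_dom : ∀ z, f z < ⊤) :
    LowerSemicontinuous fun z => (f z).toReal := by
  intro z c hc
  rcases lt_or_ge c 0 with hc0 | hc0
  · exact Eventually.of_forall fun w => hc0.trans_le ENNReal.toReal_nonneg
  · filter_upwards [hf z _ ((ENNReal.ofReal_lt_iff_lt_toReal hc0 (h_dom z).ne).2 hc)]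
      with w hw using (ENNReal.ofReal_lt_iff_lt_toReal hc0 (h_dom w).ne).1 hw

lemma IsGeodesicallyConvex.ae_toReal_sub_le (hE : IsGeodesicallyConvex E K) (hy : IsACCurve y)
    (h_dom : ∀ t, E (y t) < ⊤) (ha : 0 ≤ a) (h_action : curveAction y a b ≠ ⊤)
    (h_slope : ∀ᵐ r ∂(volume.restrict (Ioc a b)), descSlope E (y r) ≠ ⊤) :
    ∀ᵐ r ∂(volume.restrict (Ioc a b)), ∀ t ∈ Icc r b, ∀ h : ℝ, 0 < h → t - r ≤ h →
      (E (y r)).toReal - (E (y t)).toReal ≤ h / 2 * (descSlope E (y r)).toReal ^ 2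
        + (1 / 2 + |K| / 2 * h) *
          ((curveAction y a t).toReal - (curveAction y a r).toReal) := by
  filter_upwards [h_slope, ae_restrict_mem measurableSet_Ioc] with r h_top hrm t ht h hh hth
  refine le_half_mul_sq_add_of_sq_le
    (hE.toReal_sub_le_descSlope_mul (h_dom r) (h_dom t) h_top)
    (hy.dist_sq_le ?_ ha hrm.1.le ht.1) ?_ (by positivity) hh hth
  · exact ne_top_of_le_ne_top h_action (curveAction_mono_right y a ht.2)
  · exact sub_nonneg.2 (monotoneOn_toReal_curveAction h_action ⟨hrm.1.le, hrm.2⟩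
      ⟨hrm.1.le.trans ht.1, ht.2⟩ ht.1)

/-- The descending slope is an upper gradient along absolutely continuous curves. -/
lemma IsGeodesicallyConvex.le_add_half_action (hE : IsGeodesicallyConvex E K)
    (hlsc : LowerSemicontinuous E) (hy : IsACCurve y) {M : ℝ≥0∞} (hM : M ≠ ⊤)
    (h_le : ∀ t, E (y t) ≤ M) (ha : 0 ≤ a) (hab : a < b) (h_action : curveAction y a b ≠ ⊤)
    (h_slope : slopeAction E y a b ≠ ⊤) :
    E (y a) ≤ E (y b) + curveAction y a b / 2 + slopeAction E y a b / 2 := by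
  have h_dom : ∀ t, E (y t) < ⊤ := fun t => (h_le t).trans_lt hM.lt_top
  have h_meas := hE.measurable_descSlope_comp hlsc hy.continuous h_dom
  have h_real := sub_le_of_ae_increment_le hab
    (intervalIntegrable_toReal_comp_of_lowerSemicontinuous hlsc hy.continuous hM h_le a b)
    (monotoneOn_toReal_curveAction h_action)
    (intervalIntegrable_sq_toReal_descSlope h_meas hab.le h_slope)
    (hE.ae_toReal_sub_le hy h_dom ha h_action (ae_descSlope_ne_top h_meas h_slope))
    (by positivity)
    ((lowerSemicontinuous_toReal (hlsc.comp hy.continuous) h_dom).lowerSemicontinuousAt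
      a |>.lowerSemicontinuousWithinAt _)
  rw [integral_sq_toReal_descSlope h_meas hab.le h_slope] at h_real
  have h_zero : (curveAction y a a).toReal = 0 := by simp [curveAction]
  have h_sum_ne_top : E (y b) + curveAction y a b / 2 + slopeAction E y a b / 2 ≠ ⊤ := by
    finiteness [(h_dom b).ne]
  rw [← ENNReal.toReal_le_toReal (h_dom a).ne h_sum_ne_top,
    ENNReal.toReal_add (by finiteness [(h_dom b).ne]) (by finiteness),
    ENNReal.toReal_add (h_dom b).ne (by finiteness), ENNReal.toReal_div, ENNReal.toReal_div,
    ENNReal.toReal_ofNat]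
  linarith

/-- A gradient flow of `E` in the energy dissipation sense, extended constantly to negative
times. -/
structure IsEDEFlow (E : Y → ℝ≥0∞) (y : ℝ → Y) : Prop extends IsACCurve y where
  lt_top : ∀ t, E (y t) < ⊤
  eq_zero_of_nonpos : ∀ t ≤ 0, y t = y 0
  energy_eq : ∀ t s, 0 ≤ t → t ≤ s →
    E (y t) = E (y s) + curveAction y t s / 2 + slopeAction E y t s / 2

end EnergyDissipation

section MinimizingMovement

variable {Y : Type*} [MetricSpace Y] {E : Y → ℝ≥0∞} {K τ : ℝ} {y z : Y}

/-- `z` is a minimizer of the Moreau–Yosida functional `E + d(·, y)² / (2 τ)`, that is, an implicit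
Euler step of size `τ` from `y` for the gradient flow of `E`. -/
def IsResolvent (E : Y → ℝ≥0∞) (τ : ℝ) (y z : Y) : Prop :=
  ∀ w, E z + ENNReal.ofReal (dist z y ^ 2 / (2 * τ))
    ≤ E w + ENNReal.ofReal (dist w y ^ 2 / (2 * τ))

lemma exists_isResolvent [CompactSpace Y] (hlsc : LowerSemicontinuous E) (τ : ℝ) (y : Y) :
    ∃ z, IsResolvent E τ y z := by
  have h_lsc : LowerSemicontinuous fun z => E z + ENNReal.ofReal (dist z y ^ 2 / (2 * τ)) :=
    hlsc.add (ENNReal.continuous_ofReal.comp (by fun_prop)).lowerSemicontinuous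
  obtain ⟨z, -, hz⟩ := (h_lsc.lowerSemicontinuousOn univ).exists_isMinOn ⟨y, mem_univ y⟩
    isCompact_univ
  exact ⟨z, fun w => hz (mem_univ w)⟩

namespace IsResolvent

lemma lt_top (hz : IsResolvent E τ y z) (hy : E y < ⊤) : E z < ⊤ :=
  le_self_add.trans_lt ((hz y).trans_lt (by simpa using hy))

lemma toReal_add_le (hz : IsResolvent E τ y z) (hτ : 0 ≤ τ) (hzE : E z < ⊤) {w : Y}
    (hw : E w < ⊤) :
    (E z).toReal + dist z y ^ 2 / (2 * τ) ≤ (E w).toReal + dist w y ^ 2 / (2 * τ) := by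
  have h := ENNReal.toReal_mono (by finiteness) (hz w)
  rwa [ENNReal.toReal_add hzE.ne ENNReal.ofReal_ne_top,
    ENNReal.toReal_add hw.ne ENNReal.ofReal_ne_top, ENNReal.toReal_ofReal (by positivity),
    ENNReal.toReal_ofReal (by positivity)] at h

lemma descSlope_le (hz : IsResolvent E τ y z) (hτ : 0 < τ) (hzE : E z < ⊤) :
    descSlope E z ≤ ENNReal.ofReal (dist y z / τ) := by
  have h_cont : Continuous fun w => ENNReal.ofReal ((dist w y + dist z y) / (2 * τ)) :=
    ENNReal.continuous_ofReal.comp (by fun_prop)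
  refine descSlope_le_of_tendsto ((h_cont.tendsto' z _ ?_).mono_left nhdsWithin_le_nhds) ?_
  · rw [dist_comm z y, ← two_mul, mul_div_mul_left _ _ two_ne_zero]
  filter_upwards [eventually_mem_nhdsWithin] with w hwz
  have hd : 0 < dist z w := dist_pos.2 (Ne.symm hwz)
  rcases eq_or_ne (E w) ⊤ with hw | hw
  · simp [hw]
  rw [ennreal_sub_div_ofReal hzE.ne hw hd]
  refine ENNReal.ofReal_le_ofReal ((div_le_iff₀ hd).2 ?_)
  have h_triangle : dist w y - dist z y ≤ dist z w := by
    linarith [dist_triangle w z y, dist_comm w z]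
  calc (E z).toReal - (E w).toReal
      ≤ (dist w y - dist z y) * ((dist w y + dist z y) / (2 * τ)) := by
        rw [← mul_div_assoc, mul_comm, ← sq_sub_sq, sub_div]
        linarith [hz.toReal_add_le hτ.le hzE hw.lt_top]
    _ ≤ dist z w * ((dist w y + dist z y) / (2 * τ)) := by gcongr
    _ = (dist w y + dist z y) / (2 * τ) * dist z w := mul_comm _ _

lemma toReal_add_dist_sq_le (hz : IsResolvent E τ y z) (hE : IsGeodesicallyConvex E K)
    (hτ : 0 < τ) (hy : E y < ⊤) :
    (E z).toReal + (1 + K * τ / 2) * (dist y z ^ 2 / τ) ≤ (E y).toReal := by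
  obtain ⟨γ, hγ, h_conv⟩ := hE z y (hz.lt_top hy) hy
  let q : ℝ → ℝ := fun t =>
    (E z).toReal + (dist z y ^ 2 / (2 * τ) * (2 - t) + K / 2 * (1 - t) * dist z y ^ 2)
  have h_le : ∀ᶠ t in 𝓝[>] 0, q t ≤ (E y).toReal := by
    filter_upwards [Ioc_mem_nhdsGT one_pos] with t ht
    obtain ⟨h_top, h_ineq⟩ := h_conv t ⟨ht.1.le, ht.2⟩
    have h_min := hz.toReal_add_le hτ.le (hz.lt_top hy) h_top.lt_top
    rw [hγ.dist_right ⟨ht.1.le, ht.2⟩] at h_min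
    refine le_of_mul_le_mul_left ?_ ht.1
    calc t * q t = t * (E z).toReal + K / 2 * t * (1 - t) * dist z y ^ 2
          + (dist z y ^ 2 / (2 * τ) - ((1 - t) * dist z y) ^ 2 / (2 * τ)) := by
          simp only [q]; ring
      _ ≤ t * (E y).toReal := by linarith
  have h_lim : Tendsto q (𝓝[>] 0) (𝓝 (q 0)) :=
    ((by fun_prop : Continuous q).tendsto 0).mono_left nhdsWithin_le_nhds
  calc (E z).toReal + (1 + K * τ / 2) * (dist y z ^ 2 / τ) = q 0 := by
        simp only [q, dist_comm y z]; field_simp; ring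
    _ ≤ (E y).toReal := le_of_tendsto h_lim h_le

end IsResolvent

/-- `u` is a sequence of implicit Euler steps of size `τ` for `E`, starting in the domain of
`E`. -/
structure IsMinimizingMovement (E : Y → ℝ≥0∞) (τ : ℝ) (u : ℕ → Y) : Prop where
  zero_lt_top : E (u 0) < ⊤
  isResolvent : ∀ k, IsResolvent E τ (u k) (u (k + 1))

lemma exists_isMinimizingMovement [CompactSpace Y] (hlsc : LowerSemicontinuous E) (τ : ℝ)
    (hy : E y < ⊤) : ∃ u : ℕ → Y, u 0 = y ∧ IsMinimizingMovement E τ u := by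
  choose f hf using exists_isResolvent hlsc τ
  exact ⟨fun k => f^[k] y, rfl, hy, fun k => by
    simpa only [Function.iterate_succ_apply'] using hf (f^[k] y)⟩

lemma dist_sq_le_mul_sum_sq (u : ℕ → Y) {i j : ℕ} (hij : i ≤ j) :
    dist (u i) (u j) ^ 2 ≤
      ((j : ℝ) - i) * ∑ k ∈ Finset.Ico i j, dist (u k) (u (k + 1)) ^ 2 :=
  calc dist (u i) (u j) ^ 2 ≤ (∑ k ∈ Finset.Ico i j, dist (u k) (u (k + 1))) ^ 2 := by
        gcongr
        exact dist_le_Ico_sum_dist u hij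
    _ ≤ ((j : ℝ) - i) * ∑ k ∈ Finset.Ico i j, dist (u k) (u (k + 1)) ^ 2 := by
        refine sq_sum_le_card_mul_sum_sq.trans_eq ?_
        rw [Nat.card_Ico, Nat.cast_sub hij]

namespace IsMinimizingMovement

variable {u : ℕ → Y}

lemma lt_top (hu : IsMinimizingMovement E τ u) : ∀ k, E (u k) < ⊤
  | 0 => hu.zero_lt_top
  | k + 1 => (hu.isResolvent k).lt_top (hu.lt_top k)

lemma sum_sq_le (hu : IsMinimizingMovement E τ u) (hE : IsGeodesicallyConvex E K) (hτ : 0 < τ)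
    {i j : ℕ} (hij : i ≤ j) :
    (1 + K * τ / 2) * ∑ k ∈ Finset.Ico i j, dist (u k) (u (k + 1)) ^ 2
      ≤ τ * ((E (u i)).toReal - (E (u j)).toReal) := by
  have h_step : ∀ k, (1 + K * τ / 2) * dist (u k) (u (k + 1)) ^ 2
      ≤ τ * ((E (u k)).toReal - (E (u (k + 1))).toReal) := fun k => by
    have h := (hu.isResolvent k).toReal_add_dist_sq_le hE hτ (hu.lt_top k)
    rw [← mul_div_assoc] at h
    exact (div_le_iff₀' hτ).1 (by linarith)
  have h_tele := Finset.sum_Ico_sub (fun k => (E (u k)).toReal) hij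
  calc (1 + K * τ / 2) * ∑ k ∈ Finset.Ico i j, dist (u k) (u (k + 1)) ^ 2
      ≤ τ * ∑ k ∈ Finset.Ico i j, ((E (u k)).toReal - (E (u (k + 1))).toReal) := by
        simp only [Finset.mul_sum]
        exact Finset.sum_le_sum fun k _ => h_step k
    _ = τ * ((E (u i)).toReal - (E (u j)).toReal) := by
        rw [← neg_sub, ← h_tele, ← Finset.sum_neg_distrib]
        simp only [neg_sub]

lemma dist_sq_le (hu : IsMinimizingMovement E τ u) (hE : IsGeodesicallyConvex E K) (hτ : 0 < τ)
    (hKτ : 0 ≤ 1 + K * τ / 2) (i j : ℕ) :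
    (1 + K * τ / 2) * dist (u i) (u j) ^ 2
      ≤ (j * τ - i * τ) * ((E (u i)).toReal - (E (u j)).toReal) := by
  wlog hij : i ≤ j generalizing i j
  · rw [dist_comm]
    linarith [this j i (le_of_not_ge hij)]
  have hn : (0 : ℝ) ≤ (j : ℝ) - i := sub_nonneg.2 (by exact_mod_cast hij)
  calc (1 + K * τ / 2) * dist (u i) (u j) ^ 2
      ≤ (1 + K * τ / 2) *
          (((j : ℝ) - i) * ∑ k ∈ Finset.Ico i j, dist (u k) (u (k + 1)) ^ 2) :=
        mul_le_mul_of_nonneg_left (dist_sq_le_mul_sum_sq u hij) hKτ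
    _ = ((j : ℝ) - i) *
          ((1 + K * τ / 2) * ∑ k ∈ Finset.Ico i j, dist (u k) (u (k + 1)) ^ 2) := by ring
    _ ≤ ((j : ℝ) - i) * (τ * ((E (u i)).toReal - (E (u j)).toReal)) :=
        mul_le_mul_of_nonneg_left (hu.sum_sq_le hE hτ hij) hn
    _ = (j * τ - i * τ) * ((E (u i)).toReal - (E (u j)).toReal) := by ring

lemma antitone (hu : IsMinimizingMovement E τ u) (hE : IsGeodesicallyConvex E K) (hτ : 0 < τ)
    (hKτ : 0 ≤ 1 + K * τ / 2) : Antitone fun k => (E (u k)).toReal := by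
  refine antitone_nat_of_succ_le fun k => ?_
  have h := (hu.isResolvent k).toReal_add_dist_sq_le hE hτ (hu.lt_top k)
  linarith [mul_nonneg hKτ (show 0 ≤ dist (u k) (u (k + 1)) ^ 2 / τ by positivity)]

lemma dist_sq_add_le (hu : IsMinimizingMovement E τ u) (hE : IsGeodesicallyConvex E K)
    (hτ : 0 < τ) (hKτ : 0 ≤ 1 + K * τ / 2) {i j : ℕ} (hij : i ≤ j) {c : ℝ≥0}
    (h_slope : ∀ k, i < k → k ≤ j → c ≤ descSlope E (u k)) :
    (1 + K * τ / 2) * (dist (u i) (u j) ^ 2 + (j * τ - i * τ) ^ 2 * c ^ 2)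
      ≤ 2 * (j * τ - i * τ) * ((E (u i)).toReal - (E (u j)).toReal) := by
  have hn : (0 : ℝ) ≤ (j : ℝ) - i := sub_nonneg.2 (by exact_mod_cast hij)
  have h_sum : ((j : ℝ) - i) * (τ * c) ^ 2
      ≤ ∑ k ∈ Finset.Ico i j, dist (u k) (u (k + 1)) ^ 2 :=
    calc ((j : ℝ) - i) * (τ * c) ^ 2 = ∑ k ∈ Finset.Ico i j, (τ * c) ^ 2 := by
          rw [Finset.sum_const, Nat.card_Ico, nsmul_eq_mul, Nat.cast_sub hij]
      _ ≤ _ := by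
          refine Finset.sum_le_sum fun k hk => ?_
          rw [Finset.mem_Ico] at hk
          have h := (h_slope (k + 1) (by omega) (by omega)).trans
            ((hu.isResolvent k).descSlope_le hτ (hu.lt_top _))
          rw [← ENNReal.ofReal_coe_nnreal, ENNReal.ofReal_le_ofReal_iff (by positivity),
            le_div_iff₀' hτ] at h
          gcongr
  have h_energy : (1 + K * τ / 2) * ((j * τ - i * τ) ^ 2 * c ^ 2)
      ≤ (j * τ - i * τ) * ((E (u i)).toReal - (E (u j)).toReal) :=
    calc (1 + K * τ / 2) * ((j * τ - i * τ) ^ 2 * c ^ 2)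
        = ((j : ℝ) - i) * ((1 + K * τ / 2) * (((j : ℝ) - i) * (τ * c) ^ 2)) := by ring
      _ ≤ ((j : ℝ) - i) *
          ((1 + K * τ / 2) * ∑ k ∈ Finset.Ico i j, dist (u k) (u (k + 1)) ^ 2) := by gcongr
      _ ≤ ((j : ℝ) - i) * (τ * ((E (u i)).toReal - (E (u j)).toReal)) :=
        mul_le_mul_of_nonneg_left (hu.sum_sq_le hE hτ hij) hn
      _ = (j * τ - i * τ) * ((E (u i)).toReal - (E (u j)).toReal) := by ring
  linarith [hu.dist_sq_le hE hτ hKτ i j]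

end IsMinimizingMovement

end MinimizingMovement

section DissipativeCurve

variable {Y : Type*} [MetricSpace Y] {E : Y → ℝ≥0∞} {K : ℝ}

/-- The piecewise constant interpolation of a sequence of points indexed by the multiples of the
time step `τ`. -/
noncomputable def stepInterpolation (u : ℕ → Y) (τ t : ℝ) : Y := u ⌊t / τ⌋₊

/-- `y` dissipates energy at the rate of a gradient flow of `E`, the energy being measured by a
nonincreasing function `e ≥ E ∘ y`. This is what passes to the limit from minimizing movements:
`e` is the limit of the discrete energies, and whether it equals `E ∘ y` is not known beforehand. -/
structure IsDissipativeCurve (E : Y → ℝ≥0∞) (y : ℝ → Y) (e : ℝ → ℝ) : Prop where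
  le_ofReal : ∀ t, E (y t) ≤ ENNReal.ofReal (e t)
  zero_eq_ofReal : E (y 0) = ENNReal.ofReal (e 0)
  eq_zero_of_nonpos : ∀ t ≤ 0, y t = y 0
  nonneg : ∀ t, 0 ≤ e t
  antitone : Antitone e
  dist_sq_le : ∀ s t, dist (y s) (y t) ^ 2 ≤ (t - s) * (e s - e t)
  dissipation : ∀ r, 0 < r → ∀ c : ℝ≥0, c < descSlope E (y r) →
    ∀ᶠ s in 𝓝 r, dist (y s) (y r) ^ 2 + (s - r) ^ 2 * c ^ 2 ≤ 2 * (s - r) * (e r - e s)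

lemma abs_floor_div_mul_sub_max_le {τ : ℝ} (hτ : 0 < τ) (t : ℝ) :
    |⌊t / τ⌋₊ * τ - max t 0| ≤ τ := by
  rcases le_total t 0 with ht | ht
  · simp [Nat.floor_of_nonpos (div_nonpos_of_nonpos_of_nonneg ht hτ.le), ht, hτ.le]
  · have h_le := (le_div_iff₀ hτ).1 (Nat.floor_le (div_nonneg ht hτ.le))
    have h_lt := (div_lt_iff₀ hτ).1 (Nat.lt_floor_add_one (t / τ))
    rw [max_eq_left ht, abs_le]
    constructor <;> linarith

lemma le_ofReal_of_tendsto_toReal {Z ι : Type*} [TopologicalSpace Z] {f : Z → ℝ≥0∞}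
    (hf : LowerSemicontinuous f) {l : Filter ι} [l.NeBot] {z : ι → Z} {x : Z} {e : ℝ}
    (hz : Tendsto z l (𝓝 x)) (he : Tendsto (fun n => (f (z n)).toReal) l (𝓝 e))
    (h_dom : ∀ n, f (z n) < ⊤) : f x ≤ ENNReal.ofReal e := by
  have h_lim : Tendsto (fun n => f (z n)) l (𝓝 (ENNReal.ofReal e)) :=
    ((ENNReal.continuous_ofReal.tendsto e).comp he).congr fun n =>
      ENNReal.ofReal_toReal (h_dom n).ne
  refine le_of_forall_lt fun a ha => ?_
  obtain ⟨b, hab, hb⟩ := exists_between ha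
  exact hab.trans_le (ge_of_tendsto h_lim ((hz.eventually (hf x b hb)).mono fun _ => le_of_lt))

section Limit

variable {ι : Type*} {l : Filter ι} {u : ι → ℕ → Y} {τ : ι → ℝ} {y : ℝ → Y} {e : ℝ → ℝ} {r : ℝ}

lemma tendsto_floor_div_mul (hτ : Tendsto τ l (𝓝[>] 0)) (t : ℝ) :
    Tendsto (fun n => ⌊t / τ n⌋₊ * τ n) l (𝓝 (max t 0)) := by
  obtain ⟨hτ_zero, hτ_pos⟩ := tendsto_nhdsWithin_iff.1 hτ
  exact tendsto_iff_dist_tendsto_zero.2 (squeeze_zero' (Eventually.of_forall fun _ => dist_nonneg)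
    (hτ_pos.mono fun n hn => abs_floor_div_mul_sub_max_le hn t) hτ_zero)

lemma tendsto_one_add_mul_div_two (hτ : Tendsto τ l (𝓝[>] 0)) (K : ℝ) :
    Tendsto (fun n => 1 + K * τ n / 2) l (𝓝 1) := by
  have h_lim : Tendsto (fun t : ℝ => 1 + K * t / 2) (𝓝 0) (𝓝 1) :=
    Continuous.tendsto' (by fun_prop) 0 1 (by simp)
  exact h_lim.comp (tendsto_nhdsWithin_iff.1 hτ).1

lemma eventually_le_one_add_mul_div_two (hτ : Tendsto τ l (𝓝[>] 0)) (K : ℝ) :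
    ∀ᶠ n in l, 0 < τ n ∧ 1 / 2 ≤ 1 + K * τ n / 2 :=
  Eventually.and (tendsto_nhdsWithin_iff.1 hτ).2
    ((tendsto_one_add_mul_div_two hτ K).eventually_const_le (by norm_num))

lemma IsGeodesicallyConvex.exists_eventually_forall_dist_lt (hE : IsGeodesicallyConvex E K)
    (hu : ∀ n, IsMinimizingMovement E (τ n) (u n)) (hτ : Tendsto τ l (𝓝[>] 0)) {M : ℝ}
    (hM : ∀ n, (E (u n 0)).toReal ≤ M) {x : Y}
    (hx : Tendsto (fun n => stepInterpolation (u n) (τ n) r) l (𝓝 x)) (hr : 0 ≤ r) {ρ : ℝ}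
    (hρ : 0 < ρ) :
    ∃ δ > 0, ∀ᶠ n in l, ∀ k : ℕ, |k * τ n - r| < δ → dist (u n k) x < ρ := by
  rcases l.eq_or_neBot with rfl | hl
  · exact ⟨1, one_pos, eventually_bot⟩
  obtain ⟨n₀⟩ := l.nonempty_of_neBot
  have hM_nonneg : 0 ≤ M := ENNReal.toReal_nonneg.trans (hM n₀)
  let δ := (ρ / 2) ^ 2 / (4 * (M + 1))
  have hδ : 4 * δ * (M + 1) = (ρ / 2) ^ 2 := by simp only [δ]; field_simp
  have hδ_pos : 0 < δ := by positivity
  refine ⟨δ, hδ_pos, ?_⟩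
  filter_upwards [eventually_le_one_add_mul_div_two hτ K,
    hx.eventually (Metric.ball_mem_nhds x (half_pos hρ)),
    (tendsto_nhdsWithin_iff.1 hτ).1.eventually_lt_const hδ_pos] with n ⟨hτn, hκ⟩ hxn hτδ k hk
  have h_time : |⌊r / τ n⌋₊ * τ n - k * τ n| ≤ 2 * δ := by
    have h_floor := abs_floor_div_mul_sub_max_le hτn r
    rw [max_eq_left hr] at h_floor
    linarith [abs_sub_le (⌊r / τ n⌋₊ * τ n) r (k * τ n), abs_sub_comm r (k * τ n)]
  have h_energy : |(E (u n k)).toReal - (E (u n ⌊r / τ n⌋₊)).toReal| ≤ M := by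
    have h_anti := (hu n).antitone hE hτn (by linarith)
    exact abs_sub_le_of_nonneg_of_le ENNReal.toReal_nonneg ((h_anti k.zero_le).trans (hM n))
      ENNReal.toReal_nonneg ((h_anti (Nat.zero_le _)).trans (hM n))
  have h_dist : dist (u n k) (u n ⌊r / τ n⌋₊) < ρ / 2 := by
    refine lt_of_pow_lt_pow_left₀ 2 (by positivity) ?_
    have h_mul : 1 / 2 * dist (u n k) (u n ⌊r / τ n⌋₊) ^ 2 ≤ 2 * δ * M :=
      calc 1 / 2 * dist (u n k) (u n ⌊r / τ n⌋₊) ^ 2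
          ≤ (1 + K * τ n / 2) * dist (u n k) (u n ⌊r / τ n⌋₊) ^ 2 := by gcongr
        _ ≤ _ := (hu n).dist_sq_le hE hτn (by linarith) _ _
        _ ≤ _ := (le_abs_self _).trans_eq (abs_mul _ _)
        _ ≤ 2 * δ * M := by gcongr
    linarith
  have h_floor : dist (u n ⌊r / τ n⌋₊) x < ρ / 2 := hxn
  linarith [dist_triangle (u n k) (u n ⌊r / τ n⌋₊) x]

lemma IsGeodesicallyConvex.tendsto_dist_sq_le [l.NeBot] (hE : IsGeodesicallyConvex E K)
    (hu : ∀ n, IsMinimizingMovement E (τ n) (u n)) (hτ : Tendsto τ l (𝓝[>] 0))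
    (hy : ∀ t, Tendsto (fun n => stepInterpolation (u n) (τ n) t) l (𝓝 (y t)))
    (he : ∀ t, Tendsto (fun n => (E (stepInterpolation (u n) (τ n) t)).toReal) l (𝓝 (e t)))
    (s t : ℝ) : dist (y s) (y t) ^ 2 ≤ (max t 0 - max s 0) * (e s - e t) := by
  have h_left := (tendsto_one_add_mul_div_two hτ K).mul (((hy s).dist (hy t)).pow 2)
  rw [one_mul] at h_left
  refine le_of_tendsto_of_tendsto h_left
    (((tendsto_floor_div_mul hτ t).sub (tendsto_floor_div_mul hτ s)).mul ((he s).sub (he t))) ?_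
  filter_upwards [eventually_le_one_add_mul_div_two hτ K] with n ⟨hτn, hκ⟩
  exact (hu n).dist_sq_le hE hτn (by linarith) _ _

lemma IsGeodesicallyConvex.tendsto_dist_sq_add_le [l.NeBot] (hE : IsGeodesicallyConvex E K)
    (hu : ∀ n, IsMinimizingMovement E (τ n) (u n)) (hτ : Tendsto τ l (𝓝[>] 0))
    (hy : ∀ t, Tendsto (fun n => stepInterpolation (u n) (τ n) t) l (𝓝 (y t)))
    (he : ∀ t, Tendsto (fun n => (E (stepInterpolation (u n) (τ n) t)).toReal) l (𝓝 (e t)))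
    {s t : ℝ} (hs : 0 ≤ s) (hst : s ≤ t) {c : ℝ≥0}
    (hc : ∀ᶠ n in l, ∀ k : ℕ, s < k * τ n → k * τ n ≤ t → c ≤ descSlope E (u n k)) :
    dist (y s) (y t) ^ 2 + (t - s) ^ 2 * c ^ 2 ≤ 2 * (t - s) * (e s - e t) := by
  have h_time := (tendsto_floor_div_mul hτ t).sub (tendsto_floor_div_mul hτ s)
  rw [max_eq_left hs, max_eq_left (hs.trans hst)] at h_time
  have h_left := (tendsto_one_add_mul_div_two hτ K).mul ((((hy s).dist (hy t)).pow 2).add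
    ((h_time.pow 2).mul_const ((c : ℝ) ^ 2)))
  rw [one_mul] at h_left
  refine le_of_tendsto_of_tendsto h_left ((h_time.const_mul 2).mul ((he s).sub (he t))) ?_
  filter_upwards [eventually_le_one_add_mul_div_two hτ K, hc] with n ⟨hτn, hκ⟩ hcn
  refine (hu n).dist_sq_add_le hE hτn (by linarith)
    (Nat.floor_mono (div_le_div_of_nonneg_right hst hτn.le)) fun k hsk hkt => hcn k ?_ ?_
  · exact (div_lt_iff₀ hτn).1 (Nat.lt_of_floor_lt hsk)
  · exact (le_div_iff₀ hτn).1
      ((Nat.le_floor_iff (div_nonneg (hs.trans hst) hτn.le)).1 hkt)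

lemma IsGeodesicallyConvex.tendsto_dissipation [l.NeBot] (hE : IsGeodesicallyConvex E K)
    (hlsc : LowerSemicontinuous E) (hu : ∀ n, IsMinimizingMovement E (τ n) (u n))
    (hτ : Tendsto τ l (𝓝[>] 0)) {M : ℝ} (hM : ∀ n, (E (u n 0)).toReal ≤ M)
    (hy : ∀ t, Tendsto (fun n => stepInterpolation (u n) (τ n) t) l (𝓝 (y t)))
    (he : ∀ t, Tendsto (fun n => (E (stepInterpolation (u n) (τ n) t)).toReal) l (𝓝 (e t)))
    (hr : 0 < r) {c : ℝ≥0} (hc : c < descSlope E (y r)) :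
    ∀ᶠ s in 𝓝 r, dist (y s) (y r) ^ 2 + (s - r) ^ 2 * c ^ 2 ≤ 2 * (s - r) * (e r - e s) := by
  have h_dom : E (y r) < ⊤ :=
    (le_ofReal_of_tendsto_toReal hlsc (hy r) (he r) fun n => (hu n).lt_top _).trans_lt
      ENNReal.ofReal_lt_top
  obtain ⟨ρ, hρ, h_ball⟩ := Metric.eventually_nhds_iff.1 (hE.eventually_lt_descSlope hlsc h_dom hc)
  obtain ⟨δ, hδ, h_near⟩ := hE.exists_eventually_forall_dist_lt hu hτ hM (hy r) hr.le hρ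
  have h_slope : ∀ a b : ℝ, r - δ < a → b < r + δ →
      ∀ᶠ n in l, ∀ k : ℕ, a < k * τ n → k * τ n ≤ b → c ≤ descSlope E (u n k) := fun a b ha hb =>
    h_near.mono fun n hn k hka hkb =>
      (h_ball (hn k (abs_sub_lt_iff.2 ⟨by linarith, by linarith⟩)) ((hu n).lt_top k)).le
  filter_upwards [Ioo_mem_nhds (sub_lt_self r hδ) (lt_add_of_pos_right r hδ), lt_mem_nhds hr]
    with s hs hs_pos
  rcases le_total s r with hsr | hrs
  · linarith [hE.tendsto_dist_sq_add_le hu hτ hy he hs_pos.le hsr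
      (h_slope s r hs.1 (lt_add_of_pos_right r hδ))]
  · rw [dist_comm]
    exact hE.tendsto_dist_sq_add_le hu hτ hy he hr.le hrs
      (h_slope r s (sub_lt_self r hδ) hs.2)

lemma IsGeodesicallyConvex.isDissipativeCurve_of_tendsto [l.NeBot]
    (hE : IsGeodesicallyConvex E K) (hlsc : LowerSemicontinuous E)
    (hu : ∀ n, IsMinimizingMovement E (τ n) (u n)) (hτ : Tendsto τ l (𝓝[>] 0)) {y₀ : Y}
    (hu_zero : ∀ n, u n 0 = y₀)
    (hy : ∀ t, Tendsto (fun n => stepInterpolation (u n) (τ n) t) l (𝓝 (y t)))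
    (he : ∀ t, Tendsto (fun n => (E (stepInterpolation (u n) (τ n) t)).toReal) l (𝓝 (e t))) :
    IsDissipativeCurve E y e ∧ y 0 = y₀ := by
  have hτ_pos : ∀ᶠ n in l, 0 < τ n := (tendsto_nhdsWithin_iff.1 hτ).2
  have h_start : ∀ t ≤ 0, ∀ᶠ n in l, stepInterpolation (u n) (τ n) t = y₀ := fun t ht => by
    filter_upwards [hτ_pos] with n hn
    rw [stepInterpolation, Nat.floor_of_nonpos (div_nonpos_of_nonpos_of_nonneg ht hn.le), hu_zero]
  have hy_start : ∀ t ≤ 0, y t = y₀ := fun t ht =>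
    tendsto_nhds_unique (hy t) (tendsto_nhds_of_eventually_eq (h_start t ht))
  have he_zero : e 0 = (E y₀).toReal := tendsto_nhds_unique (he 0)
    (tendsto_nhds_of_eventually_eq ((h_start 0 le_rfl).mono fun n hn => by rw [hn]))
  have hy₀ : E y₀ < ⊤ := by
    obtain ⟨n⟩ := l.nonempty_of_neBot
    exact hu_zero n ▸ (hu n).zero_lt_top
  have he_anti : Antitone e := fun s t hst => by
    refine le_of_tendsto_of_tendsto (he t) (he s) ?_
    filter_upwards [eventually_le_one_add_mul_div_two hτ K] with n ⟨hτn, hκ⟩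
    exact (hu n).antitone hE hτn (by linarith)
      (Nat.floor_mono (div_le_div_of_nonneg_right hst hτn.le))
  refine ⟨⟨fun t => le_ofReal_of_tendsto_toReal hlsc (hy t) (he t) fun n => (hu n).lt_top _, ?_,
    fun t ht => (hy_start t ht).trans (hy_start 0 le_rfl).symm,
    fun t => ge_of_tendsto' (he t) fun n => ENNReal.toReal_nonneg, he_anti, fun s t => ?_,
    fun r hr c hc => hE.tendsto_dissipation hlsc hu hτ (fun n => by rw [hu_zero]) hy he hr hc⟩,
    hy_start 0 le_rfl⟩
  · rw [hy_start 0 le_rfl, he_zero, ENNReal.ofReal_toReal hy₀.ne]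
  · wlog hst : s ≤ t generalizing s t
    · rw [dist_comm]
      linarith [this t s (le_of_not_ge hst)]
    have h_time : max t 0 - max s 0 ≤ t - s := by
      have := max_sub_max_le_max t 0 s 0
      rwa [sub_self, max_eq_left (sub_nonneg.2 hst)] at this
    exact (hE.tendsto_dist_sq_le hu hτ hy he s t).trans
      (mul_le_mul_of_nonneg_right h_time (sub_nonneg.2 (he_anti hst)))

end Limit

theorem IsGeodesicallyConvex.exists_isDissipativeCurve [CompactSpace Y]
    (hE : IsGeodesicallyConvex E K) (hlsc : LowerSemicontinuous E) {y₀ : Y} (hy₀ : E y₀ < ⊤) :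
    ∃ y e, IsDissipativeCurve E y e ∧ y 0 = y₀ := by
  let τ : ℕ → ℝ := fun n => 1 / ((n : ℝ) + 1)
  have hτ_pos : ∀ n, 0 < τ n := fun n => by positivity
  have hτ : Tendsto τ (hyperfilter ℕ) (𝓝[>] 0) := tendsto_nhdsWithin_iff.2
    ⟨tendsto_one_div_add_atTop_nhds_zero_nat.mono_left Nat.hyperfilter_le_atTop,
      Eventually.of_forall hτ_pos⟩
  choose u hu_zero hu using fun n => exists_isMinimizingMovement hlsc (τ n) hy₀
  have h_le : ∀ᶠ n in hyperfilter ℕ, ∀ k, (E (u n k)).toReal ≤ (E y₀).toReal := by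
    filter_upwards [eventually_le_one_add_mul_div_two hτ K] with n ⟨hτn, hκ⟩ k
    simpa only [hu_zero] using (hu n).antitone hE hτn (by linarith) k.zero_le
  have h_energy : ∀ t, ∃ x, Tendsto (fun n => (E (stepInterpolation (u n) (τ n) t)).toReal)
      (hyperfilter ℕ) (𝓝 x) := fun t => by
    let U := (hyperfilter ℕ).map fun n => (E (stepInterpolation (u n) (τ n) t)).toReal
    obtain ⟨x, -, hx⟩ := (isCompact_Icc (a := 0) (b := (E y₀).toReal)).ultrafilter_le_nhds U
      (le_principal_iff.2 (h_le.mono fun n hn => ⟨ENNReal.toReal_nonneg, hn _⟩))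
    exact ⟨x, hx⟩
  choose e he using h_energy
  exact ⟨_, e, hE.isDissipativeCurve_of_tendsto hlsc hu hτ hu_zero
    (fun t => ((hyperfilter ℕ).map fun n => stepInterpolation (u n) (τ n) t).le_nhds_lim) he⟩

end DissipativeCurve

section Antitone

variable {Y : Type*} [PseudoMetricSpace Y] {y : ℝ → Y} {e : ℝ → ℝ} {a b r : ℝ}

lemma mem_uIoc_map_of_antitone {α β : Type*} [LinearOrder α] [LinearOrder β] {f : α → β}
    (hf : Antitone f) {p q : α} {x : β} (hx : x ∈ uIoc (f p) (f q)) :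
    f (max p q) < x ∧ x ≤ f (min p q) := by
  rwa [hf.map_max, hf.map_min]

lemma disjoint_uIoc_map_of_antitone {α β : Type*} [LinearOrder α] [LinearOrder β] {f : α → β}
    (hf : Antitone f) {p q p' q' : α} (h : Disjoint (uIoc p q) (uIoc p' q')) :
    Disjoint (uIoc (f p) (f q)) (uIoc (f p') (f q')) := by
  refine Set.disjoint_left.2 fun x hx hx' => ?_
  have h_mem := mem_uIoc_map_of_antitone hf hx
  have h_mem' := mem_uIoc_map_of_antitone hf hx'
  have h_left : min (max p q) (max p' q') ∈ uIoc p q :=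
    ⟨lt_min (hf.reflect_lt (h_mem.1.trans_le h_mem.2))
      (hf.reflect_lt (h_mem'.1.trans_le h_mem.2)), min_le_left _ _⟩
  have h_right : min (max p q) (max p' q') ∈ uIoc p' q' :=
    ⟨lt_min (hf.reflect_lt (h_mem.1.trans_le h_mem'.2))
      (hf.reflect_lt (h_mem'.1.trans_le h_mem'.2)), min_le_right _ _⟩
  exact Set.disjoint_left.1 h h_left h_right

lemma sum_dist_le_of_antitone (he : Antitone e) (hab : a ≤ b) {I : ℕ × (ℕ → ℝ × ℝ)}
    (hI : I ∈ AbsolutelyContinuousOnInterval.disjWithin a b) :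
    ∑ i ∈ Finset.range I.1, dist (e (I.2 i).1) (e (I.2 i).2) ≤ e a - e b := by
  have h_disj : (Finset.range I.1 : Set ℕ).PairwiseDisjoint
      fun i => uIoc (e (I.2 i).1) (e (I.2 i).2) := fun i hi j hj hij =>
    disjoint_uIoc_map_of_antitone he (hI.2 hi hj hij)
  have h_subset : (⋃ i ∈ Finset.range I.1, uIoc (e (I.2 i).1) (e (I.2 i).2)) ⊆ Icc (e b) (e a) := by
    refine iUnion₂_subset fun i hi => uIoc_subset_uIcc.trans ?_
    obtain ⟨h_fst, h_snd⟩ := hI.1 i hi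
    rw [uIcc_of_le hab] at h_fst h_snd
    exact uIcc_subset_Icc ⟨he h_fst.2, he h_fst.1⟩ ⟨he h_snd.2, he h_snd.1⟩
  have h_vol := measure_mono (μ := volume) h_subset
  rw [measure_biUnion_finset h_disj (fun _ _ => measurableSet_uIoc), Real.volume_Icc] at h_vol
  simp only [Real.volume_uIoc, ← Real.dist_eq] at h_vol
  rw [← ENNReal.ofReal_sum_of_nonneg (fun _ _ => dist_nonneg),
    ENNReal.ofReal_le_ofReal_iff (sub_nonneg.2 (he hab))] at h_vol
  simpa only [dist_comm] using h_vol

lemma dist_le_of_dist_sq_le (h : ∀ s t, dist (y s) (y t) ^ 2 ≤ (t - s) * (e s - e t)) {l : ℝ}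
    (hl : 0 < l) (s t : ℝ) :
    dist (y s) (y t) ≤ 1 / (2 * l) * dist s t + l / 2 * dist (e s) (e t) := by
  refine le_of_sq_le_sq ?_ (by positivity)
  calc dist (y s) (y t) ^ 2 ≤ |(t - s) * (e s - e t)| := (h s t).trans (le_abs_self _)
    _ = dist s t * dist (e s) (e t) := by rw [abs_mul, dist_comm s, Real.dist_eq, Real.dist_eq]
    _ = 4 * (1 / (2 * l) * dist s t) * (l / 2 * dist (e s) (e t)) := by field_simp; ring
    _ ≤ (1 / (2 * l) * dist s t + l / 2 * dist (e s) (e t)) ^ 2 := four_mul_le_sq_add _ _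

lemma absolutelyContinuousOnInterval_of_dist_sq_le (he : Antitone e)
    (h : ∀ s t, dist (y s) (y t) ^ 2 ≤ (t - s) * (e s - e t)) (hab : a ≤ b) :
    AbsolutelyContinuousOnInterval y a b := by
  rw [absolutelyContinuousOnInterval_iff]
  intro ε hε
  let D := e a - e b
  have hD : 0 ≤ D := sub_nonneg.2 (he hab)
  let l := ε / (2 * (D + 1))
  have hl : 0 < l := by positivity
  refine ⟨l * ε, by positivity, fun I hI h_sum => ?_⟩
  calc ∑ i ∈ Finset.range I.1, dist (y (I.2 i).1) (y (I.2 i).2)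
      ≤ ∑ i ∈ Finset.range I.1, (1 / (2 * l) * dist (I.2 i).1 (I.2 i).2
          + l / 2 * dist (e (I.2 i).1) (e (I.2 i).2)) :=
        Finset.sum_le_sum fun i _ => dist_le_of_dist_sq_le h hl _ _
    _ = 1 / (2 * l) * ∑ i ∈ Finset.range I.1, dist (I.2 i).1 (I.2 i).2
          + l / 2 * ∑ i ∈ Finset.range I.1, dist (e (I.2 i).1) (e (I.2 i).2) := by
        rw [Finset.sum_add_distrib, ← Finset.mul_sum, ← Finset.mul_sum]
    _ < 1 / (2 * l) * (l * ε) + l / 2 * (D + 1) := by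
        refine add_lt_add_of_lt_of_le (mul_lt_mul_of_pos_left h_sum (by positivity)) ?_
        gcongr
        linarith [sum_dist_le_of_antitone he hab hI]
    _ = ε / 2 + ε / 4 := by
        simp only [l]
        field_simp
        ring
    _ ≤ ε := by linarith

lemma integrableOn_deriv_of_antitone (he : Antitone e) (hab : a ≤ b) :
    IntegrableOn (deriv e) (Ioc a b) := by
  have h_neg := (he.neg.monotoneOn (uIcc a b)).intervalIntegrable_deriv
  rw [intervalIntegrable_iff_integrableOn_Ioc_of_le hab] at h_neg
  simpa only [deriv.fun_neg, Pi.neg_def, neg_neg] using h_neg.neg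

lemma deriv_nonpos_of_antitone (he : Antitone e) : deriv e r ≤ 0 := by
  have h_nonneg := he.neg.deriv_nonneg (x := r)
  rwa [deriv.fun_neg, neg_nonneg] at h_nonneg

lemma lintegral_neg_deriv_le_of_antitone (he : Antitone e) (hab : a ≤ b) :
    ∫⁻ r in Ioc a b, ENNReal.ofReal (-deriv e r) ≤ ENNReal.ofReal (e a - e b) := by
  have h_mem := (he.neg.monotoneOn (uIcc a b)).intervalIntegral_deriv_mem_uIcc
  simp only [deriv.fun_neg, neg_sub_neg, uIcc_of_le (sub_nonneg.2 (he hab))] at h_mem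
  have h_int : IntegrableOn (fun r => -deriv e r) (Ioc a b) :=
    (integrableOn_deriv_of_antitone he hab).neg
  rw [← ofReal_integral_eq_lintegral_ofReal h_int
    (Eventually.of_forall fun r => neg_nonneg.2 (deriv_nonpos_of_antitone he)),
    ← intervalIntegral.integral_of_le hab]
  exact ENNReal.ofReal_le_ofReal h_mem.2

lemma ae_differentiableAt_of_antitone (he : Antitone e) : ∀ᵐ r, DifferentiableAt ℝ e r := by
  filter_upwards [he.neg.ae_differentiableAt] with r hr
  simpa only [neg_neg] using hr.fun_neg

lemma metricSpeed_sq_le_neg_deriv (hd : DifferentiableAt ℝ e r)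
    (h : ∀ᶠ s in 𝓝[≠] r, dist (y s) (y r) ^ 2 ≤ (s - r) * (e r - e s)) :
    HasBoundedSpeedAt y r ∧ metricSpeed y r ^ 2 ≤ -deriv e r := by
  have h_lim : Tendsto (fun h => (e r - e (r + h)) / h) (𝓝[≠] 0) (𝓝 (-deriv e r)) :=
    hd.hasDerivAt.tendsto_slope_zero.neg.congr fun h => by
      rw [smul_eq_mul, ← mul_neg, neg_sub, div_eq_inv_mul]
  have h_shift : Tendsto (fun h => r + h) (𝓝[≠] 0) (𝓝[≠] r) :=
    tendsto_nhdsWithin_iff.2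
      ⟨((continuous_const_add r).tendsto' 0 r (add_zero r)).mono_left nhdsWithin_le_nhds,
        eventually_mem_nhdsWithin.mono fun h hh => by simpa using hh⟩
  have h_sq : ∀ᶠ h in 𝓝[≠] (0 : ℝ),
      (dist (y (r + h)) (y r) / |h|) ^ 2 ≤ (e r - e (r + h)) / h := by
    filter_upwards [eventually_mem_nhdsWithin, h_shift.eventually h] with h (hh : h ≠ 0) h_le
    rw [div_pow, sq_abs, div_le_iff₀ (by positivity)]
    calc dist (y (r + h)) (y r) ^ 2 ≤ (r + h - r) * (e r - e (r + h)) := h_le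
      _ = (e r - e (r + h)) / h * h ^ 2 := by field_simp; ring
  have h_le : ∀ᶠ h in 𝓝[≠] (0 : ℝ),
      dist (y (r + h)) (y r) / |h| ≤ √((e r - e (r + h)) / h) :=
    h_sq.mono fun h => Real.le_sqrt_of_sq_le
  have h_nonneg : 0 ≤ -deriv e r :=
    ge_of_tendsto h_lim (h_sq.mono fun h hh => (sq_nonneg _).trans hh)
  have h_bdd : HasBoundedSpeedAt y r := h_lim.sqrt.isBoundedUnder_le.mono_le h_le
  exact ⟨h_bdd, (Real.le_sqrt h_bdd.metricSpeed_nonneg h_nonneg).1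
    (metricSpeed_le_of_tendsto h_lim.sqrt h_le)⟩

lemma integrableOn_sqrt {α : Type*} [MeasurableSpace α] {μ : Measure α} {s : Set α} {f : α → ℝ}
    (hf : IntegrableOn f s μ) (hs : μ s ≠ ⊤) : IntegrableOn (fun r => √(f r)) s μ := by
  refine ((integrableOn_const (C := (1 : ℝ)) hs).add hf.norm).mono'
    (Real.continuous_sqrt.comp_aestronglyMeasurable hf.aestronglyMeasurable)
    (Eventually.of_forall fun r => ?_)
  rw [Pi.add_apply, Real.norm_of_nonneg (Real.sqrt_nonneg _), Real.sqrt_le_left (by positivity)]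
  nlinarith [Real.le_norm_self (f r), norm_nonneg (f r)]

lemma continuous_of_dist_sq_le (he : Antitone e)
    (h : ∀ s t, dist (y s) (y t) ^ 2 ≤ (t - s) * (e s - e t)) : Continuous y := by
  refine continuous_iff_continuousAt.2 fun t => tendsto_iff_dist_tendsto_zero.2 ?_
  have h_lim : Tendsto (fun s => √(|t - s| * (e (t - 1) - e (t + 1)))) (𝓝 t) (𝓝 0) :=
    Continuous.tendsto' (by fun_prop) t 0 (by simp)
  refine squeeze_zero' (Eventually.of_forall fun _ => dist_nonneg) ?_ h_lim
  filter_upwards [Icc_mem_nhds (sub_one_lt t) (lt_add_one t)] with s hs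
  refine Real.le_sqrt_of_sq_le ((h s t).trans ((le_abs_self _).trans ?_))
  rw [abs_mul]
  gcongr
  exact abs_sub_le_iff.2 ⟨sub_le_sub (he hs.1) (he (lt_add_one t).le),
    sub_le_sub (he (sub_one_lt t).le) (he hs.2)⟩

lemma isACCurve_of_dist_sq_le (he : Antitone e)
    (h : ∀ s t, dist (y s) (y t) ^ 2 ≤ (t - s) * (e s - e t)) : IsACCurve y := by
  have h_speed : ∀ᵐ r, HasBoundedSpeedAt y r ∧ metricSpeed y r ^ 2 ≤ -deriv e r :=
    (ae_differentiableAt_of_antitone he).mono fun r hr =>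
      metricSpeed_sq_le_neg_deriv hr (Eventually.of_forall fun s => by linarith [h s r])
  have h_int : ∀ t s, t ≤ s → IntegrableOn (fun r => √(-deriv e r)) (Ioc t s) := fun t s hts =>
    integrableOn_sqrt (integrableOn_deriv_of_antitone he hts).neg measure_Ioc_lt_top.ne
  refine ⟨continuous_of_dist_sq_le he h, fun a b _ hab => ⟨fun r => √(-deriv e r),
    fun r => Real.sqrt_nonneg _,
    (integrableOn_Icc_iff_integrableOn_Ioc (by simp)).2 (h_int a b hab),
    fun t s _ hts _ => ?_⟩⟩
  have h_nonneg : ∀ᵐ r ∂(volume.restrict (Ioc t s)), 0 ≤ √(-deriv e r) :=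
    Eventually.of_forall fun r => Real.sqrt_nonneg _
  rw [intervalIntegral.integral_of_le hts,
    ← ENNReal.ofReal_le_ofReal_iff (integral_nonneg_of_ae h_nonneg),
    ofReal_integral_eq_lintegral_ofReal (h_int t s hts) h_nonneg]
  refine (ofReal_dist_le_lintegral_metricSpeed hts
    (absolutelyContinuousOnInterval_of_dist_sq_le he h hts)
    (ae_restrict_of_ae (h_speed.mono fun r => And.left))).trans
    (lintegral_mono_ae (ae_restrict_of_ae (h_speed.mono fun r hr => ?_)))
  exact ENNReal.ofReal_le_ofReal (Real.le_sqrt_of_sq_le hr.2)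

end Antitone

section Existence

variable {Y : Type*} [MetricSpace Y] {E : Y → ℝ≥0∞} {K : ℝ} {y : ℝ → Y} {e : ℝ → ℝ}
  {a b r t : ℝ}

namespace IsDissipativeCurve

lemma isACCurve (hy : IsDissipativeCurve E y e) : IsACCurve y :=
  isACCurve_of_dist_sq_le hy.antitone hy.dist_sq_le

lemma le_ofReal_zero (hy : IsDissipativeCurve E y e) (t : ℝ) :
    E (y t) ≤ ENNReal.ofReal (e 0) := by
  rcases le_total t 0 with ht | ht
  · rw [hy.eq_zero_of_nonpos t ht, hy.zero_eq_ofReal]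
  · exact (hy.le_ofReal t).trans (ENNReal.ofReal_le_ofReal (hy.antitone ht))

lemma lt_top (hy : IsDissipativeCurve E y e) (t : ℝ) : E (y t) < ⊤ :=
  (hy.le_ofReal t).trans_lt ENNReal.ofReal_lt_top

lemma metricSpeed_sq_add_sq_le (hy : IsDissipativeCurve E y e) (hr : 0 < r)
    (hd : DifferentiableAt ℝ e r) {c : ℝ≥0} (hc : c < descSlope E (y r)) :
    metricSpeed y r ^ 2 + c ^ 2 ≤ 2 * -deriv e r := by
  let f : ℝ → ℝ := fun s => 2 * e s + (s - r) * c ^ 2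
  have hf : HasDerivAt f (2 * deriv e r + 1 * c ^ 2) r :=
    (hd.hasDerivAt.const_mul 2).add (((hasDerivAt_id r).sub_const r).mul_const _)
  have h_speed := (metricSpeed_sq_le_neg_deriv (y := y) hf.differentiableAt <| by
    filter_upwards [nhdsWithin_le_nhds (hy.dissipation r hr c hc)] with s hs
    simp only [f]
    linarith).2
  rw [hf.deriv] at h_speed
  linarith

lemma ofReal_metricSpeed_sq_add_descSlope_sq_le (hy : IsDissipativeCurve E y e) (hr : 0 < r)
    (hd : DifferentiableAt ℝ e r) :
    ENNReal.ofReal (metricSpeed y r ^ 2) + descSlope E (y r) ^ 2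
      ≤ ENNReal.ofReal (2 * -deriv e r) := by
  have h_speed : metricSpeed y r ^ 2 ≤ -deriv e r := (metricSpeed_sq_le_neg_deriv hd
    (Eventually.of_forall fun s => by linarith [hy.dist_sq_le s r])).2
  have h_nonneg : 0 ≤ 2 * -deriv e r - metricSpeed y r ^ 2 := by
    linarith [deriv_nonpos_of_antitone hy.antitone (r := r)]
  have h_slope : descSlope E (y r) ≤ ENNReal.ofReal √(2 * -deriv e r - metricSpeed y r ^ 2) := by
    refine ENNReal.le_of_forall_nnreal_lt fun c hc => ?_
    rw [← ENNReal.ofReal_coe_nnreal]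
    exact ENNReal.ofReal_le_ofReal (Real.le_sqrt_of_sq_le (by
      linarith [hy.metricSpeed_sq_add_sq_le hr hd hc]))
  calc ENNReal.ofReal (metricSpeed y r ^ 2) + descSlope E (y r) ^ 2
      ≤ ENNReal.ofReal (metricSpeed y r ^ 2)
        + ENNReal.ofReal √(2 * -deriv e r - metricSpeed y r ^ 2) ^ 2 := by gcongr
    _ = ENNReal.ofReal (2 * -deriv e r) := by
        rw [← ENNReal.ofReal_pow (Real.sqrt_nonneg _), Real.sq_sqrt h_nonneg,
          ← ENNReal.ofReal_add (by positivity) h_nonneg, add_sub_cancel]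

lemma curveAction_add_slopeAction_le (hy : IsDissipativeCurve E y e)
    (hE : IsGeodesicallyConvex E K) (hlsc : LowerSemicontinuous E) (ha : 0 ≤ a) (hab : a ≤ b) :
    curveAction y a b + slopeAction E y a b ≤ 2 * ENNReal.ofReal (e a - e b) := by
  have h_meas : Measurable fun r => descSlope E (y r) ^ 2 :=
    (hE.measurable_descSlope_comp hlsc hy.isACCurve.continuous hy.lt_top).pow_const 2
  calc curveAction y a b + slopeAction E y a b
      = ∫⁻ r in Ioc a b, (ENNReal.ofReal (metricSpeed y r ^ 2) + descSlope E (y r) ^ 2) :=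
        (lintegral_add_right _ h_meas).symm
    _ ≤ ∫⁻ r in Ioc a b, 2 * ENNReal.ofReal (-deriv e r) := by
        refine lintegral_mono_ae ?_
        filter_upwards [ae_restrict_of_ae (ae_differentiableAt_of_antitone hy.antitone),
          ae_restrict_mem measurableSet_Ioc] with r hd hr
        have h_le := hy.ofReal_metricSpeed_sq_add_descSlope_sq_le (ha.trans_lt hr.1) hd
        rwa [ENNReal.ofReal_mul zero_le_two, ENNReal.ofReal_ofNat] at h_le
    _ = 2 * ∫⁻ r in Ioc a b, ENNReal.ofReal (-deriv e r) :=
        lintegral_const_mul' _ _ ENNReal.ofNat_ne_top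
    _ ≤ 2 * ENNReal.ofReal (e a - e b) := by
        gcongr
        exact lintegral_neg_deriv_le_of_antitone hy.antitone hab

lemma half_action_le (hy : IsDissipativeCurve E y e) (hE : IsGeodesicallyConvex E K)
    (hlsc : LowerSemicontinuous E) (ha : 0 ≤ a) (hab : a ≤ b) :
    curveAction y a b / 2 + slopeAction E y a b / 2 ≤ ENNReal.ofReal (e a - e b) := by
  rw [← ENNReal.add_div]
  exact ENNReal.div_le_of_le_mul' (hy.curveAction_add_slopeAction_le hE hlsc ha hab)

lemma le_add_half_action (hy : IsDissipativeCurve E y e) (hE : IsGeodesicallyConvex E K)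
    (hlsc : LowerSemicontinuous E) (ha : 0 ≤ a) (hab : a ≤ b) :
    E (y a) ≤ E (y b) + (curveAction y a b / 2 + slopeAction E y a b / 2) := by
  rcases hab.eq_or_lt with rfl | hlt
  · exact le_self_add
  have h_ne_top := ENNReal.add_ne_top.1 (ne_top_of_le_ne_top (by finiteness)
    (hy.curveAction_add_slopeAction_le hE hlsc ha hab))
  rw [← add_assoc]
  exact hE.le_add_half_action hlsc hy.isACCurve ENNReal.ofReal_ne_top hy.le_ofReal_zero ha hlt
    h_ne_top.1 h_ne_top.2

lemma eq_ofReal (hy : IsDissipativeCurve E y e) (hE : IsGeodesicallyConvex E K)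
    (hlsc : LowerSemicontinuous E) (ht : 0 ≤ t) : E (y t) = ENNReal.ofReal (e t) := by
  refine (hy.le_ofReal t).antisymm ((ENNReal.add_le_add_iff_right
    (ENNReal.ofReal_ne_top (r := e 0 - e t))).1 ?_)
  calc ENNReal.ofReal (e t) + ENNReal.ofReal (e 0 - e t) = E (y 0) := by
        rw [← ENNReal.ofReal_add (hy.nonneg t) (sub_nonneg.2 (hy.antitone ht)), add_sub_cancel,
          hy.zero_eq_ofReal]
    _ ≤ E (y t) + (curveAction y 0 t / 2 + slopeAction E y 0 t / 2) :=
        hy.le_add_half_action hE hlsc le_rfl ht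
    _ ≤ E (y t) + ENNReal.ofReal (e 0 - e t) := by
        gcongr
        exact hy.half_action_le hE hlsc le_rfl ht

lemma isEDEFlow (hy : IsDissipativeCurve E y e) (hE : IsGeodesicallyConvex E K)
    (hlsc : LowerSemicontinuous E) : IsEDEFlow E y := by
  refine ⟨hy.isACCurve, hy.lt_top, hy.eq_zero_of_nonpos, fun t s ht hts => ?_⟩
  rw [add_assoc]
  refine (hy.le_add_half_action hE hlsc ht hts).antisymm ?_
  calc E (y s) + (curveAction y t s / 2 + slopeAction E y t s / 2)
      ≤ ENNReal.ofReal (e s) + ENNReal.ofReal (e t - e s) :=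
        add_le_add (hy.le_ofReal s) (hy.half_action_le hE hlsc ht hts)
    _ = E (y t) := by
        rw [← ENNReal.ofReal_add (hy.nonneg s) (sub_nonneg.2 (hy.antitone hts)), add_sub_cancel,
          hy.eq_ofReal hE hlsc ht]

end IsDissipativeCurve

theorem IsGeodesicallyConvex.exists_isEDEFlow [CompactSpace Y] (hE : IsGeodesicallyConvex E K)
    (hlsc : LowerSemicontinuous E) {y₀ : Y} (hy₀ : E y₀ < ⊤) : ∃ y, IsEDEFlow E y ∧ y 0 = y₀ := by
  obtain ⟨y, e, hy, h_zero⟩ := hE.exists_isDissipativeCurve hlsc hy₀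
  exact ⟨y, hy.isEDEFlow hE hlsc, h_zero⟩

end Existence

section Uniqueness

variable {Y : Type*} [MetricSpace Y] {E : Y → ℝ≥0∞} {K : ℝ} {avg : Y → Y → Y} {u v : ℝ → Y}
  {a b : ℝ}

/-- A midpoint operation for a functional `E`: it contracts squared distances, `E` is strictly
convex along it, and the squared descending slope of `E` is convex along it, where the slope of
`E` at `avg x y` is encoded by the global lower bound that it gives for a `K`-convex functional. -/
structure IsStrictlyConvexAverage (E : Y → ℝ≥0∞) (K : ℝ) (avg : Y → Y → Y) : Prop where
  map_self : ∀ x, avg x x = x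
  dist_sq_le : ∀ x y x' y',
    dist (avg x y) (avg x' y') ^ 2 ≤ (dist x x' ^ 2 + dist y y' ^ 2) / 2
  lt_top : ∀ x y, E x < ⊤ → E y < ⊤ → E (avg x y) < ⊤
  toReal_lt : ∀ x y, E x < ⊤ → E y < ⊤ → x ≠ y →
    (E (avg x y)).toReal < ((E x).toReal + (E y).toReal) / 2
  toReal_sub_le : ∀ x y z, E x < ⊤ → E y < ⊤ → E z < ⊤ → descSlope E x ≠ ⊤ →
    descSlope E y ≠ ⊤ → (E (avg x y)).toReal - (E z).toReal ≤
      √(((descSlope E x).toReal ^ 2 + (descSlope E y).toReal ^ 2) / 2) * dist (avg x y) z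
        + |K| / 2 * dist (avg x y) z ^ 2

namespace IsEDEFlow

lemma le_zero (hu : IsEDEFlow E u) (t : ℝ) : E (u t) ≤ E (u 0) := by
  rcases le_total t 0 with ht | ht
  · rw [hu.eq_zero_of_nonpos t ht]
  · rw [hu.energy_eq 0 t le_rfl ht, add_assoc]
    exact le_self_add

lemma action_ne_top (hu : IsEDEFlow E u) (ha : 0 ≤ a) (hab : a ≤ b) :
    curveAction u a b ≠ ⊤ ∧ slopeAction E u a b ≠ ⊤ := by
  have h_top := (hu.lt_top a).ne
  rw [hu.energy_eq a b ha hab, ENNReal.add_ne_top, ENNReal.add_ne_top] at h_top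
  exact ⟨fun h => h_top.1.2 (by simp [h, ENNReal.top_div]),
    fun h => h_top.2 (by simp [h, ENNReal.top_div])⟩

lemma toReal_energy_eq (hu : IsEDEFlow E u) (ha : 0 ≤ a) (hab : a ≤ b) :
    (E (u a)).toReal = (E (u b)).toReal + (curveAction u a b).toReal / 2
      + (slopeAction E u a b).toReal / 2 := by
  obtain ⟨h_action, h_slope⟩ := hu.action_ne_top ha hab
  have h_dom := (hu.lt_top b).ne
  rw [hu.energy_eq a b ha hab, ENNReal.toReal_add (by finiteness) (by finiteness),
    ENNReal.toReal_add h_dom (by finiteness), ENNReal.toReal_div, ENNReal.toReal_div,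
    ENNReal.toReal_ofNat]

end IsEDEFlow

namespace IsStrictlyConvexAverage

lemma toReal_le (h : IsStrictlyConvexAverage E K avg) {x y : Y} (hx : E x < ⊤) (hy : E y < ⊤) :
    (E (avg x y)).toReal ≤ ((E x).toReal + (E y).toReal) / 2 := by
  rcases eq_or_ne x y with rfl | hne
  · rw [h.map_self, add_self_div_two]
  · exact (h.toReal_lt x y hx hy hne).le

lemma continuous (h : IsStrictlyConvexAverage E K avg) (hu : Continuous u) (hv : Continuous v) :
    Continuous fun t => avg (u t) (v t) := by
  refine continuous_iff_continuousAt.2 fun t => tendsto_iff_dist_tendsto_zero.2 ?_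
  have h_lim : Tendsto (fun s => √((dist (u s) (u t) ^ 2 + dist (v s) (v t) ^ 2) / 2))
      (𝓝 t) (𝓝 0) := Continuous.tendsto' (by fun_prop) t 0 (by simp)
  exact squeeze_zero (fun _ => dist_nonneg)
    (fun s => Real.le_sqrt_of_sq_le (h.dist_sq_le _ _ _ _)) h_lim

lemma apply_le_zero (h : IsStrictlyConvexAverage E K avg) (hu : IsEDEFlow E u)
    (hv : IsEDEFlow E v) (h_zero : u 0 = v 0) (t : ℝ) : E (avg (u t) (v t)) ≤ E (u 0) := by
  rw [← ENNReal.toReal_le_toReal (h.lt_top _ _ (hu.lt_top t) (hv.lt_top t)).ne (hu.lt_top 0).ne]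
  have h_avg := h.toReal_le (hu.lt_top t) (hv.lt_top t)
  have h_le := ENNReal.toReal_mono (hu.lt_top 0).ne (hu.le_zero t)
  have h_le' := ENNReal.toReal_mono (hv.lt_top 0).ne (hv.le_zero t)
  rw [← h_zero] at h_le'
  linarith

lemma ae_toReal_sub_le (h_avg : IsStrictlyConvexAverage E K avg) (hu : IsEDEFlow E u)
    (hv : IsEDEFlow E v) (ha : 0 ≤ a) (hab : a ≤ b)
    (h_slope_u : ∀ᵐ r ∂(volume.restrict (Ioc a b)), descSlope E (u r) ≠ ⊤)
    (h_slope_v : ∀ᵐ r ∂(volume.restrict (Ioc a b)), descSlope E (v r) ≠ ⊤) :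
    ∀ᵐ r ∂(volume.restrict (Ioc a b)), ∀ t ∈ Icc r b, ∀ h : ℝ, 0 < h → t - r ≤ h →
      (E (avg (u r) (v r))).toReal - (E (avg (u t) (v t))).toReal ≤
        h / 2 * (((descSlope E (u r)).toReal ^ 2 + (descSlope E (v r)).toReal ^ 2) / 2)
          + (1 / 2 + |K| / 2 * h) *
            (((curveAction u a t).toReal + (curveAction v a t).toReal) / 2
              - ((curveAction u a r).toReal + (curveAction v a r).toReal) / 2) := by
  filter_upwards [h_slope_u, h_slope_v, ae_restrict_mem measurableSet_Ioc]
    with r h_top_u h_top_v hr t ht h hh hth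
  have h_mem : r ∈ Icc a b := ⟨hr.1.le, hr.2⟩
  have h_mem' : t ∈ Icc a b := ⟨hr.1.le.trans ht.1, ht.2⟩
  have h_dist_u := hu.dist_sq_le (hu.action_ne_top ha h_mem'.1).1 ha hr.1.le ht.1
  have h_dist_v := hv.dist_sq_le (hv.action_ne_top ha h_mem'.1).1 ha hr.1.le ht.1
  have h_dist := h_avg.dist_sq_le (u r) (v r) (u t) (v t)
  have h_mono_u := monotoneOn_toReal_curveAction (hu.action_ne_top ha hab).1 h_mem h_mem' ht.1
  have h_mono_v := monotoneOn_toReal_curveAction (hv.action_ne_top ha hab).1 h_mem h_mem' ht.1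
  rw [← Real.sq_sqrt (x := (_ + _) / 2) (by positivity : (0 : ℝ) ≤
    ((descSlope E (u r)).toReal ^ 2 + (descSlope E (v r)).toReal ^ 2) / 2)]
  exact le_half_mul_sq_add_of_sq_le (h_avg.toReal_sub_le _ _ _ (hu.lt_top r) (hv.lt_top r)
    (h_avg.lt_top _ _ (hu.lt_top t) (hv.lt_top t)) h_top_u h_top_v) (τ := t - r)
    (by linarith) (by linarith) (by positivity) hh hth

lemma toReal_le_add_half_action (h : IsStrictlyConvexAverage E K avg)
    (hE : IsGeodesicallyConvex E K) (hlsc : LowerSemicontinuous E) (hu : IsEDEFlow E u)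
    (hv : IsEDEFlow E v) (h_zero : u 0 = v 0) (hb : 0 < b) :
    (E (u 0)).toReal ≤ (E (avg (u b) (v b))).toReal
      + ((slopeAction E u 0 b).toReal + (slopeAction E v 0 b).toReal) / 4
      + ((curveAction u 0 b).toReal + (curveAction v 0 b).toReal) / 4 := by
  obtain ⟨h_action_u, h_slope_u⟩ := hu.action_ne_top le_rfl hb.le
  obtain ⟨h_action_v, h_slope_v⟩ := hv.action_ne_top le_rfl hb.le
  have h_meas_u := hE.measurable_descSlope_comp hlsc hu.continuous hu.lt_top
  have h_meas_v := hE.measurable_descSlope_comp hlsc hv.continuous hv.lt_top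
  have h_int_u := intervalIntegrable_sq_toReal_descSlope h_meas_u hb.le h_slope_u
  have h_int_v := intervalIntegrable_sq_toReal_descSlope h_meas_v hb.le h_slope_v
  have h_cont := h.continuous hu.continuous hv.continuous
  have h_dom : ∀ t, E (avg (u t) (v t)) < ⊤ := fun t => h.lt_top _ _ (hu.lt_top t) (hv.lt_top t)
  have h_mono : MonotoneOn
      (fun t => ((curveAction u 0 t).toReal + (curveAction v 0 t).toReal) / 2) (Icc 0 b) :=
    fun _ hs _ ht hst => div_le_div_of_nonneg_right
      (add_le_add (monotoneOn_toReal_curveAction h_action_u hs ht hst)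
        (monotoneOn_toReal_curveAction h_action_v hs ht hst)) zero_le_two
  have h_le := sub_le_of_ae_increment_le hb
    (intervalIntegrable_toReal_comp_of_lowerSemicontinuous hlsc h_cont (hu.lt_top 0).ne
      (h.apply_le_zero hu hv h_zero) 0 b) h_mono ((h_int_u.add h_int_v).div_const 2)
    (h.ae_toReal_sub_le hu hv le_rfl hb.le (ae_descSlope_ne_top h_meas_u h_slope_u)
      (ae_descSlope_ne_top h_meas_v h_slope_v)) (by positivity)
    ((lowerSemicontinuous_toReal (hlsc.comp h_cont) h_dom).lowerSemicontinuousAt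
      0 |>.lowerSemicontinuousWithinAt _)
  rw [intervalIntegral.integral_div, intervalIntegral.integral_add h_int_u h_int_v,
    integral_sq_toReal_descSlope h_meas_u hb.le h_slope_u,
    integral_sq_toReal_descSlope h_meas_v hb.le h_slope_v] at h_le
  simp only [← h_zero, h.map_self, curveAction, Ioc_self, Measure.restrict_empty,
    lintegral_zero_measure, ENNReal.toReal_zero] at h_le ⊢
  linarith

end IsStrictlyConvexAverage

theorem IsEDEFlow.eq_of_zero_eq (hE : IsGeodesicallyConvex E K) (hlsc : LowerSemicontinuous E)
    (h_avg : IsStrictlyConvexAverage E K avg) (hu : IsEDEFlow E u) (hv : IsEDEFlow E v)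
    (h_zero : u 0 = v 0) {t : ℝ} (ht : 0 ≤ t) : u t = v t := by
  by_contra h_ne
  have ht' : 0 < t := ht.lt_of_ne fun h => h_ne (h ▸ h_zero)
  have h_strict := h_avg.toReal_lt _ _ (hu.lt_top t) (hv.lt_top t) h_ne
  have h_le := h_avg.toReal_le_add_half_action hE hlsc hu hv h_zero ht'
  have h_energy_u := hu.toReal_energy_eq le_rfl ht
  have h_energy_v := hv.toReal_energy_eq le_rfl ht
  rw [← h_zero] at h_energy_v
  linarith

end Uniqueness

section Coupling

variable {X : Type*} [MeasurableSpace X] {μ ν ρ : Measure X} {γ γ' : Measure (X × X)}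

lemma isCoupling_prod (μ ν : Measure X) [IsProbabilityMeasure μ] [IsProbabilityMeasure ν] :
    IsCoupling μ ν (μ.prod ν) :=
  ⟨inferInstance, by simp [Measure.map_fst_prod], by simp [Measure.map_snd_prod]⟩

lemma isCoupling_diag (μ : Measure X) [IsProbabilityMeasure μ] :
    IsCoupling μ μ (μ.map fun x => (x, x)) := by
  have h_meas : Measurable fun x : X => (x, x) := by fun_prop
  refine ⟨Measure.isProbabilityMeasure_map h_meas.aemeasurable, ?_, ?_⟩
  · rw [Measure.map_map measurable_fst h_meas]
    exact Measure.map_id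
  · rw [Measure.map_map measurable_snd h_meas]
    exact Measure.map_id

lemma IsCoupling.swap (hγ : IsCoupling μ ν γ) : IsCoupling ν μ (γ.map Prod.swap) := by
  obtain ⟨_, h_fst, h_snd⟩ := hγ
  refine ⟨Measure.isProbabilityMeasure_map measurable_swap.aemeasurable, ?_, ?_⟩
  · rwa [Measure.map_map measurable_fst measurable_swap]
  · rwa [Measure.map_map measurable_snd measurable_swap]

lemma IsCoupling.measure_preimage_fst (hγ : IsCoupling μ ν γ) {s : Set X} (hs : MeasurableSet s) :
    γ (Prod.fst ⁻¹' s) = μ s := by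
  rw [← hγ.2.1, Measure.map_apply measurable_fst hs]

lemma IsCoupling.measure_preimage_snd (hγ : IsCoupling μ ν γ) {s : Set X} (hs : MeasurableSet s) :
    γ (Prod.snd ⁻¹' s) = ν s := by
  rw [← hγ.2.2, Measure.map_apply measurable_snd hs]

lemma isProbabilityMeasure_half_add {Z : Type*} [MeasurableSpace Z] (μ ν : Measure Z)
    [IsProbabilityMeasure μ] [IsProbabilityMeasure ν] :
    IsProbabilityMeasure ((2 : ℝ≥0∞)⁻¹ • (μ + ν)) := by
  refine ⟨?_⟩
  simp only [Measure.smul_apply, Measure.add_apply, measure_univ, smul_eq_mul]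
  rw [one_add_one_eq_two, ENNReal.inv_mul_cancel two_ne_zero ENNReal.ofNat_ne_top]

lemma IsCoupling.half_add {μ' ν' : Measure X} (hγ : IsCoupling μ ν γ)
    (hγ' : IsCoupling μ' ν' γ') :
    IsCoupling ((2 : ℝ≥0∞)⁻¹ • (μ + μ')) ((2 : ℝ≥0∞)⁻¹ • (ν + ν'))
      ((2 : ℝ≥0∞)⁻¹ • (γ + γ')) := by
  obtain ⟨_, rfl, rfl⟩ := hγ
  obtain ⟨_, rfl, rfl⟩ := hγ'
  refine ⟨isProbabilityMeasure_half_add γ γ', ?_, ?_⟩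
  · rw [Measure.map_smul, Measure.map_add _ _ measurable_fst]
  · rw [Measure.map_smul, Measure.map_add _ _ measurable_snd]

end Coupling

section Gluing

open ProbabilityTheory

variable {X Y Z : Type*} [MeasurableSpace X] [MeasurableSpace Y] [MeasurableSpace Z]

lemma compProd_prod_map_fst (ν : Measure Y) [SFinite ν] (κ : Kernel Y X) (η : Kernel Y Z)
    [IsSFiniteKernel κ] [IsMarkovKernel η] :
    (ν ⊗ₘ (κ ×ₖ η)).map (fun p => (p.1, p.2.1)) = ν ⊗ₘ κ := by
  ext s hs
  have h_meas : Measurable fun p : Y × X × Z => (p.1, p.2.1) := by fun_prop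
  rw [Measure.map_apply h_meas hs, Measure.compProd_apply (h_meas hs), Measure.compProd_apply hs]
  refine lintegral_congr fun y => ?_
  have h_section : Prod.mk y ⁻¹' ((fun p : Y × X × Z => (p.1, p.2.1)) ⁻¹' s) =
      (Prod.mk y ⁻¹' s) ×ˢ univ := by ext p; simp
  rw [h_section, Kernel.prod_apply, Measure.prod_prod, measure_univ, mul_one]

lemma compProd_prod_map_snd (ν : Measure Y) [SFinite ν] (κ : Kernel Y X) (η : Kernel Y Z)
    [IsMarkovKernel κ] [IsSFiniteKernel η] :
    (ν ⊗ₘ (κ ×ₖ η)).map (fun p => (p.1, p.2.2)) = ν ⊗ₘ η := by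
  ext s hs
  have h_meas : Measurable fun p : Y × X × Z => (p.1, p.2.2) := by fun_prop
  rw [Measure.map_apply h_meas hs, Measure.compProd_apply (h_meas hs), Measure.compProd_apply hs]
  refine lintegral_congr fun y => ?_
  have h_section : Prod.mk y ⁻¹' ((fun p : Y × X × Z => (p.1, p.2.2)) ⁻¹' s) =
      univ ×ˢ (Prod.mk y ⁻¹' s) := by ext p; simp
  rw [h_section, Kernel.prod_apply, Measure.prod_prod, measure_univ, one_mul]

lemma exists_map_eq_of_fst_eq [StandardBorelSpace X] [Nonempty X] [StandardBorelSpace Z]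
    [Nonempty Z] (γ : Measure (Y × X)) (γ' : Measure (Y × Z)) [IsProbabilityMeasure γ]
    [IsFiniteMeasure γ'] (h : γ.fst = γ'.fst) :
    ∃ η : Measure (Y × X × Z), IsProbabilityMeasure η ∧
      η.map (fun p => (p.1, p.2.1)) = γ ∧ η.map (fun p => (p.1, p.2.2)) = γ' := by
  refine ⟨γ.fst ⊗ₘ (γ.condKernel ×ₖ γ'.condKernel), inferInstance, ?_, ?_⟩
  · rw [compProd_prod_map_fst, Measure.disintegrate]
  · rw [compProd_prod_map_snd, h, Measure.disintegrate]

lemma IsCoupling.exists_glue {X : Type*} [MeasurableSpace X] [StandardBorelSpace X]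
    {μ ν ρ : Measure X} {γ γ' : Measure (X × X)} (hγ : IsCoupling μ ν γ)
    (hγ' : IsCoupling ν ρ γ') :
    ∃ η : Measure (X × X × X), IsProbabilityMeasure η ∧
      η.map (fun p => (p.2.1, p.1)) = γ ∧ η.map (fun p => (p.1, p.2.2)) = γ' := by
  have h_prob := hγ'.1
  have h_prob_swap := hγ.swap.1
  have : Nonempty X := (nonempty_of_isProbabilityMeasure γ').map Prod.fst
  obtain ⟨η, h_prob_η, h_left, h_right⟩ := exists_map_eq_of_fst_eq (γ.map Prod.swap) γ'
    (hγ.swap.2.1.trans hγ'.2.1.symm)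
  refine ⟨η, h_prob_η, ?_, h_right⟩
  calc η.map (fun p => (p.2.1, p.1))
      = (η.map fun p => (p.1, p.2.1)).map Prod.swap := by
        rw [Measure.map_map measurable_swap (by fun_prop)]
        rfl
    _ = γ := by
        rw [h_left, Measure.map_map measurable_swap measurable_swap, Prod.swap_swap_eq,
          Measure.map_id]

end Gluing

section Wasserstein

lemma lpNorm_two_eq_sqrt_integral_sq {α : Type*} [MeasurableSpace α] {μ : Measure α} {f : α → ℝ}
    (hf : AEStronglyMeasurable f μ) : lpNorm f 2 μ = √(∫ x, f x ^ 2 ∂μ) := by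
  rw [lpNorm_eq_integral_norm_rpow_toReal two_ne_zero ENNReal.ofNat_ne_top hf, Real.sqrt_eq_rpow]
  simp

lemma integrable_of_continuous {Z : Type*} [TopologicalSpace Z] [CompactSpace Z]
    [MeasurableSpace Z] [OpensMeasurableSpace Z] (μ : Measure Z) [IsFiniteMeasure μ]
    {f : Z → ℝ} (hf : Continuous f) : Integrable f μ :=
  (BoundedContinuousFunction.mkOfCompact ⟨f, hf⟩).integrable μ

variable {X : Type*} [MetricSpace X] [MeasurableSpace X] {μ ν ρ : Measure X}

lemma W2_nonneg (μ ν : Measure X) : 0 ≤ W2 μ ν := Real.sqrt_nonneg _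

lemma sInf_cost_nonneg (μ ν : Measure X) : 0 ≤ sInf {c : ℝ | ∃ γ : Measure (X × X),
    IsCoupling μ ν γ ∧ c = ∫ p, dist p.1 p.2 ^ 2 ∂γ} := by
  refine Real.sInf_nonneg ?_
  rintro c ⟨γ, -, rfl⟩
  positivity

lemma IsCoupling.W2_sq_le {γ : Measure (X × X)} (hγ : IsCoupling μ ν γ) :
    W2 μ ν ^ 2 ≤ ∫ p, dist p.1 p.2 ^ 2 ∂γ := by
  rw [W2, Real.sq_sqrt (sInf_cost_nonneg μ ν)]
  refine csInf_le ⟨0, ?_⟩ ⟨γ, hγ, rfl⟩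
  rintro c ⟨γ, -, rfl⟩
  positivity

lemma IsCoupling.W2_le_sqrt {γ : Measure (X × X)} (hγ : IsCoupling μ ν γ) :
    W2 μ ν ≤ √(∫ p, dist p.1 p.2 ^ 2 ∂γ) :=
  Real.le_sqrt_of_sq_le hγ.W2_sq_le

lemma exists_isCoupling_cost_lt [IsProbabilityMeasure μ] [IsProbabilityMeasure ν] {c : ℝ}
    (hc : W2 μ ν ^ 2 < c) : ∃ γ, IsCoupling μ ν γ ∧ ∫ p, dist p.1 p.2 ^ 2 ∂γ < c := by
  rw [W2, Real.sq_sqrt (sInf_cost_nonneg μ ν)] at hc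
  obtain ⟨_, ⟨γ, hγ, rfl⟩, h_lt⟩ :=
    exists_lt_of_csInf_lt (by exact ⟨_, μ.prod ν, isCoupling_prod μ ν, rfl⟩) hc
  exact ⟨γ, hγ, h_lt⟩

lemma exists_isCoupling_sqrt_cost_lt [IsProbabilityMeasure μ] [IsProbabilityMeasure ν] {ε : ℝ}
    (hε : 0 < ε) :
    ∃ γ, IsCoupling μ ν γ ∧ √(∫ p, dist p.1 p.2 ^ 2 ∂γ) < W2 μ ν + ε := by
  have h_nonneg := W2_nonneg μ ν
  obtain ⟨γ, hγ, h_lt⟩ := exists_isCoupling_cost_lt (μ := μ) (ν := ν) (c := (W2 μ ν + ε) ^ 2)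
    (by gcongr; linarith)
  exact ⟨γ, hγ, (Real.sqrt_lt_sqrt (by positivity) h_lt).trans_eq
    (Real.sqrt_sq (by positivity))⟩

variable [CompactSpace X] [BorelSpace X]

lemma integrable_dist_sq (γ : Measure (X × X)) [IsFiniteMeasure γ] :
    Integrable (fun p : X × X => dist p.1 p.2 ^ 2) γ :=
  integrable_of_continuous γ (by fun_prop)

lemma W2_self (μ : Measure X) [IsProbabilityMeasure μ] : W2 μ μ = 0 := by
  have h := (isCoupling_diag μ).W2_sq_le
  rw [integral_map (by fun_prop) (Continuous.aestronglyMeasurable (by fun_prop))] at h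
  simp only [dist_self, ne_eq, OfNat.ofNat_ne_zero, not_false_eq_true, zero_pow,
    integral_zero] at h
  exact pow_eq_zero_iff two_ne_zero |>.1 (le_antisymm h (sq_nonneg _))

lemma W2_comm (μ ν : Measure X) : W2 μ ν = W2 ν μ := by
  have h_cost (γ : Measure (X × X)) :
      ∫ p, dist p.1 p.2 ^ 2 ∂γ = ∫ p, dist p.1 p.2 ^ 2 ∂(γ.map Prod.swap) := by
    rw [integral_map measurable_swap.aemeasurable
      (Continuous.aestronglyMeasurable (by fun_prop))]
    simp [dist_comm]
  unfold W2
  congr 2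
  ext c
  constructor <;>
  · rintro ⟨γ, hγ, rfl⟩
    exact ⟨_, hγ.swap, h_cost γ⟩

lemma sqrt_integral_sq_le_add {Z : Type*} [TopologicalSpace Z] [CompactSpace Z]
    [MeasurableSpace Z] [BorelSpace Z] (η : Measure Z) [IsFiniteMeasure η] {f g h : Z → ℝ}
    (hf : Continuous f) (hg : Continuous g) (hh : Continuous h) (hf₀ : 0 ≤ f)
    (h_le : f ≤ g + h) :
    √(∫ p, f p ^ 2 ∂η) ≤ √(∫ p, g p ^ 2 ∂η) + √(∫ p, h p ^ 2 ∂η) := by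
  have h_memLp {k : Z → ℝ} (hk : Continuous k) : MemLp k 2 η :=
    (BoundedContinuousFunction.mkOfCompact ⟨k, hk⟩).memLp_top.mono_exponent le_top
  simp only [← lpNorm_two_eq_sqrt_integral_sq, hf.aestronglyMeasurable, hg.aestronglyMeasurable,
    hh.aestronglyMeasurable]
  calc lpNorm f 2 η ≤ lpNorm (g + h) 2 η :=
        lpNorm_mono_real (h_memLp (hg.add hh)) fun z => by
          rw [Real.norm_of_nonneg (hf₀ z)]; exact h_le z
    _ ≤ lpNorm g 2 η + lpNorm h 2 η := lpNorm_add_le (h_memLp hg) one_le_two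

lemma IsCoupling.W2_le_add {γ γ' : Measure (X × X)} (hγ : IsCoupling μ ν γ)
    (hγ' : IsCoupling ν ρ γ') :
    W2 μ ρ ≤ √(∫ p, dist p.1 p.2 ^ 2 ∂γ) + √(∫ p, dist p.1 p.2 ^ 2 ∂γ') := by
  obtain ⟨η, _, rfl, rfl⟩ := hγ.exists_glue hγ'
  have h_coupling : IsCoupling μ ρ (η.map Prod.snd) := by
    refine ⟨Measure.isProbabilityMeasure_map measurable_snd.aemeasurable, ?_, ?_⟩
    · rw [← hγ.2.1, Measure.map_map measurable_fst measurable_snd,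
        Measure.map_map measurable_fst (by fun_prop)]
      rfl
    · rw [← hγ'.2.2, Measure.map_map measurable_snd measurable_snd,
        Measure.map_map measurable_snd (by fun_prop)]
      rfl
  refine h_coupling.W2_le_sqrt.trans ?_
  rw [integral_map (by fun_prop) (Continuous.aestronglyMeasurable (by fun_prop)),
    integral_map (by fun_prop) (Continuous.aestronglyMeasurable (by fun_prop)),
    integral_map (by fun_prop) (Continuous.aestronglyMeasurable (by fun_prop))]
  exact sqrt_integral_sq_le_add η (by fun_prop) (by fun_prop) (by fun_prop)
    (fun _ => dist_nonneg) fun p => dist_triangle _ _ _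

lemma W2_triangle (μ ν ρ : Measure X) [IsProbabilityMeasure μ] [IsProbabilityMeasure ν]
    [IsProbabilityMeasure ρ] : W2 μ ρ ≤ W2 μ ν + W2 ν ρ := by
  refine le_of_forall_pos_le_add fun ε hε => ?_
  obtain ⟨γ, hγ, h_lt⟩ := exists_isCoupling_sqrt_cost_lt (μ := μ) (ν := ν) (half_pos hε)
  obtain ⟨γ', hγ', h_lt'⟩ := exists_isCoupling_sqrt_cost_lt (μ := ν) (ν := ρ) (half_pos hε)
  linarith [hγ.W2_le_add hγ']

lemma W2_half_add_sq_le (μ μ' ν ν' : Measure X) [IsProbabilityMeasure μ]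
    [IsProbabilityMeasure μ'] [IsProbabilityMeasure ν] [IsProbabilityMeasure ν'] :
    W2 ((2 : ℝ≥0∞)⁻¹ • (μ + μ')) ((2 : ℝ≥0∞)⁻¹ • (ν + ν')) ^ 2 ≤
      (W2 μ ν ^ 2 + W2 μ' ν' ^ 2) / 2 := by
  refine le_of_forall_pos_le_add fun ε hε => ?_
  obtain ⟨γ, hγ, h_lt⟩ := exists_isCoupling_cost_lt (lt_add_of_pos_right (W2 μ ν ^ 2) hε)
  obtain ⟨γ', hγ', h_lt'⟩ := exists_isCoupling_cost_lt (lt_add_of_pos_right (W2 μ' ν' ^ 2) hε)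
  have := hγ.1
  have := hγ'.1
  refine (hγ.half_add hγ').W2_sq_le.trans ?_
  rw [integral_smul_measure, integral_add_measure (integrable_dist_sq γ) (integrable_dist_sq γ')]
  simp only [ENNReal.toReal_inv, ENNReal.toReal_ofNat, smul_eq_mul]
  linarith

end Wasserstein

section WeakConvergence

variable {X : Type*} [MetricSpace X] [CompactSpace X] [MeasurableSpace X] [BorelSpace X]
  {μ ν : Measure X}

lemma IsCoupling.measure_le_thickening_add {γ : Measure (X × X)} (hγ : IsCoupling μ ν γ) {ε : ℝ}
    (hε : 0 < ε) (h_cost : ∫ p, dist p.1 p.2 ^ 2 ∂γ ≤ ε ^ 3) {s : Set X} (hs : MeasurableSet s) :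
    μ s ≤ ν (Metric.thickening ε s) + ENNReal.ofReal ε := by
  have := hγ.1
  have h_sub : Prod.fst ⁻¹' s ⊆
      Prod.snd ⁻¹' Metric.thickening ε s ∪ {p : X × X | ε ^ 2 ≤ dist p.1 p.2 ^ 2} := by
    intro p hp
    rcases lt_or_ge (dist p.1 p.2) ε with h | h
    · exact Or.inl (Metric.mem_thickening_iff.2 ⟨p.1, hp, by rwa [dist_comm]⟩)
    · exact Or.inr (pow_le_pow_left₀ hε.le h 2)
  have h_chebyshev : γ {p : X × X | ε ^ 2 ≤ dist p.1 p.2 ^ 2} ≤ ENNReal.ofReal ε := by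
    have h := mul_meas_ge_le_integral_of_nonneg (Eventually.of_forall fun p => sq_nonneg _)
      (integrable_dist_sq γ) (ε ^ 2)
    rw [← ofReal_measureReal]
    exact ENNReal.ofReal_le_ofReal (by nlinarith [sq_pos_of_pos hε])
  calc μ s = γ (Prod.fst ⁻¹' s) := (hγ.measure_preimage_fst hs).symm
    _ ≤ γ (Prod.snd ⁻¹' Metric.thickening ε s) +
        γ {p : X × X | ε ^ 2 ≤ dist p.1 p.2 ^ 2} :=
      (measure_mono h_sub).trans (measure_union_le _ _)
    _ ≤ _ := by
      rw [hγ.measure_preimage_snd Metric.isOpen_thickening.measurableSet]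
      gcongr

lemma levyProkhorovEDist_le_of_W2_sq_lt [IsProbabilityMeasure μ] [IsProbabilityMeasure ν] {ε : ℝ}
    (hε : 0 < ε) (h : W2 μ ν ^ 2 < ε ^ 3) : levyProkhorovEDist μ ν ≤ ENNReal.ofReal ε := by
  have h' : W2 ν μ ^ 2 < ε ^ 3 := by rwa [W2_comm]
  obtain ⟨γ, hγ, h_lt⟩ := exists_isCoupling_cost_lt h
  obtain ⟨γ', hγ', h_lt'⟩ := exists_isCoupling_cost_lt h'
  refine sInf_le fun s hs => ?_
  rw [ENNReal.toReal_ofReal hε.le]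
  exact ⟨hγ.measure_le_thickening_add hε h_lt.le hs, hγ'.measure_le_thickening_add hε h_lt'.le hs⟩

end WeakConvergence

section PartialCoupling

variable {X : Type*} [MeasurableSpace X] {μ ν : Measure X}

lemma inv_measure_univ_smul_smul (μ : Measure X) [IsFiniteMeasure μ] :
    (μ univ)⁻¹ • μ univ • μ = μ := by
  rcases eq_or_ne μ 0 with rfl | h
  · simp
  · rw [smul_smul, ENNReal.inv_mul_cancel (Measure.measure_univ_ne_zero.2 h)
      (measure_ne_top μ univ), one_smul]

lemma isCoupling_add_smul_prod_sub [IsProbabilityMeasure μ] [IsProbabilityMeasure ν]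
    {γ : Measure (X × X)} [IsFiniteMeasure γ] (h_fst : γ.map Prod.fst ≤ μ)
    (h_snd : γ.map Prod.snd ≤ ν) :
    IsCoupling μ ν
      (γ + (1 - γ univ)⁻¹ • (μ - γ.map Prod.fst).prod (ν - γ.map Prod.snd)) := by
  have h_fst_univ : (μ - γ.map Prod.fst) univ = 1 - γ univ := by
    rw [Measure.sub_apply MeasurableSet.univ h_fst, measure_univ]
    exact congrArg (1 - ·) Measure.fst_univ
  have h_snd_univ : (ν - γ.map Prod.snd) univ = 1 - γ univ := by
    rw [Measure.sub_apply MeasurableSet.univ h_snd, measure_univ]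
    exact congrArg (1 - ·) Measure.snd_univ
  have h_map_fst : (γ + (1 - γ univ)⁻¹ • (μ - γ.map Prod.fst).prod
      (ν - γ.map Prod.snd)).map Prod.fst = μ := by
    rw [Measure.map_add _ _ measurable_fst, Measure.map_smul, Measure.map_fst_prod, h_snd_univ,
      ← h_fst_univ, inv_measure_univ_smul_smul, add_comm, Measure.sub_add_cancel_of_le h_fst]
  refine ⟨⟨?_⟩, h_map_fst, ?_⟩
  · exact Measure.fst_univ.symm.trans ((congrArg (· univ) h_map_fst).trans measure_univ)
  · rw [Measure.map_add _ _ measurable_snd, Measure.map_smul, Measure.map_snd_prod, h_fst_univ,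
      ← h_snd_univ, inv_measure_univ_smul_smul, add_comm, Measure.sub_add_cancel_of_le h_snd]

/-- The multiple of the product of the localisations `f • μ` and `f • ν` whose mass is the smaller
of their masses: a transport plan between parts of `μ` and `ν` inside the support of `f`. The
inverse `0⁻¹ = ⊤` only multiplies the zero measure. -/
noncomputable def localPlan (f : X → ℝ≥0∞) (μ ν : Measure X) : Measure (X × X) :=
  (max (∫⁻ x, f x ∂μ) (∫⁻ x, f x ∂ν))⁻¹ • (μ.withDensity f).prod (ν.withDensity f)

lemma inv_max_mul_le_one (a b : ℝ≥0∞) : (max a b)⁻¹ * b ≤ 1 := by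
  rw [mul_comm, ← div_eq_mul_inv]
  exact (ENNReal.div_le_div_left (le_max_right a b) b).trans ENNReal.div_self_le_one

variable {f : X → ℝ≥0∞}

lemma localPlan_map_fst_le (f : X → ℝ≥0∞) (μ ν : Measure X) [SFinite μ] [SFinite ν] :
    (localPlan f μ ν).map Prod.fst ≤ μ.withDensity f := by
  rw [localPlan, Measure.map_smul, Measure.map_fst_prod, smul_smul,
    withDensity_apply _ MeasurableSet.univ, setLIntegral_univ]
  calc _ ≤ (1 : ℝ≥0∞) • μ.withDensity f := by gcongr; exact inv_max_mul_le_one _ _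
    _ = μ.withDensity f := one_smul _ _

lemma localPlan_map_snd_le (f : X → ℝ≥0∞) (μ ν : Measure X) [SFinite μ] [SFinite ν] :
    (localPlan f μ ν).map Prod.snd ≤ ν.withDensity f := by
  rw [localPlan, max_comm, Measure.map_smul, Measure.map_snd_prod, smul_smul,
    withDensity_apply _ MeasurableSet.univ, setLIntegral_univ]
  calc _ ≤ (1 : ℝ≥0∞) • ν.withDensity f := by gcongr; exact inv_max_mul_le_one _ _
    _ = ν.withDensity f := one_smul _ _

lemma localPlan_univ [SFinite μ] [SFinite ν] (hμ : ∫⁻ x, f x ∂μ ≠ ⊤) (hν : ∫⁻ x, f x ∂ν ≠ ⊤) :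
    localPlan f μ ν univ = min (∫⁻ x, f x ∂μ) (∫⁻ x, f x ∂ν) := by
  rw [localPlan, Measure.smul_apply, smul_eq_mul, ← univ_prod_univ, Measure.prod_prod]
  simp only [withDensity_apply _ MeasurableSet.univ, setLIntegral_univ]
  rw [← min_mul_max (∫⁻ x, f x ∂μ)]
  rcases eq_or_ne (max (∫⁻ x, f x ∂μ) (∫⁻ x, f x ∂ν)) 0 with h | h
  · rw [h, mul_zero, mul_zero]
    exact (le_antisymm (min_le_max.trans h.le) zero_le).symm
  · rw [mul_left_comm, ENNReal.inv_mul_cancel h (max_lt hμ.lt_top hν.lt_top).ne, mul_one]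

lemma ae_localPlan (hf : Measurable f) [SFinite μ] [SFinite ν] :
    ∀ᵐ p ∂localPlan f μ ν, f p.1 ≠ 0 ∧ f p.2 ≠ 0 := by
  have h_ne (ρ : Measure X) : ∀ᵐ x ∂ρ.withDensity f, f x ≠ 0 :=
    (ae_withDensity_iff hf).2 (Eventually.of_forall fun _ => id)
  exact Measure.ae_smul_measure ((Measure.quasiMeasurePreserving_fst.ae (h_ne μ)).and
    (Measure.quasiMeasurePreserving_snd.ae (h_ne ν))) _

lemma sum_withDensity_eq_self {ι : Type*} {t : Finset ι} {f : ι → X → ℝ≥0∞}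
    (hf : ∀ i, Measurable (f i)) (h_sum : ∀ x, ∑ i ∈ t, f i x = 1) (μ : Measure X) :
    ∑ i ∈ t, μ.withDensity (f i) = μ := by
  ext s hs
  simp only [Measure.finsetSum_apply, withDensity_apply _ hs]
  rw [← lintegral_finsetSum _ fun i _ => hf i]
  simp [h_sum]

variable {ι : Type*} {t : Finset ι} {g : ι → X → ℝ≥0∞}

lemma sum_localPlan_map_fst_le (hg : ∀ i, Measurable (g i)) (h_sum : ∀ x, ∑ i ∈ t, g i x = 1)
    (μ ν : Measure X) [SFinite μ] [SFinite ν] :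
    (∑ i ∈ t, localPlan (g i) μ ν).map Prod.fst ≤ μ := by
  rw [Measure.map_finset_sum (by fun_prop)]
  exact (Finset.sum_le_sum fun i _ => localPlan_map_fst_le (g i) μ ν).trans_eq
    (sum_withDensity_eq_self hg h_sum μ)

lemma sum_localPlan_map_snd_le (hg : ∀ i, Measurable (g i)) (h_sum : ∀ x, ∑ i ∈ t, g i x = 1)
    (μ ν : Measure X) [SFinite μ] [SFinite ν] :
    (∑ i ∈ t, localPlan (g i) μ ν).map Prod.snd ≤ ν := by
  rw [Measure.map_finset_sum (by fun_prop)]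
  exact (Finset.sum_le_sum fun i _ => localPlan_map_snd_le (g i) μ ν).trans_eq
    (sum_withDensity_eq_self hg h_sum ν)

lemma sum_localPlan_univ (h_sum : ∀ x, ∑ i ∈ t, g i x = 1) (μ ν : Measure X)
    [IsFiniteMeasure μ] [IsFiniteMeasure ν] :
    (∑ i ∈ t, localPlan (g i) μ ν) univ =
      ∑ i ∈ t, min (∫⁻ x, g i x ∂μ) (∫⁻ x, g i x ∂ν) := by
  have h_ne_top (ρ : Measure X) [IsFiniteMeasure ρ] {i : ι} (hi : i ∈ t) :
      ∫⁻ x, g i x ∂ρ ≠ ⊤ := by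
    have h_le : ∫⁻ x, g i x ∂ρ ≤ ∫⁻ _, 1 ∂ρ := lintegral_mono fun x =>
      (Finset.single_le_sum (fun j _ => zero_le) hi).trans_eq (h_sum x)
    exact ne_top_of_le_ne_top (by simp) h_le
  rw [Measure.finsetSum_apply]
  exact Finset.sum_congr rfl fun i hi => localPlan_univ (h_ne_top μ hi) (h_ne_top ν hi)

end PartialCoupling

section Compactness

variable {X : Type*} [MetricSpace X] [CompactSpace X] [MeasurableSpace X] [BorelSpace X]

lemma W2_sq_le_of_map_le {μ ν : Measure X} [IsProbabilityMeasure μ] [IsProbabilityMeasure ν]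
    {γ : Measure (X × X)} [IsFiniteMeasure γ] (h_fst : γ.map Prod.fst ≤ μ)
    (h_snd : γ.map Prod.snd ≤ ν) {D : ℝ} (hD : ∀ x y : X, dist x y ≤ D) :
    W2 μ ν ^ 2 ≤ ∫ p, dist p.1 p.2 ^ 2 ∂γ + D ^ 2 * (1 - γ.real univ) := by
  have h_coupling := isCoupling_add_smul_prod_sub h_fst h_snd
  set γ' := (1 - γ univ)⁻¹ • (μ - γ.map Prod.fst).prod (ν - γ.map Prod.snd)
  have := h_coupling.1
  have : IsFiniteMeasure γ' := isFiniteMeasure_of_le (γ + γ') (Measure.le_add_left le_rfl)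
  have h_mass : γ'.real univ = 1 - γ.real univ := by
    rw [eq_sub_iff_add_eq', ← measureReal_add_apply, probReal_univ]
  calc W2 μ ν ^ 2 ≤ ∫ p, dist p.1 p.2 ^ 2 ∂(γ + γ') := h_coupling.W2_sq_le
    _ = ∫ p, dist p.1 p.2 ^ 2 ∂γ + ∫ p, dist p.1 p.2 ^ 2 ∂γ' :=
      integral_add_measure (integrable_dist_sq γ) (integrable_dist_sq γ')
    _ ≤ ∫ p, dist p.1 p.2 ^ 2 ∂γ + ∫ _, D ^ 2 ∂γ' := by
      refine add_le_add_right (integral_mono (integrable_dist_sq γ') (integrable_const _) ?_) _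
      intro p
      exact pow_le_pow_left₀ dist_nonneg (hD p.1 p.2) 2
    _ = _ := by rw [integral_const, h_mass, smul_eq_mul, mul_comm (D ^ 2)]

lemma W2_sq_le_of_partition {ι : Type*} {t : Finset ι} {f : ι → X → ℝ≥0∞}
    (hf : ∀ i, Measurable (f i)) (h_sum : ∀ x, ∑ i ∈ t, f i x = 1) {ε D : ℝ}
    (h_diam : ∀ i x y, f i x ≠ 0 → f i y ≠ 0 → dist x y ≤ ε) (hD : ∀ x y : X, dist x y ≤ D)
    (μ ν : Measure X) [IsProbabilityMeasure μ] [IsProbabilityMeasure ν] :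
    W2 μ ν ^ 2 ≤ ε ^ 2 +
      D ^ 2 * (1 - (∑ i ∈ t, min (∫⁻ x, f i x ∂μ) (∫⁻ x, f i x ∂ν)).toReal) := by
  set γ := ∑ i ∈ t, localPlan (f i) μ ν
  have h_fst : γ.map Prod.fst ≤ μ := sum_localPlan_map_fst_le hf h_sum μ ν
  have h_univ_le : γ univ ≤ 1 := by
    calc γ univ = γ.map Prod.fst univ := Measure.fst_univ.symm
      _ ≤ μ univ := h_fst univ
      _ = 1 := measure_univ
  have : IsFiniteMeasure γ := ⟨h_univ_le.trans_lt ENNReal.one_lt_top⟩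
  have h_dist : ∀ᵐ p ∂γ, dist p.1 p.2 ^ 2 ≤ ε ^ 2 := by
    refine ae_finsetSum_measure_iff.2 fun i _ => (ae_localPlan (hf i)).mono fun p hp => ?_
    have := h_diam i _ _ hp.1 hp.2
    gcongr
  have h_cost : ∫ p, dist p.1 p.2 ^ 2 ∂γ ≤ ε ^ 2 := by
    calc ∫ p, dist p.1 p.2 ^ 2 ∂γ ≤ ∫ _, ε ^ 2 ∂γ :=
          integral_mono_ae (integrable_dist_sq γ) (integrable_const _) h_dist
      _ = γ.real univ * ε ^ 2 := by rw [integral_const, smul_eq_mul]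
      _ ≤ ε ^ 2 := mul_le_of_le_one_left (sq_nonneg ε)
          (ENNReal.toReal_le_of_le_ofReal zero_le_one (by simpa using h_univ_le))
  rw [← sum_localPlan_univ h_sum μ ν]
  exact (W2_sq_le_of_map_le h_fst (sum_localPlan_map_snd_le hf h_sum μ ν) hD).trans
    (add_le_add_left h_cost _)

lemma exists_continuous_partition {X : Type*} [MetricSpace X] [CompactSpace X] {ε : ℝ}
    (hε : 0 < ε) :
    ∃ (t : Finset X) (f : X → C(X, ℝ≥0)), (∀ x, ∑ i ∈ t, f i x = 1) ∧
      ∀ i x y, f i x ≠ 0 → f i y ≠ 0 → dist x y ≤ ε := by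
  obtain ⟨t, -, h_cover⟩ := isCompact_univ.elim_nhds_subcover (fun x : X => Metric.ball x (ε / 2))
    fun x _ => Metric.ball_mem_nhds x (half_pos hε)
  set g : X → X → ℝ≥0 := fun i x => Real.toNNReal (ε / 2 - dist x i)
  have hg : ∀ i, Continuous (g i) := fun i => by fun_prop
  have h_sum_ne (x : X) : ∑ j ∈ t, g j x ≠ 0 := by
    obtain ⟨i, hi, hxi⟩ := mem_iUnion₂.1 (h_cover (mem_univ x))
    have h_pos : 0 < g i x := Real.toNNReal_pos.2 (sub_pos.2 hxi)
    exact (h_pos.trans_le (Finset.single_le_sum (f := fun j => g j x) (fun j _ => zero_le) hi)).ne'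
  have h_near {i x : X} (h : g i x / ∑ j ∈ t, g j x ≠ 0) : dist x i < ε / 2 := by
    have h_ne : g i x ≠ 0 := fun h₀ => h (by rw [h₀, zero_div])
    exact sub_pos.1 (Real.toNNReal_pos.1 (pos_iff_ne_zero.2 h_ne))
  refine ⟨t, fun i => ⟨fun x => g i x / ∑ j ∈ t, g j x,
    (hg i).div (by fun_prop) h_sum_ne⟩, fun x => ?_, fun i x y hx hy => ?_⟩
  · simp only [ContinuousMap.coe_mk]
    rw [← Finset.sum_div, div_self (h_sum_ne x)]
  · linarith [dist_triangle_right x y i, h_near hx, h_near hy]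

/-- The space of probability measures on `X` with the distance `W2`; a type of its own because
`ProbabilityMeasure X` already carries the topology of weak convergence. -/
@[ext]
structure WassersteinSpace (X : Type*) [MeasurableSpace X] where
  toMeasure : Measure X
  isProbabilityMeasure : IsProbabilityMeasure toMeasure

instance (μ : WassersteinSpace X) : IsProbabilityMeasure μ.toMeasure := μ.isProbabilityMeasure

/-- A point of the Wasserstein space as a point of `ProbabilityMeasure X`, whose topology is that
of weak convergence. -/
def WassersteinSpace.toProbabilityMeasure (μ : WassersteinSpace X) : ProbabilityMeasure X :=
  ⟨μ.toMeasure, μ.isProbabilityMeasure⟩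

lemma eq_of_W2_eq_zero {μ ν : Measure X} [hμ : IsProbabilityMeasure μ]
    [hν : IsProbabilityMeasure ν] (h : W2 μ ν = 0) : μ = ν := by
  have h_edist : levyProkhorovEDist μ ν = 0 := by
    refine nonpos_iff_eq_zero.1 (ENNReal.le_of_forall_pos_le_add fun ε hε _ => ?_)
    rw [zero_add, ← ENNReal.ofReal_coe_nnreal]
    exact levyProkhorovEDist_le_of_W2_sq_lt hε (by rw [h, zero_pow two_ne_zero]; positivity)
  have h_eq : (LevyProkhorov.ofMeasure ⟨μ, hμ⟩ : LevyProkhorov (ProbabilityMeasure X)) =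
      LevyProkhorov.ofMeasure ⟨ν, hν⟩ :=
    edist_eq_zero.1 h_edist
  exact congrArg (fun ρ => (ρ.toMeasure : Measure X)) h_eq

noncomputable instance : MetricSpace (WassersteinSpace X) where
  dist μ ν := W2 μ.toMeasure ν.toMeasure
  dist_self μ := W2_self μ.toMeasure
  dist_comm μ ν := W2_comm μ.toMeasure ν.toMeasure
  dist_triangle μ ν ρ := W2_triangle μ.toMeasure ν.toMeasure ρ.toMeasure
  eq_of_dist_eq_zero h := WassersteinSpace.ext (eq_of_W2_eq_zero h)

lemma WassersteinSpace.dist_eq (μ ν : WassersteinSpace X) :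
    dist μ ν = W2 μ.toMeasure ν.toMeasure := rfl

lemma WassersteinSpace.continuous_toProbabilityMeasure :
    Continuous (toProbabilityMeasure (X := X)) := by
  have h : Continuous fun μ : WassersteinSpace X =>
      LevyProkhorov.ofMeasure μ.toProbabilityMeasure := by
    refine Metric.continuous_iff.2 fun μ ε hε => ?_
    refine ⟨√((ε / 2) ^ 3), by positivity, fun ν hν => ?_⟩
    have h_sq : W2 ν.toMeasure μ.toMeasure ^ 2 < (ε / 2) ^ 3 :=
      (Real.lt_sqrt dist_nonneg).1 hν
    have h_le := levyProkhorovEDist_le_of_W2_sq_lt (half_pos hε) h_sq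
    rw [LevyProkhorov.dist_probabilityMeasure_def]
    exact (ENNReal.toReal_le_of_le_ofReal (half_pos hε).le h_le).trans_lt (half_lt_self hε)
  exact LevyProkhorov.continuous_toMeasure_probabilityMeasure.comp h

lemma tendsto_sum_min_lintegral {ι : Type*} {t : Finset ι} {f : ι → C(X, ℝ≥0)}
    (h_sum : ∀ x, ∑ i ∈ t, f i x = 1) (μ : ProbabilityMeasure X) :
    Tendsto (fun ν : ProbabilityMeasure X =>
      (∑ i ∈ t, min (∫⁻ x, f i x ∂(ν : Measure X)) (∫⁻ x, f i x ∂(μ : Measure X))).toReal)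
      (𝓝 μ) (𝓝 1) := by
  have h_mass : ∑ i ∈ t, ∫⁻ x, f i x ∂(μ : Measure X) = 1 := by
    rw [← lintegral_finsetSum t fun i _ => by fun_prop]
    simp [← ENNReal.ofNNReal_finsetSum, h_sum]
  have h_lim (i : ι) : Tendsto (fun ν : ProbabilityMeasure X => ∫⁻ x, f i x ∂(ν : Measure X))
      (𝓝 μ) (𝓝 (∫⁻ x, f i x ∂(μ : Measure X))) :=
    ProbabilityMeasure.tendsto_iff_forall_lintegral_tendsto.1 tendsto_id
      (BoundedContinuousFunction.mkOfCompact (f i))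
  have h_sum_lim := tendsto_finsetSum t fun i _ =>
    (h_lim i).min (tendsto_const_nhds (x := ∫⁻ x, f i x ∂(μ : Measure X)))
  simp only [min_self, h_mass] at h_sum_lim
  exact (ENNReal.tendsto_toReal ENNReal.one_ne_top).comp h_sum_lim

lemma continuous_toWassersteinSpace :
    Continuous fun μ : ProbabilityMeasure X => (⟨μ.1, μ.2⟩ : WassersteinSpace X) := by
  refine continuous_iff_continuousAt.2 fun μ => ?_
  rw [ContinuousAt, Metric.tendsto_nhds]
  intro ε hε
  obtain ⟨t, f, h_sum, h_diam⟩ := exists_continuous_partition (X := X) (half_pos hε)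
  set D := Metric.diam (univ : Set X)
  have hD (x y : X) : dist x y ≤ D :=
    Metric.dist_le_diam_of_mem isCompact_univ.isBounded (mem_univ x) (mem_univ y)
  have h_lim : Tendsto (fun ν : ProbabilityMeasure X => (ε / 2) ^ 2 + D ^ 2 *
      (1 - (∑ i ∈ t, min (∫⁻ x, f i x ∂(ν : Measure X)) (∫⁻ x, f i x ∂(μ : Measure X))).toReal))
      (𝓝 μ) (𝓝 ((ε / 2) ^ 2 + D ^ 2 * (1 - 1))) :=
    (((tendsto_sum_min_lintegral h_sum μ).const_sub 1).const_mul _).const_add _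
  rw [sub_self, mul_zero, add_zero] at h_lim
  have h_lt : (ε / 2) ^ 2 < ε ^ 2 := by nlinarith
  filter_upwards [h_lim.eventually_lt_const h_lt] with ν hν
  have := ν.2
  have := μ.2
  have h_le : W2 ν.1 μ.1 ^ 2 ≤ _ :=
    W2_sq_le_of_partition (t := t) (f := fun i x => (f i x : ℝ≥0∞)) (fun i => by fun_prop)
      (fun x => by exact_mod_cast h_sum x)
      (fun i x y hx hy => h_diam i x y (by simpa using hx) (by simpa using hy)) hD ν.1 μ.1
  exact lt_of_pow_lt_pow_left₀ 2 hε.le (h_le.trans_lt hν)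

instance : CompactSpace (WassersteinSpace X) := by
  have h_surj : Function.Surjective
      fun μ : ProbabilityMeasure X => (⟨μ.1, μ.2⟩ : WassersteinSpace X) :=
    fun μ => ⟨⟨μ.1, μ.2⟩, rfl⟩
  exact h_surj.compactSpace continuous_toWassersteinSpace

end Compactness

section RelativeEntropy

open InformationTheory

variable {X : Type*} [MeasurableSpace X] {m μ ν ρ σ : Measure X}

lemma Ent_eq_klDiv (m ρ : Measure X) [IsFiniteMeasure m] [IsFiniteMeasure ρ] :
    Ent m ρ = klDiv ρ m := by
  have h_fun : entFun = klFun := by ext z; rw [entFun, klFun_apply]; ring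
  rw [klDiv_eq_lintegral_klFun, Ent, h_fun]

lemma absolutelyContinuous_half_add_left (μ ν : Measure X) : μ ≪ (2 : ℝ≥0∞)⁻¹ • (μ + ν) :=
  (Measure.AbsolutelyContinuous.rfl.add_right ν).smul_right (by simp)

lemma absolutelyContinuous_half_add_right (μ ν : Measure X) : ν ≪ (2 : ℝ≥0∞)⁻¹ • (μ + ν) :=
  add_comm ν μ ▸ absolutelyContinuous_half_add_left ν μ

lemma klFun_mul (g s : ℝ) : klFun (g * s) = g * s * Real.log s + s * klFun g + 1 - s := by
  rcases eq_or_ne g 0 with rfl | hg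
  · simp [klFun_apply]
  rcases eq_or_ne s 0 with rfl | hs
  · simp [klFun_apply]
  rw [klFun_apply, klFun_apply, Real.log_mul hg hs]
  ring

lemma ofReal_klFun_mul_add_ofReal_klFun_mul {g₀ g₁ s : ℝ≥0∞} (hs : s ≠ ⊤)
    (h : g₀ * s + g₁ * s = 2 * s) :
    ENNReal.ofReal (klFun (g₀ * s).toReal) + ENNReal.ofReal (klFun (g₁ * s).toReal) =
      2 * ENNReal.ofReal (klFun s.toReal) + (s * ENNReal.ofReal (klFun g₀.toReal) +
        s * ENNReal.ofReal (klFun g₁.toReal)) := by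
  have h_nonneg (z : ℝ≥0∞) : 0 ≤ klFun z.toReal := klFun_nonneg ENNReal.toReal_nonneg
  have h_top : g₀ * s + g₁ * s ≠ ⊤ := h ▸ ENNReal.mul_ne_top ENNReal.ofNat_ne_top hs
  obtain ⟨h₀, h₁⟩ := ENNReal.add_ne_top.1 h_top
  lift s to ℝ≥0 using hs
  rw [← ENNReal.toReal_eq_toReal_iff' (by finiteness) (by finiteness)]
  rw [← ENNReal.toReal_eq_toReal_iff' h_top (by finiteness), ENNReal.toReal_add h₀ h₁] at h
  simp only [ENNReal.toReal_mul, ENNReal.toReal_ofNat] at h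
  rw [ENNReal.toReal_add (by finiteness) (by finiteness),
    ENNReal.toReal_add (by finiteness) (by finiteness),
    ENNReal.toReal_add (by finiteness) (by finiteness)]
  simp only [ENNReal.toReal_mul, ENNReal.toReal_ofNat, ENNReal.toReal_ofReal (h_nonneg _)]
  rw [← ENNReal.toReal_mul, ← ENNReal.toReal_mul, ENNReal.toReal_ofReal (h_nonneg _),
    ENNReal.toReal_ofReal (h_nonneg _), ENNReal.toReal_mul, ENNReal.toReal_mul, klFun_mul,
    klFun_mul, klFun_apply (s : ℝ≥0∞).toReal]
  linear_combination Real.log (s : ℝ≥0∞).toReal * h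

lemma klDiv_eq_lintegral_rnDeriv_mul [IsFiniteMeasure μ] [IsFiniteMeasure σ] [IsFiniteMeasure m]
    (hμσ : μ ≪ σ) (hσm : σ ≪ m) :
    klDiv μ σ = ∫⁻ x, σ.rnDeriv m x * ENNReal.ofReal (klFun (μ.rnDeriv σ x).toReal) ∂m := by
  have h_meas : Measurable fun x => ENNReal.ofReal (klFun (μ.rnDeriv σ x).toReal) := by fun_prop
  rw [klDiv_eq_lintegral_klFun_of_ac hμσ, lintegral_rnDeriv_mul hσm h_meas.aemeasurable]

lemma rnDeriv_add_rnDeriv_eq_two_mul_half (m μ ν : Measure X) [IsFiniteMeasure m]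
    [IsFiniteMeasure μ] [IsFiniteMeasure ν] :
    ∀ᵐ x ∂m, μ.rnDeriv m x + ν.rnDeriv m x =
      2 * ((2 : ℝ≥0∞)⁻¹ • (μ + ν)).rnDeriv m x := by
  filter_upwards [Measure.rnDeriv_smul_left_of_ne_top (μ + ν) m (r := (2 : ℝ≥0∞)⁻¹) (by simp),
    Measure.rnDeriv_add μ ν m] with x h_smul h_add
  rw [h_smul, Pi.smul_apply, h_add, smul_eq_mul, ← mul_assoc,
    ENNReal.mul_inv_cancel two_ne_zero ENNReal.ofNat_ne_top, one_mul, Pi.add_apply]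

lemma klDiv_add_klDiv_of_ac [IsFiniteMeasure m] [IsFiniteMeasure μ] [IsFiniteMeasure ν]
    (hμ : μ ≪ m) (hν : ν ≪ m) :
    klDiv μ m + klDiv ν m = 2 * klDiv ((2 : ℝ≥0∞)⁻¹ • (μ + ν)) m +
      (klDiv μ ((2 : ℝ≥0∞)⁻¹ • (μ + ν)) + klDiv ν ((2 : ℝ≥0∞)⁻¹ • (μ + ν))) := by
  have hμσ := absolutelyContinuous_half_add_left μ ν
  have hνσ := absolutelyContinuous_half_add_right μ ν
  have hσ : (2 : ℝ≥0∞)⁻¹ • (μ + ν) ≪ m := (hμ.add_left hν).smul_left _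
  have : IsFiniteMeasure ((2 : ℝ≥0∞)⁻¹ • (μ + ν)) := Measure.smul_finite _ (by simp)
  have h_deriv := rnDeriv_add_rnDeriv_eq_two_mul_half m μ ν
  set σ := (2 : ℝ≥0∞)⁻¹ • (μ + ν)
  rw [klDiv_eq_lintegral_klFun_of_ac hμ, klDiv_eq_lintegral_klFun_of_ac hν,
    klDiv_eq_lintegral_klFun_of_ac hσ, klDiv_eq_lintegral_rnDeriv_mul hμσ hσ,
    klDiv_eq_lintegral_rnDeriv_mul hνσ hσ, ← lintegral_add_left (by fun_prop),
    ← lintegral_const_mul _ (by fun_prop), ← lintegral_add_left (by fun_prop),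
    ← lintegral_add_left (by fun_prop)]
  refine lintegral_congr_ae ?_
  filter_upwards [h_deriv, Measure.rnDeriv_mul_rnDeriv (κ := m) hμσ,
    Measure.rnDeriv_mul_rnDeriv (κ := m) hνσ, σ.rnDeriv_ne_top m] with x h h_chain_μ h_chain_ν h_top
  rw [← h_chain_μ, ← h_chain_ν] at h ⊢
  exact ofReal_klFun_mul_add_ofReal_klFun_mul h_top h

lemma klDiv_add_klDiv (m μ ν : Measure X) [IsFiniteMeasure m] [IsFiniteMeasure μ]
    [IsFiniteMeasure ν] :
    klDiv μ m + klDiv ν m = 2 * klDiv ((2 : ℝ≥0∞)⁻¹ • (μ + ν)) m +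
      (klDiv μ ((2 : ℝ≥0∞)⁻¹ • (μ + ν)) + klDiv ν ((2 : ℝ≥0∞)⁻¹ • (μ + ν))) := by
  by_cases hσ : (2 : ℝ≥0∞)⁻¹ • (μ + ν) ≪ m
  · exact klDiv_add_klDiv_of_ac ((absolutelyContinuous_half_add_left μ ν).trans hσ)
      ((absolutelyContinuous_half_add_right μ ν).trans hσ)
  · have h_not : ¬(μ ≪ m ∧ ν ≪ m) := fun h => hσ ((h.1.add_left h.2).smul_left _)
    have h_left : klDiv μ m + klDiv ν m = ⊤ :=
      (not_and_or.1 h_not).elim (fun h => by rw [klDiv_of_not_ac h, top_add])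
        fun h => by rw [klDiv_of_not_ac h, add_top]
    rw [h_left, klDiv_of_not_ac hσ, ENNReal.mul_top two_ne_zero, top_add]

section DonskerVaradhan

lemma mul_sub_exp_sub_one_le_klFun {f : ℝ} (hf : 0 ≤ f) (φ : ℝ) :
    f * φ - (Real.exp φ - 1) ≤ klFun f := by
  rw [klFun_apply]
  rcases hf.eq_or_lt with rfl | hf
  · simpa using (Real.exp_pos φ).le
  have h := Real.add_one_le_exp (φ - Real.log f)
  rw [Real.exp_sub, Real.exp_log hf, le_div_iff₀ hf] at h
  linarith

lemma ofReal_integral_sub_integral_exp_sub_one_le_klDiv [IsFiniteMeasure m] [IsFiniteMeasure ρ]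
    {φ : X → ℝ} (hφ : Integrable φ ρ) (h_exp : Integrable (fun x => Real.exp (φ x)) m) :
    ENNReal.ofReal (∫ x, φ x ∂ρ - ∫ x, (Real.exp (φ x) - 1) ∂m) ≤ klDiv ρ m := by
  rcases eq_or_ne (klDiv ρ m) ⊤ with h | h
  · simp [h]
  obtain ⟨h_ac, h_llr⟩ := klDiv_ne_top_iff.1 h
  refine ENNReal.ofReal_le_of_le_toReal ?_
  have hφm := (integrable_rnDeriv_smul_iff h_ac).2 hφ
  have h_exp_sub : Integrable (fun x => Real.exp (φ x) - 1) m := h_exp.sub (integrable_const 1)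
  rw [toReal_klDiv_eq_integral_klFun h_ac, ← integral_rnDeriv_smul h_ac,
    ← integral_sub hφm h_exp_sub]
  exact integral_mono (hφm.sub h_exp_sub) ((integrable_klFun_rnDeriv_iff h_ac).2 h_llr)
    fun x => mul_sub_exp_sub_one_le_klFun ENNReal.toReal_nonneg _

/-- The clipping of `z` to the interval `[exp (-k), exp k]`. Its logarithm is a bounded
approximation of `log z`, also at `z = 0`. -/
noncomputable def expClip (k : ℕ) (z : ℝ) : ℝ := max (Real.exp (-k)) (min (Real.exp k) z)

lemma expClip_pos (k : ℕ) (z : ℝ) : 0 < expClip k z := lt_max_of_lt_left (Real.exp_pos _)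

lemma measurable_expClip (k : ℕ) : Measurable (expClip k) := by
  unfold expClip; fun_prop

lemma expClip_le_exp (k : ℕ) (z : ℝ) : expClip k z ≤ Real.exp k :=
  max_le (Real.exp_le_exp.2 (neg_le_self k.cast_nonneg)) (min_le_left _ _)

lemma abs_log_expClip_le (k : ℕ) (z : ℝ) : |Real.log (expClip k z)| ≤ k := by
  rw [abs_le, Real.le_log_iff_exp_le (expClip_pos k z), Real.log_le_iff_le_exp (expClip_pos k z)]
  exact ⟨le_max_left _ _, expClip_le_exp k z⟩

lemma sub_expClip_mul_log_nonneg (k : ℕ) (z : ℝ) :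
    0 ≤ (z - expClip k z) * Real.log (expClip k z) := by
  have h_le : Real.exp (-k) ≤ Real.exp k := Real.exp_le_exp.2 (neg_le_self k.cast_nonneg)
  rcases le_total z (Real.exp k) with h_upper | h_upper
  · rcases le_total z (Real.exp (-k)) with h_lower | h_lower
    · rw [expClip, min_eq_right h_upper, max_eq_left h_lower, Real.log_exp]
      exact mul_nonneg_of_nonpos_of_nonpos (by linarith) (by simp)
    · simp [expClip, min_eq_right h_upper, max_eq_right h_lower]
  · rw [expClip, min_eq_left h_upper, max_eq_right h_le, Real.log_exp]
    exact mul_nonneg (by linarith) (by simp)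

lemma mul_log_expClip_sub_nonneg (k : ℕ) (z : ℝ) :
    0 ≤ z * Real.log (expClip k z) - (expClip k z - 1) := by
  have h_kl := klFun_nonneg (expClip_pos k z).le
  rw [klFun_apply] at h_kl
  linarith [sub_expClip_mul_log_nonneg k z]

lemma tendsto_mul_log_expClip_sub {z : ℝ} (hz : 0 ≤ z) :
    Tendsto (fun k : ℕ => z * Real.log (expClip k z) - (expClip k z - 1)) atTop
      (𝓝 (klFun z)) := by
  have h_lower : Tendsto (fun k : ℕ => Real.exp (-(k : ℝ))) atTop (𝓝 0) :=
    Real.tendsto_exp_neg_atTop_nhds_zero.comp tendsto_natCast_atTop_atTop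
  have h_upper : Tendsto (fun k : ℕ => Real.exp (k : ℝ)) atTop atTop :=
    Real.tendsto_exp_atTop.comp tendsto_natCast_atTop_atTop
  rcases hz.eq_or_lt with rfl | hz
  · have h_eq (k : ℕ) : expClip k 0 = Real.exp (-(k : ℝ)) := by
      rw [expClip, min_eq_right (Real.exp_pos _).le, max_eq_left (Real.exp_pos _).le]
    simp only [zero_mul, zero_sub, neg_sub, h_eq, klFun_zero]
    simpa using h_lower.const_sub 1
  · refine tendsto_const_nhds.congr' ?_
    filter_upwards [h_lower.eventually_lt_const hz, h_upper.eventually_ge_atTop z]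
      with k hk_lower hk_upper
    rw [expClip, min_eq_right hk_upper, max_eq_right hk_lower.le, klFun_apply]
    ring

lemma exists_lt_lintegral_mul_log_expClip_sub [IsFiniteMeasure m] [IsFiniteMeasure ρ]
    (h_ac : ρ ≪ m) {c : ℝ≥0∞} (hc : c < klDiv ρ m) :
    ∃ k : ℕ, c < ∫⁻ x, ENNReal.ofReal ((ρ.rnDeriv m x).toReal *
      Real.log (expClip k (ρ.rnDeriv m x).toReal) -
        (expClip k (ρ.rnDeriv m x).toReal - 1)) ∂m := by
  have h_meas (k : ℕ) := measurable_expClip k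
  have h_fatou := lintegral_liminf_le (μ := m) (u := atTop)
    (f := fun (k : ℕ) x => ENNReal.ofReal ((ρ.rnDeriv m x).toReal *
      Real.log (expClip k (ρ.rnDeriv m x).toReal) - (expClip k (ρ.rnDeriv m x).toReal - 1)))
    fun k => by fun_prop
  have h_lim (x : X) := (ENNReal.tendsto_ofReal
    (tendsto_mul_log_expClip_sub (ENNReal.toReal_nonneg (a := ρ.rnDeriv m x)))).liminf_eq
  simp only [h_lim] at h_fatou
  rw [klDiv_eq_lintegral_klFun_of_ac h_ac] at hc
  exact (eventually_lt_of_lt_liminf (hc.trans_le h_fatou)).exists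

lemma exists_bounded_lt_integral_sub_of_ac [IsFiniteMeasure m] [IsFiniteMeasure ρ]
    (h_ac : ρ ≪ m) {c : ℝ} (hc : ENNReal.ofReal c < klDiv ρ m) :
    ∃ (φ : X → ℝ) (B : ℝ), Measurable φ ∧ (∀ x, |φ x| ≤ B) ∧
      c < ∫ x, φ x ∂ρ - ∫ x, (Real.exp (φ x) - 1) ∂m := by
  obtain ⟨k, hk⟩ := exists_lt_lintegral_mul_log_expClip_sub h_ac hc
  set f : X → ℝ := fun x => (ρ.rnDeriv m x).toReal
  have h_meas_clip : Measurable fun x => expClip k (f x) :=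
    (measurable_expClip k).comp (by fun_prop)
  have h_meas_log : Measurable fun x => Real.log (expClip k (f x)) := h_meas_clip.log
  have h_log : Integrable (fun x => Real.log (expClip k (f x))) ρ :=
    .of_bound h_meas_log.aestronglyMeasurable k (.of_forall fun x => abs_log_expClip_le k (f x))
  have h_mul_log : Integrable (fun x => f x * Real.log (expClip k (f x))) m :=
    (integrable_rnDeriv_smul_iff h_ac).2 h_log
  have h_clip : Integrable (fun x => expClip k (f x) - 1) m := by
    refine (Integrable.of_bound h_meas_clip.aestronglyMeasurable (Real.exp k) (.of_forall
      fun x => ?_)).sub (integrable_const 1)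
    rw [Real.norm_of_nonneg (expClip_pos k _).le]
    exact expClip_le_exp k (f x)
  refine ⟨fun x => Real.log (expClip k (f x)), k, h_meas_log, fun x => abs_log_expClip_le k _, ?_⟩
  have h_int : Integrable
      (fun x => f x * Real.log (expClip k (f x)) - (expClip k (f x) - 1)) m :=
    h_mul_log.sub h_clip
  rw [← ofReal_integral_eq_lintegral_ofReal h_int
      (.of_forall fun x => mul_log_expClip_sub_nonneg k (f x)), integral_sub h_mul_log h_clip,
    ENNReal.ofReal_lt_ofReal_iff'] at hk
  simp_rw [Real.exp_log (expClip_pos k _)]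
  rw [← integral_rnDeriv_smul h_ac]
  exact hk.1

lemma exists_bounded_lt_integral_sub_of_not_ac [IsFiniteMeasure ρ] (h_ac : ¬ρ ≪ m) (c : ℝ) :
    ∃ (φ : X → ℝ) (B : ℝ), Measurable φ ∧ (∀ x, |φ x| ≤ B) ∧
      c < ∫ x, φ x ∂ρ - ∫ x, (Real.exp (φ x) - 1) ∂m := by
  obtain ⟨s, hs, hms, hρs⟩ : ∃ s, MeasurableSet s ∧ m s = 0 ∧ ρ s ≠ 0 := by
    by_contra! h
    exact h_ac (Measure.AbsolutelyContinuous.mk h)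
  have h_pos : 0 < ρ.real s := ENNReal.toReal_pos hρs (measure_ne_top _ _)
  set B := (|c| + 1) / ρ.real s
  have hB : 0 ≤ B := by positivity
  refine ⟨s.indicator fun _ => B, B, measurable_const.indicator hs, fun x => ?_, ?_⟩
  · rw [abs_of_nonneg (indicator_nonneg (fun _ _ => hB) x)]
    exact indicator_le_self' (fun _ _ => hB) x
  · have h_zero : ∫ x, (Real.exp (s.indicator (fun _ => B) x) - 1) ∂m = 0 := by
      refine integral_eq_zero_of_ae ?_
      filter_upwards [measure_eq_zero_iff_ae_notMem.1 hms] with x hx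
      simp [hx]
    rw [h_zero, integral_indicator_const _ hs, smul_eq_mul, mul_div_cancel₀ _ h_pos.ne']
    linarith [le_abs_self c]

lemma exists_bounded_lt_integral_sub [IsFiniteMeasure m] [IsFiniteMeasure ρ] {c : ℝ}
    (hc : ENNReal.ofReal c < klDiv ρ m) :
    ∃ (φ : X → ℝ) (B : ℝ), Measurable φ ∧ (∀ x, |φ x| ≤ B) ∧
      c < ∫ x, φ x ∂ρ - ∫ x, (Real.exp (φ x) - 1) ∂m := by
  by_cases h_ac : ρ ≪ m
  · exact exists_bounded_lt_integral_sub_of_ac h_ac hc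
  · exact exists_bounded_lt_integral_sub_of_not_ac h_ac c

end DonskerVaradhan

end RelativeEntropy

section LowerSemicontinuity

open InformationTheory

variable {X : Type*} [MeasurableSpace X] {m ρ : Measure X} {φ ψ : X → ℝ} {B c : ℝ}

lemma exp_sub_exp_le_mul_abs {a b B : ℝ} (hb : b ≤ B) :
    Real.exp b - Real.exp a ≤ Real.exp B * |a - b| := by
  have h_tangent := Real.add_one_le_exp (a - b)
  rw [Real.exp_sub, le_div_iff₀ (Real.exp_pos b)] at h_tangent
  calc Real.exp b - Real.exp a ≤ Real.exp b * (b - a) := by linarith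
    _ ≤ Real.exp b * |a - b| := by gcongr; exact abs_sub_comm a b ▸ le_abs_self _
    _ ≤ Real.exp B * |a - b| := by gcongr

lemma integrable_exp_of_abs_le [IsFiniteMeasure m] (hφ : Measurable φ) (h_bound : ∀ x, |φ x| ≤ B) :
    Integrable (fun x => Real.exp (φ x)) m := by
  refine .of_bound (by fun_prop) (Real.exp B) (.of_forall fun x => ?_)
  rw [Real.norm_of_nonneg (Real.exp_pos _).le]
  exact Real.exp_le_exp.2 (abs_le.1 (h_bound x)).2

lemma integral_sub_integral_exp_sub_one_le_add [IsFiniteMeasure m] [IsFiniteMeasure ρ]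
    (hφ : Measurable φ) (hψ : Measurable ψ) (hφB : ∀ x, |φ x| ≤ B) (hψB : ∀ x, |ψ x| ≤ B) :
    ∫ x, φ x ∂ρ - ∫ x, (Real.exp (φ x) - 1) ∂m ≤
      ∫ x, ψ x ∂ρ - ∫ x, (Real.exp (ψ x) - 1) ∂m +
        (1 + Real.exp B) * ∫ x, |φ x - ψ x| ∂(ρ + m) := by
  have h_int (α : Measure X) [IsFiniteMeasure α] : Integrable φ α ∧ Integrable ψ α :=
    ⟨.of_bound hφ.aestronglyMeasurable B (.of_forall hφB),
      .of_bound hψ.aestronglyMeasurable B (.of_forall hψB)⟩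
  have h_abs (α : Measure X) [IsFiniteMeasure α] : Integrable (fun x => |φ x - ψ x|) α :=
    ((h_int α).1.sub (h_int α).2).abs
  have h_linear : ∫ x, φ x ∂ρ - ∫ x, ψ x ∂ρ ≤ ∫ x, |φ x - ψ x| ∂ρ := by
    rw [← integral_sub (h_int ρ).1 (h_int ρ).2]
    exact (le_abs_self _).trans abs_integral_le_integral_abs
  have hφ_exp : Integrable (fun x => Real.exp (φ x) - 1) m :=
    (integrable_exp_of_abs_le hφ hφB).sub (integrable_const 1)
  have hψ_exp : Integrable (fun x => Real.exp (ψ x) - 1) m :=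
    (integrable_exp_of_abs_le hψ hψB).sub (integrable_const 1)
  have h_exp : ∫ x, (Real.exp (ψ x) - 1) ∂m - ∫ x, (Real.exp (φ x) - 1) ∂m ≤
      Real.exp B * ∫ x, |φ x - ψ x| ∂m := by
    rw [← integral_sub hψ_exp hφ_exp, ← integral_const_mul]
    refine integral_mono (hψ_exp.sub hφ_exp) ((h_abs m).const_mul _) fun x => ?_
    simpa using exp_sub_exp_le_mul_abs (a := φ x) (abs_le.1 (hψB x)).2
  have h_nonneg (α : Measure X) : 0 ≤ ∫ x, |φ x - ψ x| ∂α := integral_nonneg fun x => abs_nonneg _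
  rw [integral_add_measure (h_abs ρ) (h_abs m)]
  nlinarith [h_nonneg ρ, h_nonneg m, mul_nonneg (Real.exp_pos B).le (h_nonneg ρ)]

section Continuous

variable [TopologicalSpace X] [TopologicalSpace.PseudoMetrizableSpace X] [BorelSpace X]

lemma exists_continuous_integral_abs_sub_le [IsFiniteMeasure m] (hφ : Measurable φ)
    (hB : 0 ≤ B) (h_bound : ∀ x, |φ x| ≤ B) {ε : ℝ} (hε : 0 < ε) :
    ∃ ψ : X → ℝ, Continuous ψ ∧ (∀ x, |ψ x| ≤ B) ∧ ∫ x, |φ x - ψ x| ∂m ≤ ε := by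
  have hφ_int : Integrable φ m :=
    .of_bound hφ.aestronglyMeasurable B (.of_forall h_bound)
  obtain ⟨g, hg, hg_int⟩ := hφ_int.exists_boundedContinuous_integral_sub_le hε
  have h_clip (x : X) : |φ x - max (min (g x) B) (-B)| ≤ |φ x - g x| := by
    have h_eq : max (min (φ x) B) (-B) = φ x := by
      rw [min_eq_left (abs_le.1 (h_bound x)).2, max_eq_left (abs_le.1 (h_bound x)).1]
    calc |φ x - max (min (g x) B) (-B)|
        = |max (min (φ x) B) (-B) - max (min (g x) B) (-B)| := by rw [h_eq]
      _ ≤ |min (φ x) B - min (g x) B| := abs_max_sub_max_le_abs _ _ _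
      _ ≤ |φ x - g x| := by simpa using abs_min_sub_min_le_max (φ x) B (g x) B
  refine ⟨fun x => max (min (g x) B) (-B), by fun_prop, fun x => ?_, ?_⟩
  · exact abs_le.2 ⟨le_max_right _ _, max_le (min_le_right _ _) (neg_le_self hB)⟩
  · refine (integral_mono_of_nonneg (.of_forall fun x => abs_nonneg _) ?_
      (.of_forall h_clip)).trans hg
    exact (hφ_int.sub hg_int).abs

lemma exists_continuous_lt_integral_sub [IsFiniteMeasure m] [IsFiniteMeasure ρ]
    (hc : ENNReal.ofReal c < klDiv ρ m) :
    ∃ ψ : X → ℝ, Continuous ψ ∧ c < ∫ x, ψ x ∂ρ - ∫ x, (Real.exp (ψ x) - 1) ∂m := by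
  obtain ⟨φ, B, hφ, hφB, h_lt⟩ := exists_bounded_lt_integral_sub hc
  have hφB' (x : X) : |φ x| ≤ max B 0 := (hφB x).trans (le_max_left _ _)
  have h_pos : 0 < 1 + Real.exp (max B 0) := by positivity
  obtain ⟨ψ, hψ, hψB, h_dist⟩ := exists_continuous_integral_abs_sub_le (m := ρ + m) hφ
    (le_max_right B 0) hφB' (div_pos (half_pos (sub_pos.2 h_lt)) h_pos)
  refine ⟨ψ, hψ, ?_⟩
  have h_add := integral_sub_integral_exp_sub_one_le_add (m := m) (ρ := ρ) hφ hψ.measurable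
    hφB' hψB
  rw [le_div_iff₀' h_pos] at h_dist
  linarith

end Continuous

section Compact

variable [MetricSpace X] [CompactSpace X] [BorelSpace X]

lemma WassersteinSpace.continuous_integral (hφ : Continuous φ) :
    Continuous fun μ : WassersteinSpace X => ∫ x, φ x ∂μ.toMeasure :=
  (ProbabilityMeasure.continuous_integral_boundedContinuousFunction
    (BoundedContinuousFunction.mkOfCompact ⟨φ, hφ⟩)).comp continuous_toProbabilityMeasure

/-- The relative entropy with respect to `m` as a functional on the Wasserstein space, for which
the metric notions of slope, convexity and gradient flow make sense. -/
noncomputable def WassersteinSpace.entropy {X : Type*} [MeasurableSpace X] (m : Measure X)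
    (μ : WassersteinSpace X) : ℝ≥0∞ := Ent m μ.toMeasure

lemma WassersteinSpace.lowerSemicontinuous_entropy (m : Measure X) [IsFiniteMeasure m] :
    LowerSemicontinuous (entropy m) := by
  refine lowerSemicontinuous_iff.2 fun μ c hc => ?_
  lift c to ℝ≥0 using hc.ne_top
  simp only [entropy, Ent_eq_klDiv, ← ENNReal.ofReal_coe_nnreal] at hc ⊢
  obtain ⟨ψ, hψ, h_lt⟩ := exists_continuous_lt_integral_sub hc
  have h_cont := (continuous_integral hψ).sub
    (continuous_const (y := ∫ x, (Real.exp (ψ x) - 1) ∂m))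
  filter_upwards [h_cont.tendsto μ |>.eventually_const_lt h_lt] with ν hν
  exact ((ENNReal.ofReal_lt_ofReal_iff_of_nonneg c.2).2 hν).trans_le
    (ofReal_integral_sub_integral_exp_sub_one_le_klDiv (integrable_of_continuous _ hψ)
      (integrable_of_continuous _ (by fun_prop)))

end Compact

end LowerSemicontinuity

section Convexity

open InformationTheory ProbabilityTheory

variable {X : Type*} [MeasurableSpace X]

lemma half_add_mul_le_sqrt_mul_sqrt {s t x y c : ℝ} (hc : x ^ 2 + y ^ 2 ≤ 2 * c) :
    (s * x + t * y) / 2 ≤ √((s ^ 2 + t ^ 2) / 2) * √c := by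
  rw [← Real.sqrt_mul (by positivity)]
  refine Real.le_sqrt_of_sq_le ?_
  have h_cauchy : (s * x + t * y) ^ 2 ≤ (s ^ 2 + t ^ 2) * (x ^ 2 + y ^ 2) := by
    nlinarith [sq_nonneg (s * y - t * x)]
  have h_bound := mul_le_mul_of_nonneg_left hc (by positivity : 0 ≤ s ^ 2 + t ^ 2)
  nlinarith

lemma isCoupling_compProd (μ : Measure X) [IsProbabilityMeasure μ] (κ : Kernel X X)
    [IsMarkovKernel κ] : IsCoupling μ (κ ∘ₘ μ) (μ ⊗ₘ κ) :=
  ⟨inferInstance, Measure.fst_compProd μ κ, Measure.snd_compProd μ κ⟩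

lemma IsCoupling.exists_eq_compProd [StandardBorelSpace X] {μ ν : Measure X}
    {γ : Measure (X × X)} (hγ : IsCoupling μ ν γ) :
    ∃ κ : Kernel X X, IsMarkovKernel κ ∧ μ ⊗ₘ κ = γ := by
  obtain ⟨_, h_fst, -⟩ := hγ
  have : Nonempty X := (nonempty_of_isProbabilityMeasure γ).map Prod.fst
  exact ⟨γ.condKernel, inferInstance, h_fst ▸ γ.disintegrate γ.condKernel⟩

namespace WassersteinSpace

/-- The midpoint of two probability measures for the linear structure of the space of measures,
as opposed to a midpoint of a Wasserstein geodesic. -/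
noncomputable def avg (μ ν : WassersteinSpace X) : WassersteinSpace X :=
  ⟨(2 : ℝ≥0∞)⁻¹ • (μ.toMeasure + ν.toMeasure), isProbabilityMeasure_half_add _ _⟩

lemma toMeasure_avg (μ ν : WassersteinSpace X) :
    (avg μ ν).toMeasure = (2 : ℝ≥0∞)⁻¹ • (μ.toMeasure + ν.toMeasure) := rfl

lemma avg_self (μ : WassersteinSpace X) : avg μ μ = μ := by
  ext1
  rw [toMeasure_avg, ← two_smul ℝ≥0∞, smul_smul, ENNReal.inv_mul_cancel (by simp) (by simp),
    one_smul]

/-- Twice the Jensen–Shannon divergence: by the parallelogram identity for the relative entropy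
this is the convexity defect of every `entropy m` along `avg`, whatever `m` is. -/
noncomputable def jensenShannon (μ ν : WassersteinSpace X) : ℝ≥0∞ :=
  klDiv μ.toMeasure (avg μ ν).toMeasure + klDiv ν.toMeasure (avg μ ν).toMeasure

lemma jensenShannon_ne_zero {μ ν : WassersteinSpace X} (h_ne : μ ≠ ν) : jensenShannon μ ν ≠ 0 := by
  rw [jensenShannon, ne_eq, add_eq_zero, klDiv_eq_zero_iff, klDiv_eq_zero_iff]
  rintro ⟨hμ, hν⟩
  exact h_ne (WassersteinSpace.ext (hμ.trans hν.symm))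

/-- The image of a probability measure under a Markov kernel. -/
noncomputable def push (κ : Kernel X X) [IsMarkovKernel κ] (μ : WassersteinSpace X) :
    WassersteinSpace X :=
  ⟨κ ∘ₘ μ.toMeasure, inferInstance⟩

section Push

variable (κ : Kernel X X) [IsMarkovKernel κ]

lemma avg_push (μ ν : WassersteinSpace X) : avg (push κ μ) (push κ ν) = push κ (avg μ ν) := by
  ext1
  simp only [push, toMeasure_avg, Measure.comp_smul, Measure.comp_add]

lemma jensenShannon_push_le (μ ν : WassersteinSpace X) :
    jensenShannon (push κ μ) (push κ ν) ≤ jensenShannon μ ν := by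
  rw [jensenShannon, avg_push]
  exact add_le_add (klDiv_comp_right_le _ _ κ) (klDiv_comp_right_le _ _ κ)

end Push

section Entropy

variable {m : Measure X} [IsFiniteMeasure m] {a b : WassersteinSpace X}

lemma entropy_add_entropy (m : Measure X) [IsFiniteMeasure m] (a b : WassersteinSpace X) :
    entropy m a + entropy m b = 2 * entropy m (avg a b) + jensenShannon a b := by
  simp only [entropy, Ent_eq_klDiv]
  exact klDiv_add_klDiv m a.toMeasure b.toMeasure

lemma entropy_avg_lt_top (ha : entropy m a < ⊤) (hb : entropy m b < ⊤) :
    entropy m (avg a b) < ⊤ := by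
  have h_top := entropy_add_entropy m a b ▸ ENNReal.add_lt_top.2 ⟨ha, hb⟩
  exact ENNReal.lt_top_of_mul_ne_top_right (ENNReal.add_lt_top.1 h_top).1.ne two_ne_zero

lemma jensenShannon_lt_top (ha : entropy m a < ⊤) (hb : entropy m b < ⊤) :
    jensenShannon a b < ⊤ :=
  (ENNReal.add_lt_top.1 (entropy_add_entropy m a b ▸ ENNReal.add_lt_top.2 ⟨ha, hb⟩)).2

lemma toReal_entropy_add_toReal_entropy (ha : entropy m a < ⊤) (hb : entropy m b < ⊤) :
    (entropy m a).toReal + (entropy m b).toReal =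
      2 * (entropy m (avg a b)).toReal + (jensenShannon a b).toReal := by
  rw [← ENNReal.toReal_add ha.ne hb.ne, entropy_add_entropy, ENNReal.toReal_add
    (ENNReal.mul_lt_top (by simp) (entropy_avg_lt_top ha hb)).ne (jensenShannon_lt_top ha hb).ne,
    ENNReal.toReal_mul, ENNReal.toReal_ofNat]

lemma toReal_entropy_avg_lt (ha : entropy m a < ⊤) (hb : entropy m b < ⊤) (hab : a ≠ b) :
    (entropy m (avg a b)).toReal < ((entropy m a).toReal + (entropy m b).toReal) / 2 := by
  have h_defect := toReal_entropy_add_toReal_entropy ha hb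
  linarith [ENNReal.toReal_pos (jensenShannon_ne_zero hab) (jensenShannon_lt_top ha hb).ne]

lemma entropy_push_lt_top (κ : Kernel X X) [IsMarkovKernel κ] (ha : entropy m a < ⊤)
    (hb : entropy m b < ⊤) (h_avg : entropy m (push κ (avg a b)) < ⊤) :
    entropy m (push κ a) < ⊤ ∧ entropy m (push κ b) < ⊤ := by
  rw [← ENNReal.add_lt_top, entropy_add_entropy, avg_push]
  exact ENNReal.add_lt_top.2 ⟨ENNReal.mul_lt_top (by simp) h_avg,
    (jensenShannon_push_le κ a b).trans_lt (jensenShannon_lt_top ha hb)⟩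

lemma two_mul_toReal_entropy_avg_sub_le (κ : Kernel X X) [IsMarkovKernel κ] (ha : entropy m a < ⊤)
    (hb : entropy m b < ⊤) (h_avg : entropy m (push κ (avg a b)) < ⊤) :
    2 * ((entropy m (avg a b)).toReal - (entropy m (push κ (avg a b))).toReal) ≤
      ((entropy m a).toReal - (entropy m (push κ a)).toReal) +
        ((entropy m b).toReal - (entropy m (push κ b)).toReal) := by
  obtain ⟨ha', hb'⟩ := entropy_push_lt_top κ ha hb h_avg
  have h_defect := toReal_entropy_add_toReal_entropy ha hb
  have h_defect_push := toReal_entropy_add_toReal_entropy ha' hb'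
  have h_le := ENNReal.toReal_mono (jensenShannon_lt_top ha hb).ne (jensenShannon_push_le κ a b)
  rw [avg_push] at h_defect_push
  linarith

end Entropy

section Metric

variable [MetricSpace X] [CompactSpace X] [BorelSpace X]

lemma dist_avg_sq_le (a b a' b' : WassersteinSpace X) :
    dist (avg a b) (avg a' b') ^ 2 ≤ (dist a a' ^ 2 + dist b b' ^ 2) / 2 :=
  W2_half_add_sq_le a.toMeasure b.toMeasure a'.toMeasure b'.toMeasure

lemma dist_push_sq_add_dist_push_sq_le (κ : Kernel X X) [IsMarkovKernel κ]
    (a b : WassersteinSpace X) :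
    dist a (push κ a) ^ 2 + dist b (push κ b) ^ 2 ≤
      2 * ∫ p, dist p.1 p.2 ^ 2 ∂((avg a b).toMeasure ⊗ₘ κ) := by
  have ha := (isCoupling_compProd a.toMeasure κ).W2_sq_le
  have hb := (isCoupling_compProd b.toMeasure κ).W2_sq_le
  rw [toMeasure_avg, Measure.compProd_smul_left, Measure.compProd_add_left, integral_smul_measure,
    integral_add_measure (integrable_dist_sq _) (integrable_dist_sq _), ENNReal.toReal_inv,
    ENNReal.toReal_ofNat, smul_eq_mul, mul_inv_cancel_left₀ two_ne_zero]
  exact add_le_add ha hb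

lemma exists_push_eq {μ ν : WassersteinSpace X} {c : ℝ} (hc : dist μ ν ^ 2 < c) :
    ∃ (κ : Kernel X X) (_ : IsMarkovKernel κ), push κ μ = ν ∧
      ∫ p, dist p.1 p.2 ^ 2 ∂(μ.toMeasure ⊗ₘ κ) < c := by
  obtain ⟨γ, hγ, h_cost⟩ := exists_isCoupling_cost_lt (μ := μ.toMeasure) (ν := ν.toMeasure) hc
  obtain ⟨κ, _, rfl⟩ := hγ.exists_eq_compProd
  exact ⟨κ, inferInstance,
    WassersteinSpace.ext ((Measure.snd_compProd μ.toMeasure κ).symm.trans hγ.2.2), h_cost⟩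

variable {m : Measure X} [IsFiniteMeasure m] {K : ℝ} {a b z : WassersteinSpace X}

/-- Any transport of `avg a b` to `z` also transports `a` and `b`, and the entropies of these two
drop together at least twice as much as that of the average, because `jensenShannon` decreases. -/
lemma toReal_entropy_avg_sub_le_of_dist_sq_lt (hE : IsGeodesicallyConvex (entropy m) K)
    (ha : entropy m a < ⊤) (hb : entropy m b < ⊤) (hz : entropy m z < ⊤)
    (h_slope_a : descSlope (entropy m) a ≠ ⊤) (h_slope_b : descSlope (entropy m) b ≠ ⊤)
    {c : ℝ} (hc : dist (avg a b) z ^ 2 < c) :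
    (entropy m (avg a b)).toReal - (entropy m z).toReal ≤
      √(((descSlope (entropy m) a).toReal ^ 2 + (descSlope (entropy m) b).toReal ^ 2) / 2) * √c
        + |K| / 2 * c := by
  obtain ⟨κ, _, rfl, h_cost⟩ := exists_push_eq hc
  obtain ⟨ha', hb'⟩ := entropy_push_lt_top κ ha hb hz
  have h_dist : dist a (push κ a) ^ 2 + dist b (push κ b) ^ 2 ≤ 2 * c :=
    (dist_push_sq_add_dist_push_sq_le κ a b).trans (by linarith)
  have h_drop := two_mul_toReal_entropy_avg_sub_le κ ha hb hz
  have h_drop_a := hE.toReal_sub_le_descSlope_mul ha ha' h_slope_a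
  have h_drop_b := hE.toReal_sub_le_descSlope_mul hb hb' h_slope_b
  have h_cauchy := half_add_mul_le_sqrt_mul_sqrt (s := (descSlope (entropy m) a).toReal)
    (t := (descSlope (entropy m) b).toReal) h_dist
  have h_quad := mul_le_mul_of_nonneg_left h_dist (abs_nonneg K)
  linarith

lemma toReal_entropy_avg_sub_le (hE : IsGeodesicallyConvex (entropy m) K)
    (ha : entropy m a < ⊤) (hb : entropy m b < ⊤) (hz : entropy m z < ⊤)
    (h_slope_a : descSlope (entropy m) a ≠ ⊤) (h_slope_b : descSlope (entropy m) b ≠ ⊤) :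
    (entropy m (avg a b)).toReal - (entropy m z).toReal ≤
      √(((descSlope (entropy m) a).toReal ^ 2 + (descSlope (entropy m) b).toReal ^ 2) / 2) *
        dist (avg a b) z + |K| / 2 * dist (avg a b) z ^ 2 := by
  set σ := √(((descSlope (entropy m) a).toReal ^ 2 + (descSlope (entropy m) b).toReal ^ 2) / 2)
  have h_lim : Tendsto (fun c => σ * √c + |K| / 2 * c) (𝓝[>] (dist (avg a b) z ^ 2))
      (𝓝 (σ * √(dist (avg a b) z ^ 2) + |K| / 2 * dist (avg a b) z ^ 2)) :=
    Continuous.continuousWithinAt (by fun_prop)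
  rw [Real.sqrt_sq dist_nonneg] at h_lim
  exact ge_of_tendsto h_lim (eventually_nhdsWithin_of_forall fun c hc =>
    toReal_entropy_avg_sub_le_of_dist_sq_lt hE ha hb hz h_slope_a h_slope_b hc)

lemma isStrictlyConvexAverage_avg (hE : IsGeodesicallyConvex (entropy m) K) :
    IsStrictlyConvexAverage (entropy m) K avg where
  map_self := avg_self
  dist_sq_le := dist_avg_sq_le
  lt_top _ _ := entropy_avg_lt_top
  toReal_lt _ _ := toReal_entropy_avg_lt
  toReal_sub_le _ _ _ := toReal_entropy_avg_sub_le hE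

end Metric

end WassersteinSpace

end Convexity

section Flow

lemma hasBasis_W2nbhd {X : Type*} [MetricSpace X] [MeasurableSpace X] (μ : Measure X) :
    (W2nbhd μ).HasBasis (fun ε : ℝ => 0 < ε)
      fun ε => {ν | IsProbabilityMeasure ν ∧ 0 < W2 μ ν ∧ W2 μ ν < ε} :=
  hasBasis_biInf_principal (fun ε hε δ hδ => ⟨min ε δ, mem_Ioi.2 (lt_min hε hδ),
    fun _ hν => ⟨hν.1, hν.2.1, hν.2.2.trans_le (min_le_left _ _)⟩,
    fun _ hν => ⟨hν.1, hν.2.1, hν.2.2.trans_le (min_le_right _ _)⟩⟩) ⟨1, mem_Ioi.2 one_pos⟩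

variable {X : Type*} [MetricSpace X] [CompactSpace X] [MeasurableSpace X] [BorelSpace X]
  {m : Measure X}

open WassersteinSpace

lemma IsCDKinf.isGeodesicallyConvex {K : ℝ} (hcd : IsCDKinf m K) :
    IsGeodesicallyConvex (entropy m) K := by
  intro x z hx hz
  obtain ⟨μ, h_prob, h_zero, h_one, h_dist, h_ent⟩ :=
    hcd x.toMeasure z.toMeasure inferInstance inferInstance hx hz
  classical
  let γ : ℝ → WassersteinSpace X := fun t =>
    if ht : t ∈ Icc (0 : ℝ) 1 then ⟨μ t, h_prob t ht⟩ else x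
  have hγ (t : ℝ) (ht : t ∈ Icc (0 : ℝ) 1) : (γ t).toMeasure = μ t := by simp only [γ, dif_pos ht]
  refine ⟨γ, ⟨?_, ?_, fun s hs t ht => ?_⟩, fun t ht => ?_⟩
  · exact WassersteinSpace.ext (by rw [hγ 0 (by simp), h_zero])
  · exact WassersteinSpace.ext (by rw [hγ 1 (by simp), h_one])
  · rw [WassersteinSpace.dist_eq, hγ s hs, hγ t ht]
    exact h_dist s hs t ht
  · rw [entropy, hγ t ht]
    exact h_ent t ht

lemma W2nbhd_eq_map (μ : WassersteinSpace X) :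
    W2nbhd μ.toMeasure = map toMeasure (𝓝[≠] μ) := by
  have h_basis := (nhdsWithin_hasBasis (Metric.nhds_basis_ball (x := μ)) {μ}ᶜ).map toMeasure
  refine (hasBasis_W2nbhd μ.toMeasure).ext h_basis (fun ε hε => ⟨ε, hε, ?_⟩) fun ε hε => ⟨ε, hε, ?_⟩
  · rintro _ ⟨ν, ⟨h_ball, h_ne⟩, rfl⟩
    exact ⟨ν.isProbabilityMeasure, dist_pos.2 (Ne.symm h_ne), Metric.mem_ball'.1 h_ball⟩
  · rintro ν ⟨h_prob, h_pos, h_lt⟩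
    have h_ne : μ ≠ ⟨ν, h_prob⟩ := dist_pos.1 h_pos
    exact ⟨⟨ν, h_prob⟩, ⟨Metric.mem_ball'.2 h_lt, h_ne.symm⟩, rfl⟩

lemma entSlope_eq_descSlope (m : Measure X) (μ : WassersteinSpace X) :
    entSlope m μ.toMeasure = descSlope (entropy m) μ := by
  rw [entSlope, W2nbhd_eq_map]
  rfl

lemma IsEDEFlow.isEntGradientFlow {y : ℝ → WassersteinSpace X} (hy : IsEDEFlow (entropy m) y) :
    IsEntGradientFlow m (fun t => (y t).toMeasure) (y 0).toMeasure := by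
  refine ⟨fun t _ => inferInstance, rfl, fun t _ => hy.lt_top t, fun t _ ε hε => ?_,
    hy.exists_integrable, fun t s ht hts => ?_⟩
  · obtain ⟨δ, hδ, h_near⟩ := Metric.continuous_iff.1 hy.continuous t ε hε
    exact ⟨δ, hδ, fun s _ hs => h_near s hs⟩
  · simp_rw [entSlope_eq_descSlope]
    exact hy.energy_eq t s ht hts

section Lift

variable {ν : ℝ → Measure X} {y : ℝ → WassersteinSpace X} {t s : ℝ}

lemma metricSpeed_eq_W2speed (hy : ∀ t, 0 ≤ t → (y t).toMeasure = ν t) (ht : 0 < t) :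
    metricSpeed y t = W2speed ν t := by
  refine limsup_congr ?_
  filter_upwards [nhdsWithin_le_nhds (lt_mem_nhds (neg_lt_zero.2 ht))] with h hh
  rw [WassersteinSpace.dist_eq, hy t ht.le, hy (t + h) (by linarith)]

lemma curveAction_eq_lintegral_W2speed (hy : ∀ t, 0 ≤ t → (y t).toMeasure = ν t) (ht : 0 ≤ t) :
    curveAction y t s = ∫⁻ r in Ioc t s, ENNReal.ofReal (W2speed ν r ^ 2) :=
  setLIntegral_congr_fun measurableSet_Ioc fun r hr => by
    simp only [metricSpeed_eq_W2speed hy (ht.trans_lt hr.1)]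

lemma slopeAction_eq_lintegral_entSlope (hy : ∀ t, 0 ≤ t → (y t).toMeasure = ν t) (ht : 0 ≤ t) :
    slopeAction (entropy m) y t s = ∫⁻ r in Ioc t s, entSlope m (ν r) ^ 2 :=
  setLIntegral_congr_fun measurableSet_Ioc fun r hr => by
    simp only [← entSlope_eq_descSlope, hy r (ht.trans hr.1.le)]

lemma IsEntGradientFlow.exists_isEDEFlow {μ : Measure X} (hν : IsEntGradientFlow m ν μ) :
    ∃ y, IsEDEFlow (entropy m) y ∧ ∀ t, 0 ≤ t → (y t).toMeasure = ν t := by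
  obtain ⟨h_prob, -, h_lt_top, h_cont, h_ac, h_energy⟩ := hν
  let y : ℝ → WassersteinSpace X := fun t => ⟨ν (max t 0), h_prob _ (le_max_right _ _)⟩
  have hy (t : ℝ) (ht : 0 ≤ t) : (y t).toMeasure = ν t := by simp [y, ht]
  have h_continuous : Continuous y := by
    refine Metric.continuous_iff.2 fun t ε hε => ?_
    obtain ⟨δ, hδ, h_near⟩ := h_cont (max t 0) (le_max_right _ _) ε hε
    exact ⟨δ, hδ, fun s hs => h_near _ (le_max_right _ _)
      ((abs_max_sub_max_le_abs s t 0).trans_lt hs)⟩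
  refine ⟨y, ⟨⟨h_continuous, fun a b ha hab => ?_⟩, fun t => h_lt_top _ (le_max_right _ _),
    fun t ht => WassersteinSpace.ext (by simp [y, ht]), fun t s ht hts => ?_⟩, hy⟩
  · obtain ⟨g, hg, hg_int, hg_le⟩ := h_ac a b ha hab
    refine ⟨g, hg, hg_int, fun t s hat hts hsb => ?_⟩
    rw [WassersteinSpace.dist_eq, hy t (by linarith), hy s (by linarith)]
    exact hg_le t s hat hts hsb
  · rw [entropy, entropy, hy t ht, hy s (ht.trans hts), curveAction_eq_lintegral_W2speed hy ht,
      slopeAction_eq_lintegral_entSlope hy ht]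
    exact h_energy t s ht hts

end Lift

end Flow

theorem stmt19_general {X : Type*} [MetricSpace X] [CompactSpace X]
    [MeasurableSpace X] [BorelSpace X] (m : Measure X) [IsFiniteMeasure m]
    (K : ℝ) (hcd : IsCDKinf m K)
    (μ : Measure X) [IsProbabilityMeasure μ] (hμ : Ent m μ < ⊤) :
    ∃ ν : ℝ → Measure X, IsEntGradientFlow m ν μ ∧
      ∀ ν' : ℝ → Measure X, IsEntGradientFlow m ν' μ → ∀ t : ℝ, 0 ≤ t → ν' t = ν t := by
  have hE := hcd.isGeodesicallyConvex
  have hlsc := WassersteinSpace.lowerSemicontinuous_entropy m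
  obtain ⟨y, hy, h_start⟩ := hE.exists_isEDEFlow hlsc (y₀ := ⟨μ, inferInstance⟩) hμ
  refine ⟨fun t => (y t).toMeasure, ?_, fun ν' hν' t ht => ?_⟩
  · simpa only [h_start] using hy.isEntGradientFlow
  · obtain ⟨u, hu, huν'⟩ := hν'.exists_isEDEFlow
    have h_zero : u 0 = y 0 := by
      rw [h_start]
      exact WassersteinSpace.ext ((huν' 0 le_rfl).trans hν'.2.1)
    have h_avg := WassersteinSpace.isStrictlyConvexAverage_avg hE
    rw [← huν' t ht, hu.eq_of_zero_eq hE hlsc h_avg hy h_zero ht]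

/-- **Existence and uniqueness of the gradient flow of the entropy** (Theorem 5.7, after
Theorem 5.5): on a compact normalized `CD(K,∞)` space, every `μ ∈ D(Ent_m)` is the
starting point of a unique gradient flow (in the EDE sense) of `Ent_m` in `(P(X),W₂)`. -/
theorem stmt19 {X : Type*} [MetricSpace X] [CompactSpace X] [Nonempty X]
    [MeasurableSpace X] [BorelSpace X]
    (m : Measure X) [IsProbabilityMeasure m]
    (K : ℝ) (hcd : IsCDKinf m K)
    (μ : Measure X) [IsProbabilityMeasure μ] (hμ : Ent m μ < ⊤) :
    ∃ ν : ℝ → Measure X, IsEntGradientFlow m ν μ ∧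
      ∀ ν' : ℝ → Measure X, IsEntGradientFlow m ν' μ → ∀ t : ℝ, 0 ≤ t → ν' t = ν t :=
  stmt19_general m K hcd μ hμ
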